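/- Suppose a finite group G admits a Frobenius group of automorphisms FH with kernel F and complement H such that C_G(F) = 1. If C_G(H) is nilpotent, then G is nilpotent. -/

import Mathlib

/-- The subgroup of fixed points of a subgroup `S` of a group `A`
acting on `G` by automorphisms. -/
def autFixed {A G : Type*} [Group A] [Group G] [MulDistribMulAction A G]
    (S : Subgroup A) : Subgroup G where
  carrier := {g | ∀ a ∈ S, a • g = g}
  one_mem' := fun a _ => smul_one a
  mul_mem' := fun {x y} hx hy a ha => by rw [smul_mul', hx a ha, hy a ha]
  inv_mem' := fun {x} hx a ha => by rw [smul_inv', hx a ha]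

open Pointwise

section
theorem card_sup_mul_card_inf {G : Type*} [Group G] (H N : Subgroup G)
    (h : H ≤ Subgroup.normalizer (N : Set G)) :
    Nat.card (H ⊔ N : Subgroup G) * Nat.card (H ⊓ N : Subgroup G) = Nat.card H * Nat.card N := by
  let := Subgroup.normal_subgroupOf_of_le_normalizer h
  let := Subgroup.normal_subgroupOf_sup_of_le_normalizer h
  have e := Nat.card_congr (QuotientGroup.quotientInfEquivProdNormalizerQuotient H N h).toEquiv
  have h1 : N.relIndex H = N.relIndex (H ⊔ N) := e
  have h2 := Subgroup.relIndex_mul_relIndex ⊥ N (H ⊔ N) bot_le le_sup_right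
  have h3 := Subgroup.relIndex_mul_relIndex ⊥ (H ⊓ N) H bot_le inf_le_left
  rw [Subgroup.inf_relIndex_left, Subgroup.relIndex_bot_left, Subgroup.relIndex_bot_left] at h3
  rw [Subgroup.relIndex_bot_left, Subgroup.relIndex_bot_left, ← h1] at h2
  rw [← h2, ← h3]; ring

theorem mem_sup_norm {G : Type*} [Group G] {H N : Subgroup G}
    (h : H ≤ Subgroup.normalizer (N : Set G)) {x : G} :
    x ∈ H ⊔ N ↔ ∃ a ∈ H, ∃ b ∈ N, a * b = x := by
  rw [← SetLike.mem_coe, Subgroup.coe_mul_of_left_le_normalizer_right H N h, Set.mem_mul]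
  simp

theorem card_comap_surj {G K : Type*} [Group G] [Group K] [Finite G] (f : G →* K)
    (hf : Function.Surjective f) (N : Subgroup K) :
    Nat.card (N.comap f) = Nat.card N * Nat.card f.ker := by
  have := Finite.of_surjective f hf
  have h1 := (N.comap f).card_mul_index
  have h2 := N.card_mul_index
  have h3 := f.ker.card_mul_index
  rw [N.index_comap_of_surjective hf] at h1
  rw [Subgroup.index_ker, MonoidHom.range_eq_top.2 hf, Subgroup.card_top] at h3
  have h4 : 0 < N.index := Nat.pos_of_ne_zero Subgroup.index_ne_zero_of_finite
  apply Nat.eq_of_mul_eq_mul_right h4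
  rw [h1, ← h3, ← h2]; ring
/-- p-nilpotency -/
def PNil (p : ℕ) (G : Type*) [Group G] : Prop :=
  ∃ N : Subgroup G, N.Normal ∧ (Nat.card N).Coprime p ∧ ∀ g : G, ∃ k : ℕ, g ^ (p ^ k) ∈ N

namespace PNil
variable {p : ℕ} {G K : Type*} [Group G] [Group K]

theorem of_injective [Finite K] (f : G →* K) (hf : Function.Injective f) (h : PNil p K) : PNil p G := by
  obtain ⟨N, hN, hc, hp⟩ := h
  refine ⟨N.comap f, hN.comap f, ?_, fun g => ?_⟩
  · exact Nat.Coprime.coprime_dvd_left (Subgroup.card_comap_dvd_of_injective N f hf) hc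
  · obtain ⟨k, hk⟩ := hp (f g)
    exact ⟨k, by simpa using hk⟩

theorem of_surjective [Finite G] (f : G →* K) (hf : Function.Surjective f) (h : PNil p G) : PNil p K := by
  obtain ⟨N, hN, hc, hp⟩ := h
  refine ⟨N.map f, hN.map f hf, ?_, fun g => ?_⟩
  · exact Nat.Coprime.coprime_dvd_left (Subgroup.card_map_dvd N f) hc
  · obtain ⟨g, rfl⟩ := hf g
    obtain ⟨k, hk⟩ := hp g
    exact ⟨k, g ^ p ^ k, hk, by simp⟩

theorem of_isPGroup (h : IsPGroup p G) : PNil p G :=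
  ⟨⊥, inferInstance, by simp, fun g => by simpa using h g⟩

theorem of_coprime (h : (Nat.card G).Coprime p) : PNil p G :=
  ⟨⊤, inferInstance, by simpa using h, fun g => ⟨0, trivial⟩⟩

theorem of_le [Finite G] {M L : Subgroup G} (h : M ≤ L) (hL : PNil p L) : PNil p M :=
  of_injective (Subgroup.inclusion h) (Subgroup.inclusion_injective h) hL

theorem of_subgroup [Finite G] (M : Subgroup G) (h : PNil p G) : PNil p M :=
  of_injective M.subtype M.subtype_injective h

theorem of_quot [Finite G] (M : Subgroup G) [M.Normal] (hM : (Nat.card M).Coprime p) (h : PNil p (G ⧸ M)) :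
    PNil p G := by
  obtain ⟨N, hN, hc, hp⟩ := h
  refine ⟨N.comap (QuotientGroup.mk' M), hN.comap _, ?_, fun g => ?_⟩
  · rw [card_comap_surj _ (QuotientGroup.mk'_surjective M), QuotientGroup.ker_mk']
    exact Nat.Coprime.mul_left hc hM
  · obtain ⟨k, hk⟩ := hp g
    exact ⟨k, by simpa using hk⟩

theorem mem_iff [Finite G] {N : Subgroup G} (hc : (Nat.card N).Coprime p)
    (hN : ∀ g : G, ∃ k : ℕ, g ^ (p ^ k) ∈ N) (g : G) : g ∈ N ↔ (orderOf g).Coprime p := by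
  constructor
  · intro h
    exact Nat.Coprime.coprime_dvd_left (Subgroup.orderOf_dvd_natCard N h) hc
  · intro h
    obtain ⟨k, hk⟩ := hN g
    have : (orderOf g).Coprime (p^k) := Nat.Coprime.pow_right k h
    obtain ⟨m, hm⟩ := exists_pow_eq_self_of_coprime (this.symm)
    rw [← hm]
    exact N.pow_mem hk m

theorem of_normal [Finite G] (M : Subgroup G) [hMn : M.Normal] (hM : ∀ g : G, ∃ k : ℕ, g ^ (p ^ k) ∈ M)
    (h : PNil p M) : PNil p G := by
  obtain ⟨N, hN, hc, hNp⟩ := h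
  have key : ∀ g : G, g ∈ N.map M.subtype ↔ g ∈ M ∧ (orderOf g).Coprime p := by
    intro g
    constructor
    · rintro ⟨x, hx, rfl⟩
      refine ⟨x.2, ?_⟩
      have := (mem_iff hc hNp x).1 hx
      simpa using this
    · rintro ⟨hg, ho⟩
      refine ⟨⟨g, hg⟩, (mem_iff hc hNp _).2 ?_, rfl⟩
      simpa using ho
  refine ⟨N.map M.subtype, ⟨fun n hn g => ?_⟩, ?_, fun g => ?_⟩
  · rw [key] at hn ⊢
    refine ⟨hMn.conj_mem n hn.1 g, ?_⟩
    have : orderOf (g * n * g⁻¹) = orderOf n := by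
      have := orderOf_injective (MulAut.conj g).toMonoidHom (MulAut.conj g).injective n
      simpa using this
    rw [this]; exact hn.2
  · rw [Subgroup.card_map_of_injective M.subtype_injective]; exact hc
  · obtain ⟨k, hk⟩ := hM g
    obtain ⟨l, hl⟩ := hNp ⟨_, hk⟩
    refine ⟨k + l, _, hl, ?_⟩
    simp [pow_add, pow_mul]
end PNil

theorem exists_max_normal_coprime (p : ℕ) (G : Type*) [Group G] [Finite G] :
    ∃ N : Subgroup G, N.Normal ∧ (Nat.card N).Coprime p ∧
      ∀ Q : Subgroup G, Q.Normal → (Nat.card Q).Coprime p → Q ≤ N := by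
  obtain ⟨N, hN, hmax⟩ := Set.Finite.exists_maximal
    (Set.toFinite {N : Subgroup G | N.Normal ∧ (Nat.card N).Coprime p}) ⟨⊥, inferInstance, by simp⟩
  refine ⟨N, hN.1, hN.2, fun Q hQ hQc => ?_⟩
  have := hN.1
  have h : N ⊔ Q ≤ N := hmax ⟨inferInstance, ?_⟩ le_sup_left
  · exact le_sup_right.trans h
  · have := card_sup_mul_card_inf N Q Subgroup.le_normalizer_of_normal
    exact Nat.Coprime.coprime_dvd_left (Dvd.intro _ this) (Nat.Coprime.mul_left hN.2 hQc)

theorem PNil.of_nilpotent (p : ℕ) (hp : p.Prime) (G : Type*) [Group G] [Finite G] [hn : Group.IsNilpotent G] :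
    PNil p G := by
  obtain ⟨N, hN, hc, hmax⟩ := exists_max_normal_coprime p G
  refine ⟨N, hN, hc, fun g => ?_⟩
  have : ∃ k, N.index = p ^ k := by
    refine ⟨_, Nat.eq_prime_pow_of_unique_prime_dvd Subgroup.index_ne_zero_of_finite ?_⟩
    intro q hq hqd
    by_contra hne
    have := Fact.mk hq
    obtain ⟨Q⟩ : Nonempty (Sylow q G) := inferInstance
    have hQn : (Q : Subgroup G).Normal := inferInstance
    have hle := hmax Q hQn (by
      obtain ⟨n, hn⟩ := IsPGroup.iff_card.1 Q.2
      rw [hn]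
      exact Nat.Coprime.pow_left _ ((Nat.coprime_primes hq hp).2 hne))
    exact Q.not_dvd_index (hqd.trans (Subgroup.index_dvd_of_le hle))
  obtain ⟨k, hk⟩ := this
  exact ⟨k, by rw [← hk]; exact Subgroup.pow_index_mem N g⟩
end

section
theorem PNil.decomp {p : ℕ} [hp : Fact p.Prime] {G : Type*} [Group G] [Finite G] (h : PNil p G)
    (S : Sylow p G) (D : Subgroup G) [D.Normal] (hD : IsPGroup p D) (g : G) :
    ∃ k u : G, k * u = g ∧ u ∈ S ∧ ∀ d ∈ D, k * d = d * k := by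
  obtain ⟨N, hN, hc, hNp⟩ := h
  have hsup : N ⊔ S = ⊤ := by
    rw [← Subgroup.index_eq_one]
    have h1 : (N ⊔ S : Subgroup G).index ∣ N.index := Subgroup.index_dvd_of_le le_sup_left
    have h2 : (N ⊔ S : Subgroup G).index ∣ (S : Subgroup G).index := Subgroup.index_dvd_of_le le_sup_right
    have h3 : IsPGroup p (G ⧸ N) := by
      intro x
      obtain ⟨g, rfl⟩ := QuotientGroup.mk_surjective x
      obtain ⟨k, hk⟩ := hNp g
      exact ⟨k, by rw [← QuotientGroup.mk_pow]; exact (QuotientGroup.eq_one_iff _).2 hk⟩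
    obtain ⟨n, hn⟩ := IsPGroup.iff_card.1 h3
    have h4 : N.index = p ^ n := hn
    rw [h4] at h1
    have h5 : ((S : Subgroup G).index).Coprime (p ^ n) :=
      Nat.Coprime.pow_right _ ((Nat.Prime.coprime_iff_not_dvd hp.out).2 S.not_dvd_index).symm
    exact Nat.Coprime.eq_one_of_dvd (Nat.Coprime.coprime_dvd_left h2 h5) h1
  have hg : g ∈ N ⊔ S := by rw [hsup]; trivial
  rw [Subgroup.mem_sup_of_normal_left] at hg
  obtain ⟨k, hk, u, hu, e⟩ := hg
  refine ⟨k, u, e, hu, fun d hd => ?_⟩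
  have hdis : Disjoint N D := by
    apply Subgroup.disjoint_of_coprime_natCard
    obtain ⟨n, hn⟩ := IsPGroup.iff_card.1 hD
    rw [hn]; exact hc.pow_right n
  exact Subgroup.commute_of_normal_of_disjoint N D inferInstance inferInstance hdis k d hk hd

theorem exists_normalizer_gt {p : ℕ} [hp : Fact p.Prime] {G : Type*} [Group G] [Finite G]
    {S D : Subgroup G} (hS : IsPGroup p S) (h : D < S) :
    D < Subgroup.normalizer (D : Set G) ⊓ S := by
  have : Group.IsNilpotent S := hS.isNilpotent
  have hlt : D.subgroupOf S < ⊤ := by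
    rw [lt_top_iff_ne_top, Ne, Subgroup.subgroupOf_eq_top]; exact not_le_of_gt h
  have hn := Group.normalizerCondition_of_isNilpotent (G := S) _ hlt
  refine lt_of_le_of_ne (le_inf Subgroup.le_normalizer h.le) ?_
  intro e
  obtain ⟨x, hx1, hx2⟩ := SetLike.exists_of_lt hn
  apply hx2
  rw [Subgroup.mem_subgroupOf, e]
  refine ⟨?_, x.2⟩
  change (x : G) ∈ Subgroup.normalizer (D : Set G)
  rw [Subgroup.mem_normalizer_iff] at hx1 ⊢
  intro y
  constructor
  · intro hy
    have := (hx1 ⟨y, h.le hy⟩).1 hy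
    exact this
  · intro hy
    have hyS : y ∈ S := by
      have h1 := h.le hy
      have := S.mul_mem (S.mul_mem (S.inv_mem x.2) h1) x.2
      simpa [mul_assoc] using this
    exact (hx1 ⟨y, hyS⟩).2 hy

/-- hypothesis of Frobenius' theorem -/
def FrobHyp (p : ℕ) (G : Type*) [Group G] : Prop :=
  ∀ U : Subgroup G, IsPGroup p U → U ≠ ⊥ → PNil p (Subgroup.normalizer (U : Set G))

theorem mem_conj_smul {G : Type*} [Group G] {S : Subgroup G} {k x : G} :
    x ∈ MulAut.conj k • S ↔ k⁻¹ * x * k ∈ S := by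
  rw [Subgroup.mem_pointwise_smul_iff_inv_smul_mem]
  simp [← map_inv]

theorem frob_aux1 {p : ℕ} [hp : Fact p.Prime] {G : Type*} [Group G] [Finite G] 
    (D S T : Subgroup G) (hD : IsPGroup p D) (h : PNil p (Subgroup.normalizer (D : Set G)))
    (hS : IsPGroup p S) (hT : IsPGroup p T) (hSN : S ≤ Subgroup.normalizer (D : Set G))
    (hTN : T ≤ Subgroup.normalizer (D : Set G)) :
    ∃ (k : G) (S1 : Subgroup G), IsPGroup p S1 ∧ S ≤ S1 ∧ (∀ d ∈ D, k * d = d * k) ∧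
      T ≤ MulAut.conj k • S1 := by
  set N := Subgroup.normalizer (D : Set G)
  obtain ⟨S1, hS1⟩ := (hS.comap_of_injective N.subtype N.subtype_injective).exists_le_sylow
  obtain ⟨T1, hT1⟩ := (hT.comap_of_injective N.subtype N.subtype_injective).exists_le_sylow
  obtain ⟨n, hn⟩ := MulAction.exists_smul_eq N S1 T1
  have hDN : (D.subgroupOf N).Normal := Subgroup.normal_in_normalizer
  obtain ⟨k, u, hku, hu, hk⟩ := h.decomp S1 (D.subgroupOf N)
    (hD.comap_of_injective N.subtype N.subtype_injective) n
  have hT1' : k • S1 = T1 := by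
    rw [← hn, ← hku, mul_smul]
    congr 1
    symm
    rw [Sylow.smul_eq_iff_mem_normalizer]
    exact Subgroup.le_normalizer hu
  refine ⟨k, (S1 : Subgroup N).map N.subtype, S1.2.map _, ?_, ?_, ?_⟩
  · intro x hx
    exact ⟨⟨x, hSN hx⟩, hS1 hx, rfl⟩
  · intro d hd
    have := hk ⟨d, Subgroup.le_normalizer hd⟩ hd
    exact congrArg Subtype.val this
  · intro x hx
    have h1 : (⟨x, hTN hx⟩ : N) ∈ T1 := hT1 hx
    rw [← hT1', ← SetLike.mem_coe, Sylow.coe_smul] at h1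
    rw [mem_conj_smul]
    have h2 : (k⁻¹ * ⟨x, hTN hx⟩ * k : N) ∈ (S1 : Subgroup N) := mem_conj_smul.1 h1
    exact ⟨_, h2, rfl⟩

theorem frob_fusion {p : ℕ} [hp : Fact p.Prime] {G : Type*} [Group G] [Finite G] (hG : FrobHyp p G)
    (n : ℕ) : ∀ S T : Sylow p G, Nat.card G - Nat.card (S ⊓ T : Subgroup G) = n →
      (S ⊓ T : Subgroup G) ≠ ⊥ → 
      ∃ c : G, (∀ d ∈ (S ⊓ T : Subgroup G), c * d = d * c) ∧ c • S = T := by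
  induction n using Nat.strong_induction_on with
  | _ n ih =>
  intro S T hn hne
  by_cases hST : S = T
  · exact ⟨1, by simp, by simpa using hST⟩
  set D := (S ⊓ T : Subgroup G) with hDdef
  have hDp : IsPGroup p D := S.2.to_le inf_le_left
  have hDS : D < S := lt_of_le_of_ne inf_le_left (fun e => hST (by
    have : (S : Subgroup G) ≤ T := by rw [← e]; exact inf_le_right
    exact (Sylow.ext (S.3 T.2 this)).symm))
  have hDT : D < T := lt_of_le_of_ne inf_le_right (fun e => hST (by
    have : (T : Subgroup G) ≤ S := by rw [← e]; exact inf_le_left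
    exact (Sylow.ext (T.3 S.2 this))))
  have hS' := exists_normalizer_gt S.2 hDS
  have hT' := exists_normalizer_gt T.2 hDT
  obtain ⟨k, S1, hS1, hSS1, hk, hTS1⟩ := frob_aux1 D _ _ hDp (hG D hDp hne) 
    (S.2.to_le (inf_le_right : Subgroup.normalizer (D : Set G) ⊓ S ≤ S))
    (T.2.to_le (inf_le_right : Subgroup.normalizer (D : Set G) ⊓ T ≤ T)) inf_le_left inf_le_left
  obtain ⟨S2, hS2⟩ := hS1.exists_le_sylow
  have key : ∀ X Y : Sylow p G, D < (X ⊓ Y : Subgroup G) → ∃ c : G, (∀ d ∈ D, c * d = d * c) ∧ c • X = Y := by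
    intro X Y hXY
    obtain ⟨c, hc, hc2⟩ := ih _ (by
      rw [← hn]
      have h1 : Nat.card D < Nat.card (X ⊓ Y : Subgroup G) := Set.Finite.card_lt_card (Set.toFinite _) hXY
      have h2 := Subgroup.card_le_card_group (X ⊓ Y : Subgroup G)
      omega) X Y rfl (ne_bot_of_gt hXY)
    exact ⟨c, fun d hd => hc d (hXY.le hd), hc2⟩
  obtain ⟨c1, hc1, e1⟩ := key S S2 (hS'.trans_le (le_inf inf_le_right (hSS1.trans hS2)))
  obtain ⟨c2, hc2, e2⟩ := key (k • S2) T (hT'.trans_le (le_inf (hTS1.trans (by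
    change _ ≤ MulAut.conj k • (S2 : Subgroup G)
    exact Subgroup.pointwise_smul_le_pointwise_smul_iff.2 hS2)) inf_le_right))
  refine ⟨c2 * k * c1, fun d hd => ?_, by rw [mul_smul, mul_smul, e1, e2]⟩
  have a1 := hc1 d hd
  have a2 := hc2 d hd
  have a3 := hk d hd
  calc c2 * k * c1 * d = c2 * k * (c1 * d) := by group
    _ = c2 * (k * d) * c1 := by rw [a1]; group
    _ = (c2 * d) * k * c1 := by rw [a3]; group
    _ = d * (c2 * k * c1) := by rw [a2]; group

theorem frob_fusion2 {p : ℕ} [hp : Fact p.Prime] {G : Type*} [Group G] [Finite G] (hG : FrobHyp p G)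
    (P : Sylow p G) (x g : G) (hx : x ∈ P) (hxg : g⁻¹ * x * g ∈ P) : 
    ∃ u ∈ P, g⁻¹ * x * g = u⁻¹ * x * u := by
  by_cases hx1 : x = 1
  · exact ⟨1, P.one_mem, by simp [hx1]⟩
  have hmem : x ∈ (↑(g • P) ⊓ ↑P : Subgroup G) := ⟨mem_conj_smul.2 hxg, hx⟩
  obtain ⟨c, hc, e⟩ := frob_fusion hG _ (g • P) P rfl (by
    intro h; rw [h] at hmem; exact hx1 hmem)
  have hcx := hc x hmem
  rw [← mul_smul, Sylow.smul_eq_iff_mem_normalizer] at e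
  set N := Subgroup.normalizer (P : Set G)
  have hPN : ((P : Subgroup G).subgroupOf N).Normal := Subgroup.normal_in_normalizer
  have hPne : (P : Subgroup G) ≠ ⊥ := by
    intro h; exact hx1 (by have : x ∈ (P : Subgroup G) := hx
                           rw [h] at this; exact this)
  obtain ⟨k, u, hku, hu, hk⟩ := (hG P P.2 hPne).decomp (P.subtype Subgroup.le_normalizer) ((P : Subgroup G).subgroupOf N)
    (P.2.comap_of_injective N.subtype N.subtype_injective) ⟨c * g, e⟩
  refine ⟨u, hu, ?_⟩
  have hkx : (k : G) * x = x * k := congrArg Subtype.val (hk ⟨x, Subgroup.le_normalizer hx⟩ hx)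
  have hcg : (k : G) * u = c * g := congrArg Subtype.val hku
  have hg : g = c⁻¹ * (k * u) := by rw [hcg]; group
  have e1 : c * x * c⁻¹ = x := by rw [hcx]; group
  have e2 : (k:G)⁻¹ * x * k = x := by rw [mul_assoc, ← hkx]; group
  calc g⁻¹ * x * g = (u : G)⁻¹ * ((k : G)⁻¹ * (c * x * c⁻¹) * k) * u := by rw [hg]; group
    _ = _ := by rw [e1, e2]

theorem frob_transfer {p : ℕ} [hp : Fact p.Prime] {G : Type*} [Group G] [Finite G] (hG : FrobHyp p G)
    (P : Sylow p G) (g : G) (hg : g ∈ P) :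
    MonoidHom.transfer (Abelianization.of (G := P)) g = 
      (Abelianization.of (⟨g, hg⟩ : P)) ^ (P : Subgroup G).index := by
  classical
  let := (P : Subgroup G).fintypeQuotientOfFiniteIndex
  rw [MonoidHom.transfer_eq_prod_quotient_orbitRel_zpowers_quot, Subgroup.index_eq_sum_minimalPeriod (P : Subgroup G) g,
    ← Finset.prod_pow_eq_pow_sum]
  refine Finset.prod_congr rfl fun q _ => ?_
  obtain ⟨u, hu, e⟩ := frob_fusion2 hG P (g ^ Function.minimalPeriod (g • ·) q.out) q.out.out
    (P.pow_mem hg _) (QuotientGroup.out_conj_pow_minimalPeriod_mem (P : Subgroup G) g q.out)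
  have : (⟨q.out.out⁻¹ * g ^ Function.minimalPeriod (g • ·) q.out * q.out.out,
            QuotientGroup.out_conj_pow_minimalPeriod_mem (P : Subgroup G) g q.out⟩ : P) = 
      ⟨u, hu⟩⁻¹ * (⟨g, hg⟩ : P) ^ Function.minimalPeriod (g • ·) q.out * ⟨u, hu⟩ := Subtype.ext e
  rw [this, map_mul, map_mul, map_inv, map_pow, mul_comm, mul_inv_cancel_left]

theorem FrobHyp.subgroup {p : ℕ} {G : Type*} [Group G] [Finite G] (hG : FrobHyp p G) (M : Subgroup G) :
    FrobHyp p M := by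
  intro U hU hne
  have := hG (U.map M.subtype) (hU.map _) (by
    rw [Ne, Subgroup.map_eq_bot_iff_of_injective _ M.subtype_injective]; exact hne)
  let f : Subgroup.normalizer (U : Set M) →* Subgroup.normalizer (U.map M.subtype : Set G) :=
    (M.subtype.comp (Subgroup.subtype _)).codRestrict _ (by
      intro x
      exact Subgroup.le_normalizer_map M.subtype ⟨x, x.2, rfl⟩)
  refine this.of_injective f ?_
  intro a b hab
  exact Subtype.ext (Subtype.ext (congrArg (Subgroup.subtype (Subgroup.normalizer (U.map M.subtype : Set G))) hab))

universe u in
theorem frobenius_pnil {p : ℕ} [hp : Fact p.Prime] (n : ℕ) : ∀ (G : Type u) [Group G] [Finite G],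
    Nat.card G = n → FrobHyp p G → PNil p G := by
  induction n using Nat.strong_induction_on with
  | _ n ih =>
  intro G _ _ hn hG
  obtain ⟨P⟩ : Nonempty (Sylow p G) := inferInstance
  by_cases hP : (P : Subgroup G) = ⊥
  · apply PNil.of_coprime
    have h1 := P.not_dvd_index
    rw [hP, Subgroup.index_bot] at h1
    exact ((Nat.Prime.coprime_iff_not_dvd hp.out).2 h1).symm
  have : Nontrivial P := (Subgroup.nontrivial_iff_ne_bot _).2 hP
  have : Group.IsNilpotent P := P.2.isNilpotent
  have hlt := Group.IsSolvable.commutator_lt_top_of_nontrivial P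
  obtain ⟨x, -, hx⟩ := SetLike.exists_of_lt hlt
  have hAb : IsPGroup p (Abelianization P) := P.2.of_surjective Abelianization.of (QuotientGroup.mk_surjective)
  set τ := MonoidHom.transfer (Abelianization.of (G := P)) with hτ
  have hMp : ∀ g : G, ∃ k : ℕ, g ^ (p ^ k) ∈ τ.ker := by
    intro g
    obtain ⟨k, hk⟩ := hAb (τ g)
    exact ⟨k, by rw [MonoidHom.mem_ker, map_pow, hk]⟩
  have hM : τ.ker ≠ ⊤ := by
    intro h
    have h1 : τ x = 1 := by rw [← MonoidHom.mem_ker, h]; trivial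
    rw [hτ, frob_transfer hG P x x.2] at h1
    obtain ⟨k, hk⟩ := hAb (Abelianization.of x)
    have h2 : (Abelianization.of x) = 1 := by
      have hc : (p ^ k).Coprime (P : Subgroup G).index :=
        Nat.Coprime.pow_left _ ((Nat.Prime.coprime_iff_not_dvd hp.out).2 P.not_dvd_index)
      rw [← orderOf_eq_one_iff]
      exact Nat.Coprime.eq_one_of_dvd (Nat.Coprime.coprime_dvd_left (orderOf_dvd_of_pow_eq_one hk) hc)
        (orderOf_dvd_of_pow_eq_one h1)
    exact hx ((QuotientGroup.eq_one_iff _).1 h2)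
  refine PNil.of_normal τ.ker hMp (ih _ ?_ τ.ker rfl (hG.subgroup _))
  rw [← hn]
  exact lt_of_le_of_ne (Subgroup.card_le_card_group _) (fun h => hM (Subgroup.eq_top_of_card_eq _ h))
end

section
theorem mem_autFixed {A G : Type*} [Group A] [Group G] [MulDistribMulAction A G]
    {S : Subgroup A} {g : G} : g ∈ autFixed (G := G) S ↔ ∀ a ∈ S, a • g = g := Iff.rfl

/-- action on invariant subgroup -/
abbrev subMDA {A G : Type*} [Group A] [Group G] [MulDistribMulAction A G] (N : Subgroup G)
    (hN : ∀ a : A, ∀ n ∈ N, a • n ∈ N) : MulDistribMulAction A N where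
  smul a n := ⟨a • (n : G), hN a n n.2⟩
  one_smul n := Subtype.ext (one_smul A (n : G))
  mul_smul a b n := Subtype.ext (mul_smul a b (n : G))
  smul_mul a x y := Subtype.ext (smul_mul' a (x : G) y)
  smul_one a := Subtype.ext (smul_one a)

theorem exists_fixed_of_pgroup {p : ℕ} [hp : Fact p.Prime] {A G : Type*} [Group A] [Group G] [Finite G]
    [MulDistribMulAction A G] (S : Subgroup A) (hS : IsPGroup p S) (Y : Subgroup G)
    (hY : ∀ s ∈ S, ∀ y ∈ Y, s • y ∈ Y) (hc : p ∣ Nat.card Y) :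
    ∃ y ∈ Y, y ≠ 1 ∧ ∀ s ∈ S, s • y = y := by
  let := subMDA (A := S) Y (fun a n hn => hY a a.2 n hn)
  obtain ⟨b, hb, hne⟩ := hS.exists_fixed_point_of_prime_dvd_card_of_fixed_point Y hc (a := 1)
    (by intro s; exact smul_one s)
  refine ⟨b, b.2, fun h => hne (Subtype.ext h.symm), fun s hs => ?_⟩
  exact congrArg Subtype.val (hb ⟨s, hs⟩)

/-- trace hom -/
def traceHom (A V : Type*) [Group A] [Fintype A] [CommGroup V] [MulDistribMulAction A V] : V →* V where
  toFun v := ∏ a : A, a • v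
  map_one' := by simp
  map_mul' x y := by simp [Finset.prod_mul_distrib]

theorem traceHom_apply (A V : Type*) [Group A] [Fintype A] [CommGroup V] [MulDistribMulAction A V] (v : V) :
    traceHom A V v = ∏ a : A, a • v := rfl

theorem smul_finprod {A V ι : Type*} [Group A] [CommGroup V] [MulDistribMulAction A V]
    (a : A) (s : Finset ι) (f : ι → V) : a • ∏ i ∈ s, f i = ∏ i ∈ s, a • f i :=
  map_prod (MulDistribMulAction.toMonoidHom V a) f s

theorem traceHom_smul {A V : Type*} [Group A] [Fintype A] [CommGroup V] [MulDistribMulAction A V] (a : A) (v : V) :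
    traceHom A V (a • v) = traceHom A V v := by
  simp only [traceHom_apply, ← mul_smul]
  exact Equiv.prod_comp (Equiv.mulRight a) (fun b => b • v)

theorem smul_traceHom {A V : Type*} [Group A] [Fintype A] [CommGroup V] [MulDistribMulAction A V] (a : A) (v : V) :
    a • traceHom A V v = traceHom A V v := by
  simp only [traceHom_apply, smul_finprod, ← mul_smul]
  exact Equiv.prod_comp (Equiv.mulLeft a) (fun b => b • v)

theorem traceHom_fixed {A V : Type*} [Group A] [Fintype A] [CommGroup V] [MulDistribMulAction A V] (v : V)
    (h : ∀ a : A, a • v = v) : traceHom A V v = v ^ Nat.card A := by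
  simp [traceHom_apply, h]

theorem eq_one_of_pow_coprime {G : Type*} [Group G] {x : G} {m n : ℕ} (h : m.Coprime n) (hm : x ^ m = 1)
    (hn : x ^ n = 1) : x = 1 := by
  rw [← orderOf_eq_one_iff]
  exact Nat.Coprime.eq_one_of_dvd (Nat.Coprime.coprime_dvd_left (orderOf_dvd_of_pow_eq_one hm) h)
    (orderOf_dvd_of_pow_eq_one hn)

/-- the additive endomorphism attached to an automorphism -/
def actEnd (A V : Type*) [Group A] [CommGroup V] [MulDistribMulAction A V] : A →* AddMonoid.End (Additive V) where
  toFun a := (MulDistribMulAction.toMonoidHom V a).toAdditive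
  map_one' := by ext x; exact congrArg Additive.ofMul (one_smul A x.toMul)
  map_mul' a b := by ext x; exact congrArg Additive.ofMul (mul_smul a b x.toMul)

theorem actEnd_apply {A V : Type*} [Group A] [CommGroup V] [MulDistribMulAction A V] (a : A) (v : V) :
    actEnd A V a (Additive.ofMul v) = Additive.ofMul (a • v) := rfl

open scoped IsMulCommutative in
theorem lemmaE (U V : Type*) [CommGroup U] [CommGroup V] [Finite V] [Nontrivial V] [MulDistribMulAction U V] :
    ∃ (B : Subgroup U) (a : U), B ⊔ Subgroup.zpowers a = ⊤ ∧ ∃ v : V, v ≠ 1 ∧ ∀ b ∈ B, b • v = v := by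
  let s : Set (AddMonoid.End (Additive V)) := Set.range (actEnd U V)
  have hs : ∀ x ∈ s, ∀ y ∈ s, x * y = y * x := by
    rintro _ ⟨x, rfl⟩ _ ⟨y, rfl⟩
    rw [← map_mul, ← map_mul, mul_comm]
  let E := Subring.closure s
  have := Subring.isMulCommutative_closure hs
  let : CommRing E := inferInstance
  have : Finite (AddMonoid.End (Additive V)) := by
    have : Finite (Additive V) := inferInstanceAs (Finite V)
    exact Finite.of_injective (fun f => (f : Additive V → Additive V)) DFunLike.coe_injective
  have : Finite E := inferInstance
  let hmod : Module E (Additive V) := inferInstance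
  have : Nontrivial (Additive V) := inferInstanceAs (Nontrivial V)
  obtain ⟨P, hP⟩ := associatedPrimes.nonempty E (Additive V)
  obtain ⟨hPp, v, hv⟩ := isAssociatedPrime_iff.1 hP
  let j : U →* E := (actEnd U V).codRestrict E (fun u => Subring.subset_closure ⟨u, rfl⟩)
  let k : U →* (E ⧸ P)ˣ := (Units.map (Ideal.Quotient.mk P : E →* E ⧸ P)).comp j.toHomUnits
  have : Finite (E ⧸ P) := Finite.of_surjective _ Ideal.Quotient.mk_surjective
  obtain ⟨⟨g, a, rfl⟩, hg⟩ := IsCyclic.exists_generator (α := k.range)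
  refine ⟨k.ker, a, ?_, v.toMul, ?_, ?_⟩
  · rw [eq_top_iff]
    intro u _
    obtain ⟨n, hn⟩ := Subgroup.mem_zpowers_iff.1 (hg ⟨k u, u, rfl⟩)
    have hn' : k a ^ n = k u := congrArg Subtype.val hn
    have : u = (u * (a ^ n)⁻¹) * a ^ n := by group
    rw [this]
    refine Subgroup.mul_mem_sup ?_ (Subgroup.zpow_mem _ (Subgroup.mem_zpowers a) n)
    rw [MonoidHom.mem_ker, map_mul, map_inv, map_zpow, hn', mul_inv_cancel]
  · intro h
    apply hPp.ne_top
    rw [hv]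
    have : v = 0 := h
    rw [this]; ext; simp
  · intro b hb
    have h1 : k b = 1 := hb
    have h2 : Ideal.Quotient.mk P (j b) = 1 := congrArg Units.val h1
    have h3 : j b - 1 ∈ P := by
      rw [← Ideal.Quotient.eq_zero_iff_mem, map_sub, h2, map_one, sub_self]
    rw [hv, Submodule.mem_colon_singleton, Submodule.mem_bot, sub_smul, one_smul, sub_eq_zero] at h3
    exact h3

theorem lemmaH {R : Type*} [Ring R] {p : ℕ} (hp : p.Prime) (hp2 : p ≠ 2) (hR : (p : R) = 0)
    (a a' u : R) (h1 : a * a' = 1) (h2 : a' * a = 1) (hN : (a - 1) * (a - 1) = 0) (m : ℕ)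
    (hm : m.Coprime p) (hum : u ^ m = 1) (c1 : Commute u (a * u * a')) (c2 : Commute u (a' * u * a))
    (c3 : Commute (a * u * a') (a' * u * a)) : a * u = u * a := by
  obtain ⟨N, rfl⟩ : ∃ N, a = 1 + N := ⟨a - 1, by abel⟩
  have hN2 : N * N = 0 := by simpa using hN
  have ha' : a' = 1 - N := by
    have : (1 - N) * ((1 + N) * a') = a' := by
      rw [← mul_assoc]
      have : (1 - N) * (1 + N) = 1 := by noncomm_ring; simp [hN2]
      rw [this, one_mul]
    rw [← this, h1, mul_one]
  subst ha'
  obtain ⟨u1, hu1⟩ : ∃ u1, u1 = (1 + N) * u * (1 - N) := ⟨_, rfl⟩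
  obtain ⟨u2, hu2⟩ : ∃ u2, u2 = (1 - N) * u * (1 + N) := ⟨_, rfl⟩
  rw [← hu1] at c1 c3
  rw [← hu2] at c2 c3
  -- half
  obtain ⟨k, hk⟩ : ∃ k, p = 2 * k + 1 := (hp.odd_of_ne_two hp2)
  obtain ⟨t, ht, htc⟩ : ∃ t : R, t * 2 = 1 ∧ ∀ x, Commute t x := by
    refine ⟨-(k : R), ?_, fun x => (Nat.cast_commute k x).neg_left⟩
    have : (p : R) = 2 * k + 1 := by rw [hk]; push_cast; rfl
    rw [hR] at this
    have h3 : (k : R) * 2 = 2 * k := (Nat.cast_commute k 2)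
    rw [neg_mul, h3, neg_eq_iff_eq_neg, eq_neg_iff_add_eq_zero]; exact this.symm
  have hal : ∀ x : R, t * (x + x) = x := by
    intro x; rw [← two_mul, ← mul_assoc, ht, one_mul]
  have hβ : N * u * N = u - t * (u1 + u2) := by
    have : u1 + u2 = (u - N * u * N) + (u - N * u * N) := by rw [hu1, hu2]; noncomm_ring
    rw [this, hal]; abel
  have hα : N * u - u * N = t * (u1 - u2) := by
    have : u1 - u2 = (N * u - u * N) + (N * u - u * N) := by rw [hu1, hu2]; noncomm_ring
    rw [this, hal]
  have hu12 : u1 * u1 = (1 + N) * (u * u) * (1 - N) := by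
    rw [hu1]; calc _ = (1 + N) * u * ((1 - N) * (1 + N)) * u * (1 - N) := by noncomm_ring
      _ = _ := by rw [h2]; noncomm_ring
  have hu22 : u2 * u2 = (1 - N) * (u * u) * (1 + N) := by
    rw [hu2]; calc _ = (1 - N) * u * ((1 + N) * (1 - N)) * u * (1 + N) := by noncomm_ring
      _ = _ := by rw [h1]; noncomm_ring
  have hγ : N * (u * u) * N = u * u - t * (u1 * u1 + u2 * u2) := by
    have : u1 * u1 + u2 * u2 = (u * u - N * (u * u) * N) + (u * u - N * (u * u) * N) := by 
      rw [hu12, hu22]; noncomm_ring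
    rw [this, hal]; abel
  obtain ⟨β, hβd⟩ : ∃ β, β = N * u * N := ⟨_, rfl⟩
  obtain ⟨α, hαd⟩ : ∃ α, α = N * u - u * N := ⟨_, rfl⟩
  obtain ⟨γ, hγd⟩ : ∃ γ, γ = N * (u * u) * N := ⟨_, rfl⟩
  rw [← hβd] at hβ
  rw [← hαd] at hα
  rw [← hγd] at hγ
  have cuβ : Commute u β := by
    rw [hβ]; exact (Commute.refl u).sub_right ((htc u).symm.mul_right (c1.add_right c2))
  have cuα : Commute u α := by
    rw [hα]; exact (htc u).symm.mul_right (c1.sub_right c2)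
  have cu1β : Commute u1 β := by
    rw [hβ]; exact c1.symm.sub_right ((htc _).symm.mul_right ((Commute.refl _).add_right c3))
  have cu2β : Commute u2 β := by
    rw [hβ]; exact c2.symm.sub_right ((htc _).symm.mul_right (c3.symm.add_right (Commute.refl _)))
  have cαβ : Commute α β := by
    rw [hα]; exact (htc _).mul_left (cu1β.sub_left cu2β)
  have cβγ : Commute β γ := by
    rw [hγ]
    exact (cuβ.symm.mul_right cuβ.symm).sub_right ((htc _).symm.mul_right
      ((cu1β.symm.mul_right cu1β.symm).add_right (cu2β.symm.mul_right cu2β.symm)))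
  have cuγ : Commute u γ := by
    rw [hγ]
    exact ((Commute.refl u).mul_right (Commute.refl u)).sub_right ((htc _).symm.mul_right
      ((c1.mul_right c1).add_right (c2.mul_right c2)))
  have hβ2 : β * β = 0 := by
    rw [hβd]; calc _ = N * u * (N * N) * u * N := by noncomm_ring
      _ = 0 := by rw [hN2]; simp
  have hγ2 : γ * γ = 0 := by
    rw [hγd]; calc _ = N * (u * u) * (N * N) * (u * u) * N := by noncomm_ring
      _ = 0 := by rw [hN2]; simp
  have hα2 : α * α = (β * u + u * β) - γ := by
    rw [hαd, hβd, hγd]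
    calc _ = N * u * N * u + u * (N * u * N) - N * (u * u) * N - u * (N * N) * u := by noncomm_ring
      _ = _ := by rw [hN2]; simp
  have nβ : IsNilpotent β := ⟨2, by rw [pow_two, hβ2]⟩
  have nγ : IsNilpotent γ := ⟨2, by rw [pow_two, hγ2]⟩
  have nα : IsNilpotent α := by
    suffices hh : IsNilpotent (α * α) by
      obtain ⟨k, hk⟩ := hh
      exact ⟨2 * k, by rw [pow_mul, pow_two, hk]⟩
    rw [hα2]
    have n1 : IsNilpotent (β * u) := cuβ.symm.isNilpotent_mul_right nβ
    have n2 : IsNilpotent (u * β) := by rw [cuβ.eq]; exact n1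
    have n3 : IsNilpotent (β * u + u * β) := by
      refine Commute.isNilpotent_add ?_ n1 n2
      rw [cuβ.eq]
    refine Commute.isNilpotent_sub ?_ n3 nγ
    exact (cβγ.mul_left cuγ).add_left (cuγ.mul_left cβγ)
  have nν : IsNilpotent (α - β) := Commute.isNilpotent_sub cαβ nα nβ
  have hν : u1 = u + (α - β) := by rw [hu1, hαd, hβd]; noncomm_ring
  have cν : Commute u (α - β) := cuα.sub_right cuβ
  obtain ⟨n, hn⟩ := nν
  have hn' : (α - β) ^ (p ^ n) = 0 := pow_eq_zero_of_le (Nat.lt_pow_self hp.one_lt).le hn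
  have hpow : u1 ^ (p ^ n) = u ^ (p ^ n) := by
    rw [hν, Commute.add_pow_prime_pow_eq hp cν, hn', hR]; simp
  have hu1m : u1 ^ m = 1 := by
    have : ∀ i : ℕ, u1 ^ i = (1 + N) * u ^ i * (1 - N) := by
      intro i
      induction i with
      | zero => simp [h1]
      | succ i ih => 
        rw [pow_succ, ih, hu1]
        calc _ = (1 + N) * u ^ i * ((1 - N) * (1 + N)) * u * (1 - N) := by noncomm_ring
          _ = _ := by rw [h2, pow_succ]; noncomm_ring
    rw [this, hum, mul_one, h1]
  have huu : u1 = u := by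
    obtain ⟨s, hs⟩ : ∃ s, p ^ n * s ≡ 1 [MOD m] := by
      rcases Nat.lt_or_ge 1 m with hm1 | hm1
      · obtain ⟨s, hs⟩ := Nat.exists_mul_mod_eq_one_of_coprime (hm.symm.pow_left n) hm1
        exact ⟨s, by rw [Nat.ModEq, hs.2, Nat.mod_eq_of_lt hm1]⟩
      · interval_cases m
        · simp at hm; exact absurd hm hp.one_lt.ne'
        · exact ⟨0, Nat.modEq_one⟩
    have key : ∀ x : R, x ^ m = 1 → (x ^ (p ^ n)) ^ s = x := by
      intro x hx
      rw [← pow_mul, pow_eq_pow_mod _ hx, hs, ← pow_eq_pow_mod _ hx, pow_one]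
    rw [← key u1 hu1m, hpow, key u hum]
  calc (1 + N) * u = (1 + N) * u * ((1 - N) * (1 + N)) := by rw [h2, mul_one]
    _ = u1 * (1 + N) := by rw [hu1]; noncomm_ring
    _ = _ := by rw [huu]
end

section
theorem lemmaPQ {p : ℕ} [hp : Fact p.Prime] {A Z : Type*} [Group A] [CommGroup Z] [Finite Z]
    [MulDistribMulAction A Z] (hZ : IsPGroup p Z) (B : Subgroup A) (hB : IsPGroup p B) (u : A)
    (hu : ∀ b ∈ B, b * u = u * b) (m : ℕ) (hm : m.Coprime p) (hum : u ^ m = 1)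
    (hfix : ∀ z : Z, (∀ b ∈ B, b • z = z) → u • z = z) (z : Z) : u • z = z := by
  let T : Z →* Z :=
    { toFun := fun z => ∏ i ∈ Finset.range m, u ^ i • z
      map_one' := by simp
      map_mul' := by intro x y; simp [Finset.prod_mul_distrib] }
  have hT : ∀ z, T z = ∏ i ∈ Finset.range m, u ^ i • z := fun z => rfl
  have hY : T.ker = ⊥ := by
    by_contra hne
    have : Nontrivial T.ker := (Subgroup.nontrivial_iff_ne_bot _).2 hne
    obtain ⟨n, hn, hcard⟩ := (IsPGroup.nontrivial_iff_card (hZ.to_subgroup T.ker)).1 this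
    obtain ⟨y, hy, hy1, hyf⟩ := exists_fixed_of_pgroup B hB T.ker (by
      intro s hs y hy
      rw [MonoidHom.mem_ker, hT] at hy ⊢
      have : ∏ i ∈ Finset.range m, u ^ i • s • y = s • ∏ i ∈ Finset.range m, u ^ i • y := by
        rw [smul_finprod]
        refine Finset.prod_congr rfl fun i _ => ?_
        rw [← mul_smul, ← mul_smul]
        have : Commute s u := hu s hs
        rw [(this.pow_right i).eq]
      rw [this, hy, smul_one]) (by rw [hcard]; exact dvd_pow_self p hn.ne')
    have h1 := hfix y hyf
    have h2 : ∀ i : ℕ, u ^ i • y = y := by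
      intro i
      induction i with
      | zero => simp
      | succ i ih => rw [pow_succ, mul_smul, h1, ih]
    have h3 : y ^ m = 1 := by
      rw [MonoidHom.mem_ker, hT] at hy
      simpa [h2] using hy
    obtain ⟨k, hk⟩ := hZ y
    exact hy1 (eq_one_of_pow_coprime (hm.pow_right k) h3 hk)
  have hmem : (u • z) / z ∈ T.ker := by
    rw [MonoidHom.mem_ker, map_div, div_eq_one, hT, hT]
    have h0 : ∏ i ∈ Finset.range (m+1), u ^ i • z = ∏ i ∈ Finset.range (m+1), u ^ i • z := rfl
    nth_rewrite 1 [Finset.prod_range_succ'] at h0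
    rw [Finset.prod_range_succ, hum, pow_zero] at h0
    have h1 := mul_right_cancel h0
    rw [← h1]
    refine Finset.prod_congr rfl fun i _ => ?_
    rw [← mul_smul, pow_succ]
  rw [hY, Subgroup.mem_bot, div_eq_one] at hmem
  exact hmem

/-- coprime abelian action: a cyclic-index subgroup with fixed point not fixed by the whole group -/
theorem lemmaE2 (A Q : Type*) [CommGroup A] [Finite A] [CommGroup Q] [Finite Q] [MulDistribMulAction A Q]
    (hc : (Nat.card A).Coprime (Nat.card Q)) (hne : ∃ (a : A) (q : Q), a • q ≠ q) :
    ∃ (B : Subgroup A) (a : A), B ⊔ Subgroup.zpowers a = ⊤ ∧ ∃ q : Q, (∀ b ∈ B, b • q = q) ∧ a • q ≠ q := by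
  have := Fintype.ofFinite A
  let Y := (traceHom A Q).ker
  have hY : ∀ a : A, ∀ y ∈ Y, a • y ∈ Y := by
    intro a y hy
    rw [MonoidHom.mem_ker, traceHom_smul]; exact hy
  obtain ⟨a, q, haq⟩ := hne
  have : Nontrivial Y := by
    rw [Subgroup.nontrivial_iff_exists_ne_one]
    refine ⟨(a • q) / q, ?_, by rwa [Ne, div_eq_one]⟩
    rw [MonoidHom.mem_ker, map_div, traceHom_smul, div_self']
  let := subMDA Y hY
  obtain ⟨B, a, hBa, v, hv1, hv⟩ := lemmaE A Y
  refine ⟨B, a, hBa, v, fun b hb => congrArg Subtype.val (hv b hb), fun hav => hv1 ?_⟩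
  have hfix : ∀ x : A, x • (v : Q) = v := by
    intro x
    have hx : x ∈ B ⊔ Subgroup.zpowers a := by rw [hBa]; trivial
    have : B ⊔ Subgroup.zpowers a ≤ MulAction.stabilizer A (v : Q) := by
      refine sup_le (fun b hb => congrArg Subtype.val (hv b hb)) ?_
      rw [Subgroup.zpowers_le]; exact hav
    exact this hx
  have h1 := v.2
  rw [MonoidHom.mem_ker, traceHom_fixed _ hfix] at h1
  exact Subtype.ext (eq_one_of_pow_coprime hc h1 pow_card_eq_one')

theorem claimC_step {p : ℕ} [hp : Fact p.Prime] (hp2 : p ≠ 2) {Z : Type*} [CommGroup Z] [Finite Z]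
    {C : Type*} [Group C] [MulDistribMulAction C Z]
    (hZ : ∀ z : Z, z ^ p = 1) (a u : C) (ha : ∃ k, a ^ (p ^ k) = 1) (m : ℕ) (hm : m.Coprime p) (hum : u ^ m = 1)
    (c1 : Commute u (a * u * a⁻¹)) (c2 : Commute u (a⁻¹ * u * a)) (c3 : Commute (a * u * a⁻¹) (a⁻¹ * u * a))
    (hcard : Nat.card Z ≤ p * Nat.card (autFixed (G := Z) (Subgroup.zpowers a))) (z : Z) :
    (a * u * a⁻¹ * u⁻¹) • z = z := by
  have hZp : IsPGroup p Z := fun z => ⟨1, by simpa using hZ z⟩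
  have hmemfix : ∀ z : Z, z ∈ autFixed (G := Z) (Subgroup.zpowers a) ↔ a • z = z := by
    intro z
    constructor
    · intro h; exact h a (Subgroup.mem_zpowers a)
    · intro h
      have : Subgroup.zpowers a ≤ MulAction.stabilizer C z := by rw [Subgroup.zpowers_le]; exact h
      exact fun b hb => this hb
  let D : Z →* Z := 
    { toFun := fun z => a • z / z
      map_one' := by simp
      map_mul' := fun x y => by rw [smul_mul', mul_div_mul_comm] }
  have hD : ∀ z, D z = a • z / z := fun z => rfl
  have hker : D.ker = autFixed (G := Z) (Subgroup.zpowers a) := by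
    ext z; rw [hmemfix, MonoidHom.mem_ker, hD, div_eq_one]
  have hrange : Nat.card D.range ≤ p := by
    have h1 := D.ker.card_mul_index
    rw [Subgroup.index_ker] at h1
    rw [← h1, ← hker, mul_comm] at hcard
    exact Nat.le_of_mul_le_mul_right hcard Nat.card_pos
  have hDD : ∀ z, D (D z) = 1 := by
    by_cases hb : D.range = ⊥
    · intro z
      have : D z ∈ D.range := ⟨z, rfl⟩
      rw [hb] at this
      rw [Subgroup.mem_bot.1 this, map_one]
    have : Nontrivial D.range := (Subgroup.nontrivial_iff_ne_bot _).2 hb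
    obtain ⟨n, hn, hcard⟩ := (IsPGroup.nontrivial_iff_card (hZp.to_subgroup D.range)).1 this
    have hcp : Nat.card D.range = p := by
      refine le_antisymm hrange ?_
      rw [hcard]; exact Nat.le_self_pow hn.ne' p
    have hap : IsPGroup p (Subgroup.zpowers a) := by
      obtain ⟨k, hk⟩ := ha
      intro x
      refine ⟨k, Subtype.ext ?_⟩
      obtain ⟨j, hj⟩ := Subgroup.mem_zpowers_iff.1 x.2
      rw [Subgroup.coe_pow, ← hj, ← zpow_natCast, zpow_comm, zpow_natCast, hk]; simp
    obtain ⟨y, hy, hy1, hyf⟩ := exists_fixed_of_pgroup (Subgroup.zpowers a) hap D.range (by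
      rintro s hs _ ⟨y, rfl⟩
      refine ⟨s • y, ?_⟩
      obtain ⟨j, rfl⟩ := Subgroup.mem_zpowers_iff.1 hs
      rw [hD, hD, smul_div', ← mul_smul, ← mul_smul]
      congr 2
      rw [(Commute.refl a).zpow_right j]) (by rw [hcp])
    have hle : D.range ≤ D.ker := by
      have h3 : Nat.card (D.range ⊓ D.ker : Subgroup Z) ∣ p := by
        rw [← hcp]; exact Subgroup.card_dvd_of_le inf_le_left
      rcases (Nat.dvd_prime hp.out).1 h3 with h4 | h4
      · rw [Subgroup.card_eq_one] at h4
        exfalso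
        have : y ∈ D.range ⊓ D.ker := ⟨hy, by rw [hker]; exact hyf⟩
        rw [h4] at this; exact hy1 this
      · have h5 : D.range ⊓ D.ker = D.range := Subgroup.eq_of_le_of_card_ge inf_le_left (by rw [h4, hcp])
        rw [← h5]; exact inf_le_right
    intro z
    exact hle ⟨z, rfl⟩
  have key := lemmaH (R := AddMonoid.End (Additive Z)) hp.out hp2 (by
      ext z
      change (p • z : Additive Z) = 0
      exact congrArg Additive.ofMul (hZ z.toMul)) (actEnd C Z a) (actEnd C Z a⁻¹) (actEnd C Z u)
      (by rw [← map_mul]; simp) (by rw [← map_mul]; simp) (by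
        ext z
        exact congrArg Additive.ofMul (hDD z.toMul)) m hm (by rw [← map_pow, hum, map_one])
      (by simpa only [← map_mul] using c1.map (actEnd C Z)) (by simpa only [← map_mul] using c2.map (actEnd C Z))
      (by simpa only [← map_mul] using c3.map (actEnd C Z))
  rw [← map_mul, ← map_mul] at key
  have h6 : ∀ z : Z, (a * u) • z = (u * a) • z := fun z => by
    have := DFunLike.congr_fun key (Additive.ofMul z)
    exact this
  have := h6 (a⁻¹ • u⁻¹ • z)
  rw [← mul_smul, ← mul_smul, ← mul_smul, ← mul_smul] at this
  rw [show u * a * a⁻¹ * u⁻¹ = 1 by group, one_smul] at this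
  exact this

/-- conjugation action of a normalizing subgroup -/
abbrev conjMDA {Γ : Type*} [Group Γ] (A Q : Subgroup Γ) (h : ∀ a ∈ A, ∀ q ∈ Q, a * q * a⁻¹ ∈ Q) :
    MulDistribMulAction A Q where
  smul a q := ⟨a * q * (a : Γ)⁻¹, h a a.2 q q.2⟩
  one_smul q := Subtype.ext (by change (1 : Γ) * q * (1 : Γ)⁻¹ = q; simp)
  mul_smul a b q := Subtype.ext (by
    change ((a : Γ) * b) * q * ((a : Γ) * b)⁻¹ = a * (b * q * (b : Γ)⁻¹) * (a : Γ)⁻¹; group)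
  smul_mul a x y := Subtype.ext (by
    change (a : Γ) * (x * y) * (a : Γ)⁻¹ = (a * x * (a : Γ)⁻¹) * (a * y * (a : Γ)⁻¹); group)
  smul_one a := Subtype.ext (by change (a : Γ) * 1 * (a : Γ)⁻¹ = 1; group)

/-- comm group structure -/
abbrev commGroupOf {Γ : Type*} [Group Γ] (A : Subgroup Γ) (h : ∀ x ∈ A, ∀ y ∈ A, x * y = y * x) : CommGroup A :=
  { (inferInstance : Group A) with mul_comm := fun x y => Subtype.ext (h x x.2 y y.2) }

theorem claimC {p : ℕ} [hp : Fact p.Prime] (hp2 : p ≠ 2) {Z Γ : Type*} [CommGroup Z] [Finite Z]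
    [Group Γ] [Finite Γ] [MulDistribMulAction Γ Z] [FaithfulSMul Γ Z]
    (hZ : ∀ z : Z, z ^ p = 1) (Q : Subgroup Γ) (hQ : ∀ x ∈ Q, ∀ y ∈ Q, x * y = y * x)
    (hQc : (Nat.card Q).Coprime p) (n : ℕ) : ∀ A : Subgroup Γ, Nat.card A = n → (∀ a ∈ A, a ^ p = 1) →
    (∀ x ∈ A, ∀ y ∈ A, x * y = y * x) → (∀ a ∈ A, ∀ q ∈ Q, a * q * a⁻¹ ∈ Q) →
    (∀ a ∈ A, (∀ q ∈ Q, a * q = q * a) → a = 1) →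
    Nat.card A * Nat.card (autFixed (G := Z) A) ≤ Nat.card Z ∧
    (A ≠ ⊥ → Nat.card A * Nat.card (autFixed (G := Z) A) < Nat.card Z) := by
  have hZp : IsPGroup p Z := fun z => ⟨1, by simpa using hZ z⟩
  induction n using Nat.strong_induction_on with
  | _ n ih =>
  intro A hn hAp hAc hAQ hAf
  by_cases hA : A = ⊥
  · refine ⟨?_, fun h => absurd hA h⟩
    rw [hA, Subgroup.card_bot, one_mul]; exact Subgroup.card_le_card_group _
  suffices h : Nat.card A * Nat.card (autFixed (G := Z) A) < Nat.card Z from ⟨h.le, fun _ => h⟩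
  have hApg : IsPGroup p A := fun x => ⟨1, Subtype.ext (by simpa using hAp x x.2)⟩
  obtain ⟨k, hk⟩ := IsPGroup.iff_card.1 hApg
  obtain ⟨B', a, hBa, q, hqB, hqa⟩ : ∃ (B : Subgroup A) (a : A), B ⊔ Subgroup.zpowers a = ⊤ ∧
      ∃ q : Q, (∀ b ∈ B, (b : Γ) * q * (b : Γ)⁻¹ = q) ∧ (a : Γ) * q * (a : Γ)⁻¹ ≠ q := by
    let := commGroupOf A hAc
    let := commGroupOf Q hQ
    let := conjMDA A Q hAQ
    obtain ⟨B', a, hBa, q, hqB, hqa⟩ := lemmaE2 A Q (by rw [hk]; exact (hQc.pow_right k).symm) (by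
      by_contra hcon
      push Not at hcon
      apply hA
      rw [eq_bot_iff]
      intro a ha
      refine hAf a ha fun q hq => ?_
      have := congrArg Subtype.val (hcon ⟨a, ha⟩ ⟨q, hq⟩)
      change a * q * a⁻¹ = q at this
      exact mul_inv_eq_iff_eq_mul.1 this)
    refine ⟨B', a, hBa, q, fun b hb => congrArg Subtype.val (hqB b hb), fun h => hqa (Subtype.ext h)⟩
  let B := B'.map A.subtype
  have hBA : B ≤ A := Subgroup.map_subtype_le B'
  have hBsup : B ⊔ Subgroup.zpowers (a : Γ) = A := by
    have := congrArg (Subgroup.map A.subtype) hBa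
    rw [Subgroup.map_sup, MonoidHom.map_zpowers] at this
    rw [← MonoidHom.range_eq_map, Subgroup.range_subtype] at this
    exact this
  have hBq : ∀ b ∈ B, b * q * b⁻¹ = q := by
    rintro _ ⟨b, hb, rfl⟩
    exact hqB b hb
  have hlt : Nat.card B < Nat.card A := by
    refine lt_of_le_of_ne (Subgroup.card_le_of_le hBA) ?_
    intro h
    have : B = A := Subgroup.eq_of_le_of_card_ge hBA h.ge
    exact hqa (hBq a (by rw [this]; exact a.2))
  have hIH := (ih _ (hn ▸ hlt) B rfl (fun x hx => hAp x (hBA hx)) (fun x hx y hy => hAc x (hBA hx) y (hBA hy))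
    (fun x hx => hAQ x (hBA hx)) (fun x hx => hAf x (hBA hx))).1
  have hAB : Nat.card A ≤ Nat.card B * p := by
    have h1 := card_sup_mul_card_inf B (Subgroup.zpowers (a : Γ)) (by
      intro b hb
      rw [Subgroup.mem_normalizer_iff]
      intro x
      have : ∀ y ∈ Subgroup.zpowers (a : Γ), b * y * b⁻¹ = y := fun y hy => by
        rw [hAc b (hBA hb) y (by rw [← hBsup]; exact le_sup_right (a := B) hy)]; group
      constructor
      · intro hx; rw [this x hx]; exact hx
      · intro hx
        have h2 : x ∈ A := by
          have hz : b * x * b⁻¹ ∈ A := by rw [← hBsup]; exact le_sup_right (a := B) hx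
          have := A.mul_mem (A.mul_mem (A.inv_mem (hBA hb)) hz) (hBA hb)
          simpa [mul_assoc] using this
        rw [hAc b (hBA hb) x h2] at hx
        simpa using hx)
    rw [hBsup] at h1
    have h2 : Nat.card (Subgroup.zpowers (a : Γ)) ≤ p := by
      rw [Nat.card_zpowers]
      exact Nat.le_of_dvd hp.out.pos (orderOf_dvd_of_pow_eq_one (hAp a a.2))
    calc Nat.card A ≤ Nat.card A * Nat.card (B ⊓ Subgroup.zpowers (a : Γ) : Subgroup Γ) :=
          Nat.le_mul_of_pos_right _ Nat.card_pos
      _ = _ := h1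
      _ ≤ _ := Nat.mul_le_mul_left _ h2
  by_cases hcase : p * Nat.card (autFixed (G := Z) A) < Nat.card (autFixed (G := Z) B)
  · calc Nat.card A * Nat.card (autFixed (G := Z) A) ≤ Nat.card B * p * Nat.card (autFixed (G := Z) A) :=
        Nat.mul_le_mul_right _ hAB
      _ = Nat.card B * (p * Nat.card (autFixed (G := Z) A)) := by ring
      _ < Nat.card B * Nat.card (autFixed (G := Z) B) := Nat.mul_lt_mul_of_pos_left hcase Nat.card_pos
      _ ≤ _ := hIH
  exfalso
  push Not at hcase
  have haA := a.2
  have haq1 := hAQ a haA q q.2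
  have haq2 := hAQ (a : Γ)⁻¹ (A.inv_mem haA) q q.2
  rw [inv_inv] at haq2
  let C := Subgroup.centralizer (B : Set Γ)
  have haC : (a : Γ) ∈ C := Subgroup.mem_centralizer_iff.2 fun b hb => hAc b (hBA hb) a haA
  have hqC : (q : Γ) ∈ C := Subgroup.mem_centralizer_iff.2 fun b hb => mul_inv_eq_iff_eq_mul.1 (hBq b hb)
  let Z1 := autFixed (G := Z) B
  have hZ1 : ∀ c : C, ∀ z ∈ Z1, c • z ∈ Z1 := by
    intro c z hz b hb
    have h1 := Subgroup.mem_centralizer_iff.1 c.2 b hb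
    change b • (c : Γ) • z = (c : Γ) • z
    rw [← mul_smul, h1, mul_smul, hz b hb]
  let := subMDA Z1 hZ1
  have hord : (q : Γ) ^ Nat.card Q = 1 := by
    have : q ^ Nat.card Q = 1 := pow_card_eq_one'
    exact congrArg Subtype.val this
  have hstep := claimC_step (Z := Z1) (C := C) hp2 (fun z => Subtype.ext (hZ z)) ⟨a, haC⟩ ⟨q, hqC⟩
    ⟨1, Subtype.ext (by simpa using hAp a haA)⟩ (Nat.card Q) hQc (Subtype.ext hord)
    (Subtype.ext (hQ _ q.2 _ haq1)) (Subtype.ext (hQ _ q.2 _ haq2)) (Subtype.ext (hQ _ haq1 _ haq2)) (by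
      refine hcase.trans (Nat.mul_le_mul_left p ?_)
      let f : autFixed (G := Z) A → autFixed (G := Z1) (Subgroup.zpowers (⟨a, haC⟩ : C)) := fun z =>
        ⟨⟨z, fun b hb => z.2 b (hBA hb)⟩, by
          have : Subgroup.zpowers (⟨a, haC⟩ : C) ≤ MulAction.stabilizer C (⟨z, fun b hb => z.2 b (hBA hb)⟩ : Z1) := by
            rw [Subgroup.zpowers_le]
            exact Subtype.ext (z.2 a haA)
          exact fun b hb => this hb⟩
      refine Nat.card_le_card_of_injective f ?_
      intro x y hxy
      exact Subtype.ext (congrArg (fun w : autFixed (G := Z1) (Subgroup.zpowers (⟨a, haC⟩ : C)) => ((w : Z1) : Z)) hxy))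
  set w : Γ := a * q * (a : Γ)⁻¹ * (q : Γ)⁻¹ with hw
  have hwQ : w ∈ Q := Q.mul_mem haq1 (Q.inv_mem q.2)
  have hw1 : w = 1 := by
    apply FaithfulSMul.eq_of_smul_eq_smul (α := Z)
    intro z
    rw [one_smul]
    refine lemmaPQ hZp B (hApg.to_le hBA) w ?_ (Nat.card Q) hQc ?_ ?_ z
    · have : w ∈ C := C.mul_mem (C.mul_mem (C.mul_mem haC hqC) (C.inv_mem haC)) (C.inv_mem hqC)
      exact fun b hb => Subgroup.mem_centralizer_iff.1 this b hb
    · have : (⟨w, hwQ⟩ : Q) ^ Nat.card Q = 1 := pow_card_eq_one'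
      exact congrArg Subtype.val this
    · intro z hz
      exact congrArg Subtype.val (hstep ⟨z, hz⟩)
  exact hqa (mul_inv_eq_one.1 hw1)
end

section
theorem le_normalizer_of_conj {G : Type*} [Group G] {S X : Subgroup G}
    (h : ∀ g ∈ S, ∀ x ∈ X, g * x * g⁻¹ ∈ X) : S ≤ Subgroup.normalizer (X : Set G) := by
  intro g hg
  rw [Subgroup.mem_normalizer_iff]
  intro x
  refine ⟨h g hg x, fun hx => ?_⟩
  have := h g⁻¹ (S.inv_mem hg) _ hx
  simpa [mul_assoc] using this

theorem conj_mem_of_normalizer {G : Type*} [Group G] {X : Subgroup G} {g x : G} 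
    (hg : g ∈ Subgroup.normalizer (X : Set G)) (hx : x ∈ X) : g * x * g⁻¹ ∈ X :=
  (Subgroup.mem_normalizer_iff.1 hg x).1 hx

theorem normal_of_conj {G : Type*} [Group G] {X : Subgroup G}
    (h : ∀ g : G, ∀ x ∈ X, g * x * g⁻¹ ∈ X) : X.Normal := ⟨fun x hx g => h g x hx⟩

/-- `X` is characteristic in `P` -/
def CharIn {G : Type*} [Group G] (X P : Subgroup G) : Prop :=
  X ≤ P ∧ ∀ φ : P ≃* P, ∀ x : P, (x : G) ∈ X → (φ x : G) ∈ X

/-- restricted equivalence -/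
noncomputable def mapEquiv {G K : Type*} [Group G] [Group K] (P : Subgroup G) (f : G →* K)
    (hf : ∀ x ∈ P, f x = 1 → x = 1) : P ≃* P.map f :=
  MulEquiv.ofBijective (f.subgroupMap P) ⟨by
    rw [injective_iff_map_eq_one]
    intro x hx
    exact Subtype.ext (hf x x.2 (congrArg Subtype.val hx)), f.subgroupMap_surjective P⟩

theorem mapEquiv_apply {G K : Type*} [Group G] [Group K] (P : Subgroup G) (f : G →* K)
    (hf : ∀ x ∈ P, f x = 1 → x = 1) (x : P) : (mapEquiv P f hf x : K) = f x := rfl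

theorem CharIn.map {G K : Type*} [Group G] [Group K] {X P : Subgroup G} (h : CharIn X P) (f : G →* K)
    (hf : ∀ x ∈ P, f x = 1 → x = 1) : CharIn (X.map f) (P.map f) := by
  refine ⟨Subgroup.map_mono h.1, ?_⟩
  rintro φ y ⟨x, hx, hxy⟩
  let e := mapEquiv P f hf
  have h1 := h.2 ((e.trans φ).trans e.symm) ⟨x, h.1 hx⟩ hx
  refine ⟨_, h1, ?_⟩
  have hy : e ⟨x, h.1 hx⟩ = y := Subtype.ext hxy
  rw [← mapEquiv_apply P f hf]
  change ((e (e.symm (φ (e ⟨x, h.1 hx⟩))) : P.map f) : K) = _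
  rw [e.apply_symm_apply, hy]

theorem CharIn.comap {G K : Type*} [Group G] [Group K] {P : Subgroup G} (f : G →* K) {X : Subgroup K} 
    (h : CharIn X (P.map f))
    (hf : ∀ x ∈ P, f x = 1 → x = 1) : CharIn (X.comap f ⊓ P) P ∧ (X.comap f ⊓ P).map f = X := by
  refine ⟨⟨inf_le_right, ?_⟩, ?_⟩
  · rintro φ x ⟨hx, -⟩
    let e := mapEquiv P f hf
    refine ⟨?_, (φ x).2⟩
    have h1 := h.2 ((e.symm.trans φ).trans e) (e x) hx
    change ((e (φ (e.symm (e x))) : P.map f) : K) ∈ X at h1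
    rw [e.symm_apply_apply] at h1
    exact h1
  · ext y
    constructor
    · rintro ⟨x, ⟨hx, -⟩, rfl⟩; exact hx
    · intro hy
      obtain ⟨x, hx, rfl⟩ := h.1 hy
      exact ⟨x, ⟨hy, hx⟩, rfl⟩

theorem CharIn.normalizer_le {G : Type*} [Group G] {X P : Subgroup G} (h : CharIn X P) :
    Subgroup.normalizer (P : Set G) ≤ Subgroup.normalizer (X : Set G) := by
  apply le_normalizer_of_conj
  intro g hg x hx
  let := conjMDA (Subgroup.normalizer (P : Set G)) P (fun a ha q hq => conj_mem_of_normalizer ha hq)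
  exact h.2 (MulDistribMulAction.toMulEquiv P (⟨g, hg⟩ : Subgroup.normalizer (P : Set G))) ⟨x, h.1 hx⟩ hx

theorem pnil_normalizer_map {p : ℕ} {G K : Type*} [Group G] [Group K] [Finite K] (f : G →* K)
    (hf : Function.Injective f) (X : Subgroup G)
    (h : PNil p (Subgroup.normalizer (X.map f : Set K))) : PNil p (Subgroup.normalizer (X : Set G)) := by
  let g : Subgroup.normalizer (X : Set G) →* Subgroup.normalizer (X.map f : Set K) :=
    (f.comp (Subgroup.subtype _)).codRestrict _ (by
      intro x
      exact Subgroup.le_normalizer_map f ⟨x, x.2, rfl⟩)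
  refine h.of_injective g ?_
  intro a b hab
  exact Subtype.ext (hf (congrArg (Subgroup.subtype (Subgroup.normalizer (X.map f : Set K))) hab))

/-- Thompson hypothesis -/
def TH (p : ℕ) (G : Type*) [Group G] : Prop := ∃ P : Sylow p G, ∀ X : Subgroup G, CharIn X P → X ≠ ⊥ →
  PNil p (Subgroup.normalizer (X : Set G))

theorem TH.all {p : ℕ} [Fact p.Prime] {G : Type*} [Group G] [Finite G] (h : TH p G) (P : Sylow p G)
    (X : Subgroup G) (hX : CharIn X P) (hne : X ≠ ⊥) : PNil p (Subgroup.normalizer (X : Set G)) := by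
  obtain ⟨Q, hQ⟩ := h
  obtain ⟨g, hg⟩ := MulAction.exists_smul_eq G P Q
  let f := (MulAut.conj g).toMonoidHom
  have hfi : Function.Injective f := (MulAut.conj g).injective
  have hPQ : (Q : Subgroup G) = (P : Subgroup G).map f := by rw [← hg]; rfl
  apply pnil_normalizer_map f hfi
  apply hQ
  · rw [hPQ]
    exact hX.map f (fun x _ hx => hfi (by rw [hx, map_one]))
  · rwa [Ne, Subgroup.map_eq_bot_iff_of_injective _ hfi]

theorem card_dvd_pow_of_pgroup {p : ℕ} [hp : Fact p.Prime] {G : Type*} [Group G] [Finite G] {T L : Subgroup G}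
    (hT : IsPGroup p T) (h : T ≤ L) : Nat.card T ≤ p ^ (Nat.card L).factorization p := by
  obtain ⟨k, hk⟩ := IsPGroup.iff_card.1 hT
  have h1 := Subgroup.card_dvd_of_le h
  rw [hk] at h1 ⊢
  exact Nat.pow_le_pow_right hp.out.pos ((hp.out.pow_dvd_iff_le_factorization Nat.card_pos.ne').1 h1)

theorem conj_in_sup {p : ℕ} [hp : Fact p.Prime] {G : Type*} [Group G] [Finite G] (X Y M : Subgroup G) [M.Normal]
    (hM : (Nat.card M).Coprime p) (hX : IsPGroup p X) (hY : IsPGroup p Y) (hXY : X ⊔ M = Y ⊔ M) :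
    ∃ m ∈ M, ∀ x ∈ X, m * x * m⁻¹ ∈ Y := by
  have key : ∀ X : Subgroup G, IsPGroup p X → ¬ p ∣ (X.subgroupOf (X ⊔ M)).index := by
    intro X hX
    have h1 := card_sup_mul_card_inf X M Subgroup.le_normalizer_of_normal
    have h2 := Subgroup.relIndex_mul_relIndex ⊥ X (X ⊔ M) bot_le le_sup_left
    rw [Subgroup.relIndex_bot_left, Subgroup.relIndex_bot_left] at h2
    change ¬ p ∣ X.relIndex (X ⊔ M)
    rw [← h2, mul_assoc] at h1
    have h3 := Nat.eq_of_mul_eq_mul_left Nat.card_pos h1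
    intro h
    have h4 : p ∣ Nat.card M := by rw [← h3]; exact h.mul_right _
    exact (Nat.Prime.coprime_iff_not_dvd hp.out).1 hM.symm h4
  have hY' := key Y hY
  have hX' := key X hX
  rw [← hXY] at hY'
  set W := X ⊔ M with hW
  let SX : Sylow p W := (hX.comap_of_injective W.subtype W.subtype_injective).toSylow hX'
  let SY : Sylow p W := (hY.comap_of_injective W.subtype W.subtype_injective).toSylow hY'
  obtain ⟨⟨w, hw⟩, e⟩ := MulAction.exists_smul_eq W SX SY
  obtain ⟨m, hm, x, hx, rfl⟩ := Subgroup.mem_sup_of_normal_left.1 (show w ∈ M ⊔ X by rw [sup_comm]; exact hw)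
  refine ⟨m, hm, fun x' hx' => ?_⟩
  have hz : x⁻¹ * x' * x ∈ X := X.mul_mem (X.mul_mem (X.inv_mem hx) hx') hx
  have h1 : (⟨m * x, hw⟩ * ⟨x⁻¹ * x' * x, (le_sup_left : X ≤ X ⊔ M) hz⟩ * (⟨m * x, hw⟩)⁻¹ : W) ∈ SY := by
    rw [← e]
    refine mem_conj_smul.2 ?_
    simp only [mul_assoc, inv_mul_cancel, mul_one, inv_mul_cancel_left]
    change x⁻¹ * (x' * x) ∈ X
    rwa [← mul_assoc]
  have h2 : (m * x) * (x⁻¹ * x' * x) * (m * x)⁻¹ ∈ Y := h1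
  simpa [mul_assoc] using h2
end

section
theorem pnil_normalizer_image {p : ℕ} {G K : Type*} [Group G] [Finite G] [Group K] [Finite K] (f : G →* K)
    (X : Subgroup G) (h : PNil p (Subgroup.normalizer (X : Set G)))
    (hs : ∀ k ∈ Subgroup.normalizer (X.map f : Set K), ∃ n ∈ Subgroup.normalizer (X : Set G), f n = k) :
    PNil p (Subgroup.normalizer (X.map f : Set K)) := by
  let g : Subgroup.normalizer (X : Set G) →* Subgroup.normalizer (X.map f : Set K) :=
    (f.comp (Subgroup.subtype _)).codRestrict _ (by
      intro x
      exact Subgroup.le_normalizer_map f ⟨x, x.2, rfl⟩)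
  refine h.of_surjective g ?_
  rintro ⟨k, hk⟩
  obtain ⟨n, hn, e⟩ := hs k hk
  exact ⟨⟨n, hn⟩, Subtype.ext e⟩

theorem pgroup_inf_coprime {p : ℕ} [hp : Fact p.Prime] {G : Type*} [Group G] [Finite G] {P M : Subgroup G}
    (hP : IsPGroup p P) (hM : (Nat.card M).Coprime p) (x : G) (hx : x ∈ P) (hxM : x ∈ M) : x = 1 := by
  obtain ⟨k, hk⟩ := hP ⟨x, hx⟩
  have h1 : x ^ p ^ k = 1 := congrArg Subtype.val hk
  refine eq_one_of_pow_coprime (Nat.Coprime.pow_right k hM) (m := Nat.card M) ?_ h1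
  exact orderOf_dvd_iff_pow_eq_one.1 (Subgroup.orderOf_dvd_natCard M hxM)

theorem TH.quot_coprime {p : ℕ} [hp : Fact p.Prime] {G : Type*} [Group G] [Finite G] (h : TH p G)
    (M : Subgroup G) [M.Normal] (hM : (Nat.card M).Coprime p) : TH p (G ⧸ M) := by
  obtain ⟨P⟩ : Nonempty (Sylow p G) := inferInstance
  have hπ := QuotientGroup.mk'_surjective M
  set π := QuotientGroup.mk' M
  refine ⟨P.mapSurjective hπ, fun X' hX' hne => ?_⟩
  rw [Sylow.coe_mapSurjective] at hX'
  have hinj : ∀ x ∈ (P : Subgroup G), π x = 1 → x = 1 := by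
    intro x hx hx1
    exact pgroup_inf_coprime P.2 hM x hx ((QuotientGroup.eq_one_iff x).1 hx1)
  obtain ⟨hX, hmap⟩ := CharIn.comap π hX' hinj
  set X := X'.comap π ⊓ P
  have hXne : X ≠ ⊥ := by
    rintro h0; rw [h0, Subgroup.map_bot] at hmap; exact hne hmap.symm
  have hXp : IsPGroup p X := P.2.to_le hX.1
  have h1 := h.all P X hX hXne
  rw [← hmap]
  apply pnil_normalizer_image π X h1
  intro k hk
  obtain ⟨g, rfl⟩ := hπ k
  have hYX : (X.map (MulAut.conj g).toMonoidHom).map π = X.map π := by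
    have h2 : ∀ y ∈ (X.map (MulAut.conj g).toMonoidHom).map π, y ∈ X.map π := by
      rintro _ ⟨_, ⟨x, hx, rfl⟩, rfl⟩
      have := conj_mem_of_normalizer hk ⟨x, hx, rfl⟩
      simpa using this
    refine le_antisymm h2 ?_
    rintro _ ⟨x, hx, rfl⟩
    have := conj_mem_of_normalizer (Subgroup.inv_mem _ hk) ⟨x, hx, rfl⟩
    obtain ⟨z, hz, e⟩ := this
    refine ⟨_, ⟨z, hz, rfl⟩, ?_⟩
    simp only [MulEquiv.toMonoidHom_eq_coe, MonoidHom.coe_coe, MulAut.conj_apply, map_mul, map_inv]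
    rw [e]; group
  have h3 := congrArg (Subgroup.comap π) hYX
  rw [Subgroup.comap_map_eq, Subgroup.comap_map_eq, QuotientGroup.ker_mk'] at h3
  obtain ⟨m, hm, hconj⟩ := conj_in_sup _ _ M hM (hXp.map _) hXp h3
  refine ⟨m * g, ?_, ?_⟩
  · apply Subgroup.mem_normalizer_fintype
    intro x hx
    have := hconj _ ⟨x, hx, rfl⟩
    simpa [mul_assoc] using this
  · rw [map_mul, show π m = 1 from (QuotientGroup.eq_one_iff m).2 hm, one_mul]

theorem TH.quot_pgroup {p : ℕ} [hp : Fact p.Prime] {G : Type*} [Group G] [Finite G]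
    (U : Subgroup G) [U.Normal] (hU : IsPGroup p U) (P : Sylow p G)
    (h : ∀ W : Subgroup G, IsPGroup p W → U < W → (P : Subgroup G) ≤ Subgroup.normalizer (W : Set G) →
      PNil p (Subgroup.normalizer (W : Set G))) : TH p (G ⧸ U) := by
  have hπ := QuotientGroup.mk'_surjective U
  set π := QuotientGroup.mk' U with hπdef
  refine ⟨P.mapSurjective hπ, fun X' hX' hne => ?_⟩
  rw [Sylow.coe_mapSurjective] at hX'
  have hUP : U ≤ P := by
    rw [← P.3 (P.2.to_sup_of_normal_right hU) le_sup_left]; exact le_sup_right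
  have hmap := Subgroup.map_comap_eq_self_of_surjective hπ X'
  have hUX : U ≤ X'.comap π := by
    intro u hu
    rw [Subgroup.mem_comap, show π u = 1 from (QuotientGroup.eq_one_iff u).2 hu]; exact X'.one_mem
  have hXP : X'.comap π ≤ P := by
    have := Subgroup.comap_mono (f := π) hX'.1
    rwa [Subgroup.comap_map_eq, QuotientGroup.ker_mk', sup_eq_left.2 hUP] at this
  rw [← hmap]
  apply pnil_normalizer_image
  · apply h _ (P.2.to_le hXP)
    · refine lt_of_le_of_ne hUX ?_
      intro h0
      apply hne
      rw [← hmap, ← h0, Subgroup.map_eq_bot_iff, QuotientGroup.ker_mk']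
    · rw [← Subgroup.comap_normalizer_eq_of_surjective _ hπ, ← Subgroup.map_le_iff_le_comap]
      exact Subgroup.le_normalizer.trans hX'.normalizer_le
  · intro k hk
    obtain ⟨g, rfl⟩ := hπ k
    refine ⟨g, ?_, rfl⟩
    rw [hmap] at hk
    rw [← Subgroup.comap_normalizer_eq_of_surjective _ hπ]
    exact hk

universe u in
theorem TH.reduce {p : ℕ} [hp : Fact p.Prime] {G : Type u} [Group G] [Finite G] (h : TH p G)
    (ih : ∀ (L : Type u) [Group L] [Finite L], Nat.card L < Nat.card G → TH p L → PNil p L)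
    (hnot : ¬ PNil p G) :
    (∀ M : Subgroup G, M.Normal → (Nat.card M).Coprime p → M = ⊥) ∧
    ∃ (U : Subgroup G) (_ : U.Normal), IsPGroup p U ∧ U ≠ ⊥ ∧ (∀ W : Subgroup G, W.Normal → IsPGroup p W → W ≤ U) ∧
      PNil p (G ⧸ U) := by
  have hquot : ∀ M : Subgroup G, M ≠ ⊥ → Nat.card (G ⧸ M) < Nat.card G := by
    intro M hM
    rw [Subgroup.card_eq_card_quotient_mul_card_subgroup M]
    have h1 : 1 < Nat.card M := by
      rw [Subgroup.one_lt_card_iff_ne_bot]; exact hM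
    have h2 : 0 < Nat.card (G ⧸ M) := Nat.card_pos
    nlinarith
  constructor
  · intro M hMn hM
    by_contra hne
    exact hnot (PNil.of_quot M hM (ih _ (hquot M hne) (h.quot_coprime M hM)))
  let 𝒰 : Set (Subgroup G) := {U | IsPGroup p U ∧ U ≠ ⊥ ∧ ¬ PNil p (Subgroup.normalizer (U : Set G))}
  have hne : 𝒰.Nonempty := by
    by_contra h0
    apply hnot
    apply frobenius_pnil _ G rfl
    intro U hU hU1
    by_contra h2
    exact h0 ⟨U, hU, hU1, h2⟩
  obtain ⟨U, ⟨hUp, hUne, hUn⟩, hmax⟩ := Set.exists_max_image 𝒰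
    (fun U => toLex (p ^ (Nat.card (Subgroup.normalizer (U : Set G))).factorization p, Nat.card U))
    (Set.toFinite _) hne
  have hmax' : ∀ W : Subgroup G, IsPGroup p W → W ≠ ⊥ → 
      (p ^ (Nat.card (Subgroup.normalizer (U : Set G))).factorization p < p ^ (Nat.card (Subgroup.normalizer (W : Set G))).factorization p ∨
      (p ^ (Nat.card (Subgroup.normalizer (U : Set G))).factorization p ≤ p ^ (Nat.card (Subgroup.normalizer (W : Set G))).factorization p 
      ∧ Nat.card U < Nat.card W)) → PNil p (Subgroup.normalizer (W : Set G)) := by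
    intro W hW hWne hlt
    by_contra hn
    have := hmax W ⟨hW, hWne, hn⟩
    rw [Prod.Lex.toLex_le_toLex] at this
    simp only at this
    omega
  have hTN : TH p (Subgroup.normalizer (U : Set G)) := by
    set N := Subgroup.normalizer (U : Set G) with hN
    obtain ⟨S⟩ : Nonempty (Sylow p N) := inferInstance
    refine ⟨S, fun X hX hXne => ?_⟩
    apply pnil_normalizer_map N.subtype N.subtype_injective
    have hX1 := hX.map N.subtype (fun x _ hx => N.subtype_injective (by rw [hx, map_one]))
    have hX2 : X.map N.subtype ≠ ⊥ := by
      rwa [Ne, Subgroup.map_eq_bot_iff_of_injective _ N.subtype_injective]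
    have hSp : IsPGroup p ((S : Subgroup N).map N.subtype) := S.2.map _
    obtain ⟨P, hP⟩ := hSp.exists_le_sylow
    rcases eq_or_lt_of_le hP with e | hlt
    · rw [e] at hX1
      exact h.all P _ hX1 hX2
    · have h1 := exists_normalizer_gt P.2 hlt
      apply hmax' _ (hSp.to_le hX1.1) hX2
      left
      have h2 : IsPGroup p (Subgroup.normalizer ((S : Subgroup N).map N.subtype : Set G) ⊓ P : Subgroup G) :=
        P.2.to_le inf_le_right
      have h3 := card_dvd_pow_of_pgroup h2 (inf_le_left.trans hX1.normalizer_le)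
      refine lt_of_lt_of_le ?_ h3
      have h4 : Nat.card ((S : Subgroup N).map N.subtype) = p ^ (Nat.card N).factorization p := by
        rw [Subgroup.card_map_of_injective N.subtype_injective, S.card_eq_multiplicity]
      rw [← h4]
      exact Set.Finite.card_lt_card (Set.toFinite _) h1
  have hNtop : Subgroup.normalizer (U : Set G) = ⊤ := by
    by_contra hN
    apply hUn
    apply ih _ _ hTN
    exact lt_of_le_of_ne (Subgroup.card_le_card_group _) (fun e => hN (Subgroup.eq_top_of_card_eq _ e))
  have hUnormal : U.Normal := Subgroup.normalizer_eq_top_iff.1 hNtop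
  have hW : ∀ P : Sylow p G, ∀ W : Subgroup G, IsPGroup p W → U < W → (P : Subgroup G) ≤ Subgroup.normalizer (W : Set G) →
      PNil p (Subgroup.normalizer (W : Set G)) := by
    intro P W hWp hlt hPW
    apply hmax' W hWp (ne_bot_of_gt hlt)
    right
    refine ⟨?_, Set.Finite.card_lt_card (Set.toFinite _) hlt⟩
    have := card_dvd_pow_of_pgroup P.2 hPW
    rw [P.card_eq_multiplicity] at this
    rwa [hNtop, Subgroup.card_top]
  obtain ⟨P⟩ : Nonempty (Sylow p G) := inferInstance
  refine ⟨U, hUnormal, hUp, hUne, ?_, ?_⟩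
  · intro W hWn hWp
    by_contra hle
    apply hnot
    have h5 := hW P (W ⊔ U) (hWp.to_sup_of_normal_right hUp) (lt_of_le_of_ne le_sup_right (fun e => hle (by rw [e]; exact le_sup_left))) 
      (by rw [Subgroup.normalizer_eq_top_iff.2 inferInstance]; exact le_top)
    rw [Subgroup.normalizer_eq_top_iff.2 inferInstance] at h5
    exact h5.of_injective (Subgroup.topEquiv (G := G)).symm.toMonoidHom (Subgroup.topEquiv (G := G)).symm.injective
  · exact ih _ (hquot U hUne) (TH.quot_pgroup U hUp P (hW P))
end

section
theorem sup_sylow_eq_top {p : ℕ} [hp : Fact p.Prime] {G : Type*} [Group G] [Finite G] (N : Subgroup G) [N.Normal]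
    (hNp : ∀ g : G, ∃ k : ℕ, g ^ (p ^ k) ∈ N) (S : Sylow p G) : N ⊔ S = ⊤ := by
  rw [← Subgroup.index_eq_one]
  have h1 : (N ⊔ S : Subgroup G).index ∣ N.index := Subgroup.index_dvd_of_le le_sup_left
  have h2 : (N ⊔ S : Subgroup G).index ∣ (S : Subgroup G).index := Subgroup.index_dvd_of_le le_sup_right
  have h3 : IsPGroup p (G ⧸ N) := by
    intro x
    obtain ⟨g, rfl⟩ := QuotientGroup.mk_surjective x
    obtain ⟨k, hk⟩ := hNp g
    exact ⟨k, by rw [← QuotientGroup.mk_pow]; exact (QuotientGroup.eq_one_iff _).2 hk⟩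
  obtain ⟨n, hn⟩ := IsPGroup.iff_card.1 h3
  have h4 : N.index = p ^ n := hn
  rw [h4] at h1
  have h5 : ((S : Subgroup G).index).Coprime (p ^ n) :=
    Nat.Coprime.pow_right _ ((Nat.Prime.coprime_iff_not_dvd hp.out).2 S.not_dvd_index).symm
  exact Nat.Coprime.eq_one_of_dvd (Nat.Coprime.coprime_dvd_left h2 h5) h1

theorem sylow_fixed_of_pgroup {p q : ℕ} [hp : Fact p.Prime] [hq : Fact q.Prime] {A G : Type*} [Group A] [Group G]
    [Finite G] [MulDistribMulAction A G] (hA : IsPGroup p A) [Finite A]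
    (hG : (Nat.card G).Coprime p) : ∃ Q : Sylow q G, ∀ a : A, a • Q = Q := by
  have hcard : ¬ p ∣ Nat.card (Sylow q G) := by
    intro h
    have Q : Sylow q G := Classical.arbitrary _
    have h1 := h.trans (Q.card_dvd_index.trans (Q : Subgroup G).index_dvd_card)
    exact (Nat.Prime.coprime_iff_not_dvd hp.out).1 hG.symm h1
  obtain ⟨Q, hQ⟩ := hA.nonempty_fixed_point_of_prime_not_dvd_card (Sylow q G) hcard
  exact ⟨Q, hQ⟩

theorem T_step6 {p : ℕ} [hp : Fact p.Prime] {G : Type*} [Group G] [Finite G] (K : Subgroup G) [K.Normal]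
    (hK : (Nat.card K).Coprime p) (P : Sylow p G) (hKP : K ⊔ P = ⊤)
    (h : ∀ L : Subgroup G, (P : Subgroup G) ≤ L → L = ⊤ ∨ L = P) : ∀ x ∈ K, ∀ y ∈ K, x * y = y * x := by
  by_cases hKb : K = ⊥
  · intro x hx y hy
    rw [hKb, Subgroup.mem_bot] at hx hy
    rw [hx, hy]
  obtain ⟨q, hq, hqd⟩ := Nat.exists_prime_and_dvd (n := Nat.card K) (by
    rw [Ne, Subgroup.card_eq_one]; exact hKb)
  have := Fact.mk hq
  let := conjMDA (P : Subgroup G) K (fun a _ q hq => Subgroup.Normal.conj_mem inferInstance q hq a)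
  obtain ⟨Q, hQ⟩ := sylow_fixed_of_pgroup (q := q) P.2 hK
  let Q1 := (Q : Subgroup K).map K.subtype
  let A0 := Q1 ⊓ Subgroup.centralizer (Q1 : Set G)
  have hPQ : ∀ g ∈ (P : Subgroup G), ∀ x ∈ Q1, g * x * g⁻¹ ∈ Q1 := by
    rintro g hg _ ⟨x, hx, rfl⟩
    have h1 : (⟨g, hg⟩ : (P : Subgroup G)) • x ∈ Q := by
      have h2 := Subgroup.smul_mem_pointwise_smul x (⟨g, hg⟩ : (P : Subgroup G)) (Q : Subgroup K) hx
      rw [← Sylow.pointwise_smul_def, hQ] at h2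
      exact h2
    exact ⟨_, h1, rfl⟩
  have hPA : (P : Subgroup G) ≤ Subgroup.normalizer (A0 : Set G) := by
    apply le_normalizer_of_conj
    rintro g hg x ⟨hx1, hx2⟩
    refine ⟨hPQ g hg x hx1, ?_⟩
    change _ ∈ Subgroup.centralizer _
    change x ∈ Subgroup.centralizer _ at hx2
    rw [Subgroup.mem_centralizer_iff] at hx2 ⊢
    intro y hy
    have h1 := hx2 _ (hPQ g⁻¹ (Subgroup.inv_mem _ hg) y hy)
    have h2 : y = g * (g⁻¹ * y * g⁻¹⁻¹) * g⁻¹ := by group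
    calc y * (g * x * g⁻¹) = g * ((g⁻¹ * y * g⁻¹⁻¹) * x) * g⁻¹ := by group
      _ = _ := by rw [h1]; group
  have hA0 : A0 ≠ ⊥ := by
    have hQn : Nontrivial Q := by
      exact (Subgroup.nontrivial_iff_ne_bot _).2 (Q.ne_bot_of_dvd_card hqd)
    have := Q.2.center_nontrivial
    obtain ⟨⟨c, hc⟩, hne⟩ := exists_ne (1 : Subgroup.center Q)
    intro h0
    have h1 : ((c : K) : G) ∈ A0 := by
      refine ⟨⟨c, c.2, rfl⟩, ?_⟩
      change _ ∈ Subgroup.centralizer _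
      rw [Subgroup.mem_centralizer_iff]
      rintro _ ⟨y, hy, rfl⟩
      have := Subgroup.mem_center_iff.1 hc ⟨y, hy⟩
      exact congrArg (fun x : Q => ((x : K) : G)) this
    rw [h0, Subgroup.mem_bot] at h1
    apply hne
    ext; simpa using h1
  have hA0K : A0 ≤ K := inf_le_left.trans (by rintro _ ⟨x, _, rfl⟩; exact x.2)
  have htop : (P : Subgroup G) ⊔ A0 = ⊤ := by
    rcases h _ (le_sup_left : (P : Subgroup G) ≤ (P : Subgroup G) ⊔ A0) with h1 | h1
    · exact h1
    · exfalso
      apply hA0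
      rw [eq_bot_iff]
      intro x hx
      have hxP : x ∈ (P : Subgroup G) := by rw [← h1]; exact (le_sup_right : A0 ≤ _) hx
      exact pgroup_inf_coprime P.2 hK x hxP (hA0K hx)
  have hdis : ∀ B : Subgroup G, B ≤ K → Nat.card (P ⊓ B : Subgroup G) = 1 := by
    intro B hB
    rw [Subgroup.card_eq_one, eq_bot_iff]
    rintro x ⟨h1, h2⟩
    exact pgroup_inf_coprime P.2 hK x h1 (hB h2)
  have e1 := card_sup_mul_card_inf _ _ hPA
  have e2 := card_sup_mul_card_inf (P : Subgroup G) K Subgroup.le_normalizer_of_normal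
  rw [htop, hdis A0 hA0K] at e1
  rw [sup_comm, hKP, hdis K le_rfl, e1] at e2
  have e3 := Nat.eq_of_mul_eq_mul_left Nat.card_pos e2
  have e4 : A0 = K := Subgroup.eq_of_le_of_card_ge hA0K e3.ge
  intro x hx y hy
  rw [← e4] at hx hy
  exact (Subgroup.mem_centralizer_iff.1 hy.2 x hx.1)

theorem pnil_of_central {p : ℕ} [hp : Fact p.Prime] {G : Type*} [Group G] [Finite G] (Z : Subgroup G)
    (hZ : ∀ z ∈ Z, ∀ g, z * g = g * z) (hZp : IsPGroup p Z) (hi : Z.index.Coprime p) : PNil p G := by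
  have hn : Z.Normal := normal_of_conj (fun g x hx => by rw [← hZ x hx g]; simpa using hx)
  have hc : (Nat.card Z).Coprime Z.index := by
    obtain ⟨k, hk⟩ := IsPGroup.iff_card.1 hZp
    rw [hk]; exact (hi.pow_right k).symm
  obtain ⟨N, hN⟩ := Subgroup.exists_right_complement'_of_coprime hc
  have hNc : (Nat.card N).Coprime p := by
    have h1 := hN.card_mul_card
    rw [← Z.card_mul_index] at h1
    rwa [Nat.eq_of_mul_eq_mul_left Nat.card_pos h1]
  have hdec : ∀ g : G, ∃ z ∈ Z, ∃ n ∈ N, z * n = g := by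
    intro g
    have : g ∈ Z ⊔ N := by rw [hN.sup_eq_top]; trivial
    exact Subgroup.mem_sup_of_normal_left.1 this
  refine ⟨N, normal_of_conj ?_, hNc, ?_⟩
  · intro g x hx
    obtain ⟨z, hz, n, hn, rfl⟩ := hdec g
    have : z * n * x * (z * n)⁻¹ = n * x * n⁻¹ := by
      calc z * n * x * (z * n)⁻¹ = (z * (n * x * n⁻¹)) * z⁻¹ := by group
        _ = _ := by rw [hZ z hz]; group
    rw [this]
    exact N.mul_mem (N.mul_mem hn hx) (N.inv_mem hn)
  · intro g
    obtain ⟨z, hz, n, hn, rfl⟩ := hdec g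
    obtain ⟨k, hk⟩ := hZp ⟨z, hz⟩
    refine ⟨k, ?_⟩
    have h1 : z ^ p ^ k = 1 := congrArg Subtype.val hk
    rw [Commute.mul_pow (hZ z hz n), h1, one_mul]
    exact N.pow_mem hn _

theorem relIndex_dvd_right {G : Type*} [Group G] (U : Subgroup G) [U.Normal] {L K : Subgroup G} (h : L ≤ K) :
    U.relIndex L ∣ U.relIndex K := by
  rw [← QuotientGroup.ker_mk' U, Subgroup.relIndex_ker, Subgroup.relIndex_ker]
  exact Subgroup.card_dvd_of_le (Subgroup.map_mono h)

theorem T_step4 {p : ℕ} [hp : Fact p.Prime] {G : Type*} [Group G] [Finite G] 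
    (h1 : ∀ M : Subgroup G, M.Normal → (Nat.card M).Coprime p → M = ⊥)
    (U K : Subgroup G) [U.Normal] [K.Normal] (hUp : IsPGroup p U)
    (hUmax : ∀ W : Subgroup G, W.Normal → IsPGroup p W → W ≤ U) (hi : (U.relIndex K).Coprime p)
    (hKp : ∀ g : G, ∃ k : ℕ, g ^ (p ^ k) ∈ K) : Subgroup.centralizer (U : Set G) ≤ U := by
  set C := Subgroup.centralizer (U : Set G) with hC
  have hCn : C.Normal := Subgroup.normal_centralizer
  have hD : C ⊓ K ≤ U := by
    have hDnil : PNil p (C ⊓ K : Subgroup G) := by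
      refine pnil_of_central (U.subgroupOf (C ⊓ K)) ?_ (hUp.comap_of_injective _ (Subgroup.subtype_injective _)) ?_
      · rintro ⟨z, hz1, hz2⟩ hz ⟨g, hg1, hg2⟩
        exact Subtype.ext (Subgroup.mem_centralizer_iff.1 hg1 z hz)
      · change (U.relIndex (C ⊓ K)).Coprime p
        exact hi.coprime_dvd_left (relIndex_dvd_right U inf_le_right)
    obtain ⟨N, hN, hNc, hNp⟩ := hDnil
    have hNb := h1 (N.map (Subgroup.subtype _)) (normal_of_conj (by
      rintro g _ ⟨x, hx, rfl⟩
      have hn : (C ⊓ K).Normal := inferInstance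
      refine ⟨⟨g * x * g⁻¹, hn.conj_mem _ x.2 g⟩, ?_, rfl⟩
      rw [SetLike.mem_coe, PNil.mem_iff hNc hNp] at hx ⊢
      rw [← Subgroup.orderOf_coe] at hx ⊢
      have : orderOf (g * (x : G) * g⁻¹) = orderOf (x : G) := by
        have := orderOf_injective (MulAut.conj g).toMonoidHom (MulAut.conj g).injective (x : G)
        simpa using this
      rwa [this])) (by rwa [Subgroup.card_map_of_injective (Subgroup.subtype_injective _)])
    rw [Subgroup.map_eq_bot_iff_of_injective _ (Subgroup.subtype_injective _)] at hNb
    apply hUmax _ inferInstance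
    intro g
    obtain ⟨k, hk⟩ := hNp g
    rw [hNb] at hk
    exact ⟨k, hk⟩
  apply hUmax _ hCn
  intro g
  obtain ⟨k, hk⟩ := hKp g
  have h2 := hD ⟨C.pow_mem g.2 _, hk⟩
  obtain ⟨l, hl⟩ := hUp ⟨_, h2⟩
  have h3 : ((g : G) ^ p ^ k) ^ p ^ l = 1 := congrArg Subtype.val hl
  exact ⟨k + l, Subtype.ext (by rw [pow_add, pow_mul]; exact h3)⟩

theorem T_step5 {p : ℕ} [hp : Fact p.Prime] {G : Type*} [Group G] [Finite G] (h : TH p G)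
    (U : Subgroup G) [U.Normal] (hUp : IsPGroup p U) (hCU : Subgroup.centralizer (U : Set G) ≤ U)
    (ih : ∀ L : Subgroup G, L ≠ ⊤ → TH p L → PNil p L) (P : Sylow p G) (L : Subgroup G)
    (hL : (P : Subgroup G) ≤ L) : L = ⊤ ∨ L = P := by
  by_cases hLt : L = ⊤
  · exact Or.inl hLt
  right
  have hUP : U ≤ P := by
    rw [← P.3 (P.2.to_sup_of_normal_right hUp) le_sup_left]; exact le_sup_right
  have hTL : TH p L := by
    refine ⟨P.subtype hL, fun X hX hne => ?_⟩
    apply pnil_normalizer_map L.subtype L.subtype_injective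
    apply h.all P
    · have := hX.map L.subtype (fun x _ hx => L.subtype_injective (by rw [hx, map_one]))
      rw [show ((P.subtype hL : Sylow p L) : Subgroup L) = (P : Subgroup G).subgroupOf L from rfl,
        Subgroup.subgroupOf_map_subtype, inf_eq_left.2 hL] at this
      exact this
    · rwa [Ne, Subgroup.map_eq_bot_iff_of_injective _ L.subtype_injective]
  obtain ⟨N, hN, hNc, hNp⟩ := ih L hLt hTL
  have hNU : ∀ n ∈ N, (n : G) ∈ U := by
    intro n hn
    apply hCU
    rw [Subgroup.mem_centralizer_iff]
    intro u hu
    have hdis : Disjoint (U.subgroupOf L) N := by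
      rw [Subgroup.disjoint_def]
      intro x hx hx'
      exact pgroup_inf_coprime (hUp.comap_of_injective _ L.subtype_injective) hNc x hx hx'
    have := Subgroup.commute_of_normal_of_disjoint (U.subgroupOf L) N inferInstance inferInstance hdis ⟨u, hL (hUP hu)⟩ n hu hn
    exact congrArg Subtype.val this
  refine P.3 ?_ hL
  intro g
  obtain ⟨k, hk⟩ := hNp g
  obtain ⟨l, hl⟩ := hUp ⟨_, hNU _ hk⟩
  have h3 : ((g : G) ^ p ^ k) ^ p ^ l = 1 := congrArg Subtype.val hl
  exact ⟨k + l, Subtype.ext (by rw [pow_add, pow_mul]; exact h3)⟩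
end

section
/-- elements of exponent `p` in the center -/
def OmegaZ (p : ℕ) {G : Type*} [Group G] (U : Subgroup G) : Subgroup G where
  carrier := {z | z ∈ U ∧ (∀ u ∈ U, z * u = u * z) ∧ z ^ p = 1}
  one_mem' := ⟨U.one_mem, by simp, by simp⟩
  mul_mem' := by
    rintro a b ⟨ha, hac, hap⟩ ⟨hb, hbc, hbp⟩
    refine ⟨U.mul_mem ha hb, fun u hu => ?_, ?_⟩
    · rw [mul_assoc, hbc u hu, ← mul_assoc, hac u hu, mul_assoc]
    · rw [Commute.mul_pow (hac b hb), hap, hbp, one_mul]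
  inv_mem' := by
    rintro a ⟨ha, hac, hap⟩
    refine ⟨U.inv_mem ha, fun u hu => ?_, ?_⟩
    · have : Commute a u := hac u hu
      exact this.inv_left
    · rw [inv_pow, hap, inv_one]

theorem mem_OmegaZ {p : ℕ} {G : Type*} [Group G] {U : Subgroup G} {z : G} :
    z ∈ OmegaZ p U ↔ z ∈ U ∧ (∀ u ∈ U, z * u = u * z) ∧ z ^ p = 1 := Iff.rfl

theorem OmegaZ_charIn {p : ℕ} {G : Type*} [Group G] (U : Subgroup G) : CharIn (OmegaZ p U) U := by
  refine ⟨fun x hx => hx.1, ?_⟩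
  rintro φ ⟨x, hxU⟩ ⟨hx1, hx2, hx3⟩
  refine ⟨(φ _).2, fun u hu => ?_, ?_⟩
  · obtain ⟨y, hy⟩ := φ.surjective ⟨u, hu⟩
    have h1 : (⟨x, hxU⟩ : U) * y = y * ⟨x, hxU⟩ := Subtype.ext (hx2 y y.2)
    have h2 := congrArg (fun z => ((φ z : U) : G)) h1
    simpa [map_mul, hy] using h2
  · have h1 : (⟨x, hxU⟩ : U) ^ p = 1 := Subtype.ext hx3
    have h2 : φ ⟨x, hxU⟩ ^ p = 1 := by rw [← map_pow, h1, map_one]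
    exact congrArg Subtype.val h2

theorem OmegaZ_normal {p : ℕ} {G : Type*} [Group G] (U : Subgroup G) [U.Normal] : (OmegaZ p U).Normal := by
  rw [← Subgroup.normalizer_eq_top_iff, eq_top_iff, ← Subgroup.normalizer_eq_top_iff.2 (inferInstance : U.Normal)]
  exact (OmegaZ_charIn U).normalizer_le

theorem OmegaZ_ne_bot {p : ℕ} [hp : Fact p.Prime] {G : Type*} [Group G] [Finite G] {U : Subgroup G} (hU : IsPGroup p U)
    (hne : U ≠ ⊥) : OmegaZ p U ≠ ⊥ := by
  have := (Subgroup.nontrivial_iff_ne_bot U).2 hne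
  have hc := hU.center_nontrivial
  have hpd : p ∣ Nat.card (Subgroup.center U) := by
    obtain ⟨n, hn, e⟩ := (IsPGroup.nontrivial_iff_card (hU.to_subgroup _)).1 hc
    rw [e]; exact dvd_pow_self p hn.ne'
  obtain ⟨⟨⟨c, hcU⟩, hcc⟩, ho⟩ := exists_prime_orderOf_dvd_card' p hpd
  intro h0
  have h1 : c ∈ OmegaZ p U := by
    refine ⟨hcU, fun u hu => ?_, ?_⟩
    · exact (congrArg Subtype.val (Subgroup.mem_center_iff.1 hcc ⟨u, hu⟩)).symm
    · have := pow_orderOf_eq_one (⟨⟨c, hcU⟩, hcc⟩ : Subgroup.center U)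
      rw [ho] at this
      exact congrArg (fun x : Subgroup.center U => ((x : U) : G)) this
  rw [h0, Subgroup.mem_bot] at h1
  subst h1
  have : orderOf (1 : Subgroup.center U) = p := ho
  rw [orderOf_one] at this
  exact hp.out.one_lt.ne this

/-- elementary abelian -/
def ElemAb (p : ℕ) {G : Type*} [Group G] (E : Subgroup G) : Prop :=
  (∀ x ∈ E, ∀ y ∈ E, x * y = y * x) ∧ ∀ x ∈ E, x ^ p = 1

theorem ElemAb.map {p : ℕ} {G K : Type*} [Group G] [Group K] {E : Subgroup G} (h : ElemAb p E) (f : G →* K) :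
    ElemAb p (E.map f) := by
  constructor
  · rintro _ ⟨x, hx, rfl⟩ _ ⟨y, hy, rfl⟩
    rw [← map_mul, h.1 x hx y hy, map_mul]
  · rintro _ ⟨x, hx, rfl⟩
    rw [← map_pow, h.2 x hx, map_one]

/-- maximal elementary abelian -/
def MaxElem (p : ℕ) {G : Type*} [Group G] (P E : Subgroup G) : Prop :=
  E ≤ P ∧ ElemAb p E ∧ ∀ E' ≤ P, ElemAb p E' → Nat.card E' ≤ Nat.card E

theorem J_charIn (p : ℕ) {G : Type*} [Group G] (P : Subgroup G) : CharIn (sSup {E | MaxElem p P E}) P := by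
  set J := sSup {E | MaxElem p P E}
  have hJP : J ≤ P := sSup_le fun E hE => hE.1
  refine ⟨hJP, ?_⟩
  intro φ
  have h1 : J ≤ ((J.subgroupOf P).comap φ.toMonoidHom).map P.subtype := by
    apply sSup_le
    intro E hE
    set E' := ((E.subgroupOf P).map φ.toMonoidHom).map P.subtype
    have hE' : MaxElem p P E' := by
      have hEe : ElemAb p (E.subgroupOf P) := ⟨fun x hx y hy => Subtype.ext (hE.2.1.1 x hx y hy),
        fun x hx => Subtype.ext (hE.2.1.2 x hx)⟩
      refine ⟨?_, (hEe.map _).map _, ?_⟩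
      · rintro _ ⟨x, _, rfl⟩; exact x.2
      · intro E2 h2 h3
        have hc : Nat.card E' = Nat.card E := by
          rw [Subgroup.card_map_of_injective P.subtype_injective, Subgroup.card_map_of_injective φ.injective]
          exact Nat.card_congr (Subgroup.subgroupOfEquivOfLe hE.1).toEquiv
        rw [hc]; exact hE.2.2 E2 h2 h3
    intro x hx
    refine ⟨⟨x, hE.1 hx⟩, ?_, rfl⟩
    change ((φ ⟨x, hE.1 hx⟩ : P) : G) ∈ J
    exact (le_sSup (show E' ∈ {E | MaxElem p P E} from hE')) ⟨_, ⟨⟨x, hE.1 hx⟩, hx, rfl⟩, rfl⟩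
  intro x hx
  obtain ⟨y, hy, e⟩ := h1 hx
  have : y = x := Subtype.ext e
  rw [← this]; exact hy

theorem T_core {p : ℕ} [hp : Fact p.Prime] (hp2 : p ≠ 2) {G : Type*} [Group G] [Finite G] (h : TH p G)
    (h1 : ∀ M : Subgroup G, M.Normal → (Nat.card M).Coprime p → M = ⊥)
    (U : Subgroup G) [hUn : U.Normal] (hUp : IsPGroup p U) (hUne : U ≠ ⊥)
    (hUmax : ∀ W : Subgroup G, W.Normal → IsPGroup p W → W ≤ U) (hq : PNil p (G ⧸ U))
    (ih : ∀ L : Subgroup G, L ≠ ⊤ → TH p L → PNil p L) : PNil p G := by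
  by_contra hnot
  obtain ⟨P⟩ : Nonempty (Sylow p G) := inferInstance
  have hUP : U ≤ P := by
    rw [← P.3 (P.2.to_sup_of_normal_right hUp) le_sup_left]; exact le_sup_right
  obtain ⟨K', hK'n, hK'c, hK'p⟩ := hq
  have hπ := QuotientGroup.mk'_surjective U
  set π := QuotientGroup.mk' U with hπd
  have hker : π.ker = U := QuotientGroup.ker_mk' U
  set K := K'.comap π with hK
  have hKn : K.Normal := hK'n.comap π
  have hUK : U ≤ K := by rw [← hker]; exact Subgroup.ker_le_comap π K'
  have hmapK : K.map π = K' := Subgroup.map_comap_eq_self_of_surjective hπ K'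
  have hrel : (U.relIndex K).Coprime p := by
    rw [← hker, Subgroup.relIndex_ker, hmapK]; exact hK'c
  have hKp : ∀ g : G, ∃ k : ℕ, g ^ (p ^ k) ∈ K := by
    intro g
    obtain ⟨k, hk⟩ := hK'p g
    exact ⟨k, hk⟩
  have hCU := T_step4 h1 U K hUp hUmax hrel hKp
  have h5 := T_step5 h U hUp hCU ih P
  have hKP' := sup_sylow_eq_top K' hK'p (P.mapSurjective hπ)
  have hK'comm := T_step6 K' hK'c (P.mapSurjective hπ) hKP' (by
    intro L hL
    rw [Sylow.coe_mapSurjective] at hL ⊢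
    rcases h5 (L.comap π) (Subgroup.map_le_iff_le_comap.1 hL) with e | e
    · left; rw [← Subgroup.map_comap_eq_self_of_surjective hπ L, e, Subgroup.map_top_of_surjective _ hπ]
    · right; rw [← Subgroup.map_comap_eq_self_of_surjective hπ L, e])
  have hchar : ∀ X : Subgroup G, CharIn X P → X ≠ ⊥ → ¬ X.Normal := by
    intro X hX hXne hn
    have h2 := h.all P X hX hXne
    rw [Subgroup.normalizer_eq_top_iff.2 hn] at h2
    exact hnot (h2.of_injective (Subgroup.topEquiv (G := G)).symm.toMonoidHom (Subgroup.topEquiv (G := G)).symm.injective)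
  -- step 7
  set Z := OmegaZ p U with hZ
  have hZn : Z.Normal := OmegaZ_normal U
  have hPne : (P : Subgroup G) ≠ ⊥ := by
    intro h0; rw [h0, le_bot_iff] at hUP; exact hUne hUP
  have hZ0Z : OmegaZ p (P : Subgroup G) ≤ Z := by
    rintro z ⟨hz1, hz2, hz3⟩
    refine ⟨hCU (Subgroup.mem_centralizer_iff.2 fun u hu => (hz2 u (hUP hu)).symm), fun u hu => hz2 u (hUP hu), hz3⟩
  have hZ0ne := OmegaZ_ne_bot P.2 hPne
  have hZ0N : Subgroup.normalizer (OmegaZ p (P : Subgroup G) : Set G) = P := by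
    rcases h5 _ (Subgroup.le_normalizer.trans (OmegaZ_charIn (p := p) (P : Subgroup G)).normalizer_le) with e | e
    · exact absurd (Subgroup.normalizer_eq_top_iff.1 e) (hchar _ (OmegaZ_charIn _) hZ0ne)
    · exact e
  have hCZ : ∀ g : G, (∀ z ∈ Z, g * z = z * g) → g ∈ U := by
    have h2 : Subgroup.centralizer (Z : Set G) ≤ U := by
      apply hUmax _ Subgroup.normal_centralizer
      apply P.2.to_le
      rw [← hZ0N]
      apply le_normalizer_of_conj
      intro g hg x hx
      rw [← Subgroup.mem_centralizer_iff.1 hg x (hZ0Z hx)]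
      simpa using hx
    intro g hg
    apply h2
    exact Subgroup.mem_centralizer_iff.2 fun z hz => (hg z hz).symm
  -- step 8
  obtain ⟨E, hE, hEU⟩ : ∃ E, MaxElem p (P : Subgroup G) E ∧ ¬ E ≤ U := by
    by_contra hall
    push Not at hall
    refine hchar _ (J_charIn p (P : Subgroup G)) ?_ ?_
    · obtain ⟨E, hE, hEmax⟩ := Set.exists_max_image {E | E ≤ (P : Subgroup G) ∧ ElemAb p E} (fun E => Nat.card E)
        (Set.toFinite _) ⟨⊥, bot_le, by
          constructor
          · intro x hx y hy
            rw [Subgroup.mem_bot] at hx hy; rw [hx, hy]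
          · intro x hx; rw [Subgroup.mem_bot] at hx; rw [hx, one_pow]⟩
      have hEm : MaxElem p (P : Subgroup G) E := ⟨hE.1, hE.2, fun E' h1 h2 => hEmax E' ⟨h1, h2⟩⟩
      intro h0
      have h2 : E ≤ ⊥ := h0 ▸ le_sSup (show E ∈ {E | MaxElem p (P : Subgroup G) E} from hEm)
      have h3 := hEm.2.2 (OmegaZ p (P : Subgroup G)) (fun x hx => hx.1) ⟨fun x hx y hy => hx.2.1 y hy.1, fun x hx => hx.2.2⟩
      rw [le_bot_iff.1 h2, Subgroup.card_bot] at h3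
      apply hZ0ne
      rw [← Subgroup.card_eq_one]
      exact le_antisymm h3 Nat.card_pos
    · apply normal_of_conj
      intro g
      have h2 : sSup {E | MaxElem p (P : Subgroup G) E} ≤ (sSup {E | MaxElem p (P : Subgroup G) E}).comap (MulAut.conj g).toMonoidHom := by
        apply sSup_le
        intro E hE
        rw [← Subgroup.map_le_iff_le_comap]
        apply le_sSup
        refine ⟨?_, hE.2.1.map _, ?_⟩
        · refine le_trans ?_ hUP
          rintro _ ⟨x, hx, rfl⟩
          exact hUn.conj_mem x (hall E hE hx) g
        · intro E' h3 h4
          rw [Subgroup.card_map_of_injective (MulAut.conj g).injective]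
          exact hE.2.2 E' h3 h4
      exact fun x hx => h2 hx
  obtain ⟨hEP, hEe, hEmax⟩ := hE
  -- step 9
  let φ : G →* MulAut Z := MulAut.conjNormal
  have hφ : ∀ g z, ((φ g z : Z) : G) = g * z * g⁻¹ := MulAut.conjNormal_apply
  have hφker : φ.ker = U := by
    ext g
    rw [MonoidHom.mem_ker]
    constructor
    · intro hg
      apply hCZ
      intro z hz
      have := hφ g ⟨z, hz⟩
      rw [hg] at this
      have h2 : z = g * z * g⁻¹ := this
      rw [eq_mul_inv_iff_mul_eq] at h2
      exact h2.symm
    · intro hg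
      ext z
      rw [hφ, ← z.2.2.1 g hg]
      simp
  have hZcomm : ∀ x ∈ Z, ∀ y ∈ Z, x * y = y * x := fun x hx y hy => hx.2.1 y hy.1
  let : CommGroup Z := commGroupOf Z hZcomm
  have hKU : ∀ x ∈ K, ∀ y ∈ K, φ x * φ y = φ y * φ x := by
    intro x hx y hy
    have h2 : π (x * y) = π (y * x) := by rw [map_mul, map_mul]; exact hK'comm _ hx _ hy
    rw [← map_mul, ← map_mul]
    have h3 : (y * x)⁻¹ * (x * y) ∈ φ.ker := by
      rw [hφker, ← hker, MonoidHom.mem_ker, map_mul, h2, ← map_mul, inv_mul_cancel, map_one]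
    rw [MonoidHom.mem_ker, map_mul, map_inv, inv_mul_eq_one] at h3
    exact h3.symm
  have hkey := claimC hp2 (Z := Z) (Γ := MulAut Z) (fun z => Subtype.ext z.2.2.2) (K.map φ)
    (by rintro _ ⟨x, hx, rfl⟩ _ ⟨y, hy, rfl⟩; exact hKU x hx y hy)
    (by rw [← Subgroup.relIndex_ker, hφker]; exact hrel) _ (E.map φ) rfl (hEe.map φ).2 (hEe.map φ).1
    (by
      rintro _ ⟨x, hx, rfl⟩ _ ⟨y, hy, rfl⟩
      exact ⟨x * y * x⁻¹, hKn.conj_mem y hy x, by simp⟩)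
    (by
      rintro _ ⟨e, he, rfl⟩ hcomm
      change e ∈ φ.ker
      rw [hφker]
      let W' := ((P : Subgroup G).map π) ⊓ Subgroup.centralizer (K' : Set (G ⧸ U))
      have hCn : (Subgroup.centralizer (K' : Set (G ⧸ U))).Normal := Subgroup.normal_centralizer
      have hW'n : W'.Normal := by
        rw [← Subgroup.normalizer_eq_top_iff, eq_top_iff, ← hKP']
        apply sup_le
        · apply le_normalizer_of_conj
          intro g hg x hx
          have := Subgroup.mem_centralizer_iff.1 hx.2 g hg
          rw [this]
          simpa using hx
        · apply le_normalizer_of_conj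
          intro g hg x hx
          exact ⟨Subgroup.mul_mem _ (Subgroup.mul_mem _ hg hx.1) (Subgroup.inv_mem _ hg), hCn.conj_mem x hx.2 g⟩
      have hWU : W'.comap π ≤ U := by
        apply hUmax _ (hW'n.comap π)
        apply P.2.to_le
        have h2 : W'.comap π ≤ ((P : Subgroup G).map π).comap π := Subgroup.comap_mono inf_le_left
        rwa [Subgroup.comap_map_eq, hker, sup_eq_left.2 hUP] at h2
      apply hWU
      refine ⟨⟨e, hEP he, rfl⟩, ?_⟩
      change _ ∈ Subgroup.centralizer _
      rw [Subgroup.mem_centralizer_iff]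
      intro k' hk'
      obtain ⟨k, rfl⟩ := hπ k'
      have h2 := hcomm (φ k) ⟨k, hk', rfl⟩
      have h3 : (k * e)⁻¹ * (e * k) ∈ φ.ker := by
        rw [MonoidHom.mem_ker, map_mul, map_inv, map_mul, map_mul, h2, inv_mul_cancel]
      rw [hφker, ← hker, MonoidHom.mem_ker, map_mul, map_inv, inv_mul_eq_one, map_mul, map_mul] at h3
      exact h3)
  have hAne : E.map φ ≠ ⊥ := by
    rw [Ne, Subgroup.map_eq_bot_iff, hφker]; exact hEU
  have hlt := hkey.2 hAne
  set f := Nat.card (autFixed (G := Z) (E.map φ))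
  have e1 : Nat.card (E.map φ) * Nat.card (E ⊓ U : Subgroup G) = Nat.card E := by
    rw [← Subgroup.relIndex_ker, hφker, ← Subgroup.inf_relIndex_left, mul_comm]
    have := Subgroup.relIndex_mul_relIndex ⊥ (E ⊓ U) E bot_le inf_le_left
    rwa [Subgroup.relIndex_bot_left, Subgroup.relIndex_bot_left] at this
  have e2 := card_sup_mul_card_inf (E ⊓ U) Z Subgroup.le_normalizer_of_normal
  have e3 : Nat.card (E ⊓ U ⊓ Z : Subgroup G) ≤ f := by
    have hle : (E ⊓ U ⊓ Z).subgroupOf Z ≤ autFixed (G := Z) (E.map φ) := by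
      rintro z ⟨⟨hzE, _⟩, _⟩
      rw [mem_autFixed]
      rintro _ ⟨e, he, rfl⟩
      apply Subtype.ext
      change ((φ e z : Z) : G) = z
      rw [hφ, hEe.1 e he z hzE]; simp
    have := Subgroup.card_le_of_le hle
    rwa [Nat.card_congr (Subgroup.subgroupOfEquivOfLe (inf_le_right : E ⊓ U ⊓ Z ≤ Z)).toEquiv] at this
  have e4 : Nat.card (E ⊓ U ⊔ Z : Subgroup G) ≤ Nat.card E := by
    apply hEmax
    · exact sup_le (inf_le_left.trans hEP) (le_trans (fun z hz => hz.1) hUP)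
    · have hd : ∀ x ∈ E ⊓ U ⊔ Z, ∃ a ∈ E ⊓ U, ∃ b ∈ Z, a * b = x := by
        intro x hx
        exact (mem_sup_norm Subgroup.le_normalizer_of_normal).1 hx
      constructor
      · intro x hx y hy
        obtain ⟨a, ha, b, hb, rfl⟩ := hd x hx
        obtain ⟨c, hc, d, hd, rfl⟩ := hd y hy
        have c1 : Commute a c := hEe.1 a ha.1 c hc.1
        have c2 : Commute b c := hb.2.1 c hc.2
        have c3 : Commute d a := hd.2.1 a ha.2
        have c4 : Commute b d := hb.2.1 d hd.1
        exact ((c1.mul_left c2).mul_right (c3.symm.mul_left c4))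
      · intro x hx
        obtain ⟨a, ha, b, hb, rfl⟩ := hd x hx
        have c1 : Commute b a := hb.2.1 a ha.2
        rw [c1.symm.mul_pow, hEe.2 a ha.1, hb.2.2, one_mul]
  have e5 : Nat.card (E ⊓ U : Subgroup G) * Nat.card Z ≤ Nat.card (E ⊓ U : Subgroup G) * (Nat.card (E.map φ) * f) := by
    rw [← e2, mul_left_comm, ← mul_assoc, e1]
    exact Nat.mul_le_mul e4 e3
  have e6 := Nat.le_of_mul_le_mul_left e5 Nat.card_pos
  omega

universe u in
theorem thompsonT {p : ℕ} [hp : Fact p.Prime] (hp2 : p ≠ 2) (n : ℕ) : ∀ (G : Type u) [Group G] [Finite G],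
    Nat.card G = n → TH p G → PNil p G := by
  induction n using Nat.strong_induction_on with
  | _ n ih =>
  intro G _ _ hn hG
  by_contra hnot
  have ih' : ∀ (L : Type u) [Group L] [Finite L], Nat.card L < Nat.card G → TH p L → PNil p L :=
    fun L _ _ hlt hL => ih _ (hn ▸ hlt) L rfl hL
  obtain ⟨h1, U, hUn, hUp, hUne, hUmax, hq⟩ := hG.reduce ih' hnot
  apply hnot
  apply T_core hp2 hG h1 U hUp hUne hUmax hq
  intro L hL hT
  apply ih' L _ hT
  exact lt_of_le_of_ne (Subgroup.card_le_card_group _) (fun e => hL (Subgroup.eq_top_of_card_eq _ e))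
end

section
universe u v in
theorem coset_lemma {G : Type v} [Group G] [Finite G] (n : ℕ) : ∀ (D : Type u) [Group D] [Finite D]
    [Group.IsNilpotent D] [MulDistribMulAction D G], Nat.card D = n → ∀ N : Subgroup G,
    (∀ d : D, ∀ x ∈ N, d • x ∈ N) → (Nat.card D).Coprime (Nat.card N) → ∀ g : G,
    (∀ d : D, g⁻¹ * d • g ∈ N) → ∃ x ∈ N, ∀ d : D, d • (g * x) = g * x := by
  induction n using Nat.strong_induction_on with
  | _ n ih =>
  intro D _ _ _ _ hn N hN hc g hg
  by_cases hD : Nat.card D = 1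
  · refine ⟨1, N.one_mem, fun d => ?_⟩
    have := (Nat.card_eq_one_iff_unique.1 hD).1
    rw [Subsingleton.elim d 1, one_smul]
  obtain ⟨p, hp, hpd⟩ := Nat.exists_prime_and_dvd hD
  have := Fact.mk hp
  obtain ⟨M, hMn, hMc, hMp⟩ := PNil.of_nilpotent p hp D
  have hMlt : Nat.card M < n := by
    rw [← hn]
    refine lt_of_le_of_ne (Subgroup.card_le_card_group _) fun e => ?_
    rw [e] at hMc
    exact (Nat.Prime.coprime_iff_not_dvd hp).1 hMc.symm hpd
  obtain ⟨x0, hx0, hfix⟩ := ih _ hMlt M rfl N (fun d x hx => hN d x hx)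
    (hc.coprime_dvd_left (Subgroup.card_subgroup_dvd_card M)) g (fun d => hg d)
  have hfix' : ∀ m ∈ M, m • (g * x0) = g * x0 := fun m hm => hfix ⟨m, hm⟩
  let Ω : SubMulAction D G :=
    { carrier := {y | g⁻¹ * y ∈ N ∧ ∀ m ∈ M, m • y = y}
      smul_mem' := by
        rintro d y ⟨hy1, hy2⟩
        refine ⟨?_, fun m hm => ?_⟩
        · have h1 := N.mul_mem (hg d) (hN d _ hy1)
          rw [smul_mul', smul_inv'] at h1
          simpa [mul_assoc] using h1
        · have h1 := hy2 (d⁻¹ * m * d) (by simpa using hMn.conj_mem m hm d⁻¹)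
          rw [← mul_smul, show m * d = d * (d⁻¹ * m * d) by group, mul_smul, h1] }
  let C : Subgroup G := autFixed (G := G) M ⊓ N
  have hcard : Nat.card Ω = Nat.card C := by
    refine Nat.card_congr
      { toFun := fun y => ⟨(g * x0)⁻¹ * y, ?_, ?_⟩
        invFun := fun c => ⟨g * x0 * c, ?_, ?_⟩
        left_inv := fun y => Subtype.ext (by simp [mul_assoc])
        right_inv := fun c => Subtype.ext (by simp [mul_assoc]) }
    · change ∀ m ∈ M, _
      intro m hm
      rw [smul_mul', smul_inv', hfix' m hm, y.2.2 m hm]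
    · change _ ∈ N
      have := N.mul_mem (N.inv_mem hx0) y.2.1
      simpa [mul_assoc] using this
    · have := N.mul_mem hx0 c.2.2
      simpa [mul_assoc] using this
    · intro m hm
      rw [smul_mul', hfix' m hm, c.2.1 m hm]
  have hnd : ¬ p ∣ Nat.card Ω := by
    rw [hcard]
    intro h
    have h1 := h.trans (Subgroup.card_dvd_of_le (inf_le_right : C ≤ N))
    have := Nat.eq_one_of_dvd_coprimes hc hpd h1
    exact hp.one_lt.ne' this
  obtain ⟨S⟩ : Nonempty (Sylow p D) := inferInstance
  obtain ⟨y, hy⟩ := S.2.nonempty_fixed_point_of_prime_not_dvd_card Ω hnd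
  refine ⟨g⁻¹ * y, y.2.1, fun d => ?_⟩
  rw [mul_inv_cancel_left]
  have hd : d ∈ M ⊔ S := by rw [sup_sylow_eq_top M hMp S]; trivial
  obtain ⟨m, hm, s, hs, rfl⟩ := Subgroup.mem_sup_of_normal_left.1 hd
  have h2 : s • (y : G) = y := congrArg Subtype.val (hy ⟨s, hs⟩)
  rw [mul_smul, h2, y.2.2 m hm]

theorem smul_conj_sylow {r : ℕ} {A G : Type*} [Group A] [Group G] [MulDistribMulAction A G] (a : A) (g : G)
    (P : Sylow r G) : a • (g • P) = (a • g) • (a • P) := by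
  apply Sylow.ext
  ext x
  rw [Sylow.pointwise_smul_def, Subgroup.mem_pointwise_smul_iff_inv_smul_mem, Sylow.smul_def, Sylow.smul_def]
  rw [Sylow.pointwise_smul_def, Sylow.pointwise_smul_def, mem_conj_smul, mem_conj_smul, 
    Sylow.pointwise_smul_def, Subgroup.mem_pointwise_smul_iff_inv_smul_mem]
  simp [smul_mul', smul_inv']

theorem sylow_conj_fixed {r : ℕ} [Fact r.Prime] {D G : Type*} [Group D] [Finite D] [Group.IsNilpotent D] [Group G] [Finite G] 
    [MulDistribMulAction D G] (hc : (Nat.card D).Coprime (Nat.card G)) (P Q : Sylow r G)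
    (hP : ∀ d : D, d • P = P) (hQ : ∀ d : D, d • Q = Q) : ∃ g : G, (∀ d : D, d • g = g) ∧ g • P = Q := by
  obtain ⟨g, hg⟩ := MulAction.exists_smul_eq G P Q
  obtain ⟨x, hx, hfix⟩ := coset_lemma _ D rfl (Subgroup.normalizer (P : Set G)) (by
    intro d x hx
    rw [← Sylow.smul_eq_iff_mem_normalizer] at hx ⊢
    nth_rw 1 [← hP d]
    rw [← smul_conj_sylow, hx, hP]) (hc.coprime_dvd_right (Subgroup.card_subgroup_dvd_card _)) g (by
    intro d
    rw [← Sylow.smul_eq_iff_mem_normalizer, mul_smul]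
    nth_rw 1 [← hP d]
    rw [← smul_conj_sylow, hg, hQ, ← hg, inv_smul_smul])
  refine ⟨g * x, hfix, ?_⟩
  rw [← Sylow.smul_eq_iff_mem_normalizer] at hx
  rw [mul_smul, hx, hg]

universe u v in
theorem glauberman {r : ℕ} [Fact r.Prime] {G : Type v} [Group G] [Finite G] (n : ℕ) : ∀ (D : Type u) [Group D] [Finite D]
    [Group.IsNilpotent D] [MulDistribMulAction D G], Nat.card D = n → (Nat.card D).Coprime (Nat.card G) →
    ∃ P : Sylow r G, ∀ d : D, d • P = P := by
  induction n using Nat.strong_induction_on with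
  | _ n ih =>
  intro D _ _ _ _ hn hc
  by_cases hD : Nat.card D = 1
  · refine ⟨Classical.arbitrary _, fun d => ?_⟩
    have := (Nat.card_eq_one_iff_unique.1 hD).1
    rw [Subsingleton.elim d 1, one_smul]
  obtain ⟨p, hp, hpd⟩ := Nat.exists_prime_and_dvd hD
  have := Fact.mk hp
  obtain ⟨M, hMn, hMc, hMp⟩ := PNil.of_nilpotent p hp D
  have hMlt : Nat.card M < n := by
    rw [← hn]
    refine lt_of_le_of_ne (Subgroup.card_le_card_group _) fun e => ?_
    rw [e] at hMc
    exact (Nat.Prime.coprime_iff_not_dvd hp).1 hMc.symm hpd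
  have hcM := hc.coprime_dvd_left (Subgroup.card_subgroup_dvd_card M)
  obtain ⟨P0, hP0⟩ := ih _ hMlt M rfl hcM
  let Ω : SubMulAction D (Sylow r G) :=
    { carrier := {y | ∀ m ∈ M, m • y = y}
      smul_mem' := by
        intro d y hy2 m hm
        have h1 := hy2 (d⁻¹ * m * d) (by simpa using hMn.conj_mem m hm d⁻¹)
        rw [← mul_smul, show m * d = d * (d⁻¹ * m * d) by group, mul_smul, h1] }
  let C : Subgroup G := autFixed (G := G) M
  have hcard : Nat.card Ω = Nat.card (MulAction.orbit C P0) := by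
    have : (Ω : Set (Sylow r G)) = MulAction.orbit C P0 := by
      ext Q
      constructor
      · intro hQ
        obtain ⟨g, hg, e⟩ := sylow_conj_fixed hcM P0 Q hP0 (fun d => hQ d d.2)
        exact ⟨⟨g, fun m hm => hg ⟨m, hm⟩⟩, e⟩
      · rintro ⟨⟨g, hg⟩, rfl⟩ m hm
        change m • (g • P0) = g • P0
        rw [smul_conj_sylow, hg m hm]
        exact congrArg _ (hP0 ⟨m, hm⟩)
    exact Nat.card_congr (Equiv.setCongr this)
  have hnd : ¬ p ∣ Nat.card Ω := by
    rw [hcard]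
    intro h
    have h0 : Nat.card (MulAction.orbit C P0) ∣ Nat.card C := by
      rw [Nat.card_congr (MulAction.orbitEquivQuotientStabilizer C P0)]
      exact Subgroup.card_quotient_dvd_card _
    have h1 := h.trans (h0.trans (Subgroup.card_subgroup_dvd_card C))
    have := Nat.eq_one_of_dvd_coprimes hc hpd h1
    exact hp.one_lt.ne' this
  obtain ⟨S⟩ : Nonempty (Sylow p D) := inferInstance
  obtain ⟨y, hy⟩ := S.2.nonempty_fixed_point_of_prime_not_dvd_card Ω hnd
  refine ⟨y, fun d => ?_⟩
  have hd : d ∈ M ⊔ S := by rw [sup_sylow_eq_top M hMp S]; trivial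
  obtain ⟨m, hm, s, hs, rfl⟩ := Subgroup.mem_sup_of_normal_left.1 hd
  have h2 : s • (y : Sylow r G) = y := congrArg Subtype.val (hy ⟨s, hs⟩)
  rw [mul_smul, h2, y.2 m hm]

theorem glauberman_inv {r : ℕ} [Fact r.Prime] {A G : Type*} [Group A] [Finite A] [Group G] [Finite G] 
    [MulDistribMulAction A G] (D : Subgroup A) [hDn : D.Normal] [Group.IsNilpotent D]
    (hc : (Nat.card D).Coprime (Nat.card G)) (hfix : autFixed (G := G) D = ⊥) :
    ∃ P : Sylow r G, ∀ a : A, a • P = P := by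
  obtain ⟨P, hP⟩ := glauberman (r := r) (G := G) _ D rfl hc
  refine ⟨P, fun a => ?_⟩
  obtain ⟨g, hg, e⟩ := sylow_conj_fixed hc P (a • P) hP (fun d => by
    have h1 := hP ⟨a⁻¹ * d * a, by simpa using hDn.conj_mem d d.2 a⁻¹⟩
    change (a⁻¹ * d * a) • P = P at h1
    change (d : A) • (a • P) = a • P
    rw [← mul_smul, show (d : A) * a = a * (a⁻¹ * d * a) by group, mul_smul, h1])
  have : g ∈ autFixed (G := G) D := fun d hd => hg ⟨d, hd⟩
  rw [hfix, Subgroup.mem_bot] at this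
  rw [← e, this, one_smul]
end

section
theorem partition_lemma {A V : Type*} [Group A] [CommGroup V] [MulDistribMulAction A V] (F H : Subgroup A)
    [Fintype F] [Fintype H] (hnorm : ∀ h ∈ H, ∀ f ∈ F, h * f * h⁻¹ ∈ F)
    (hfrob : ∀ h ∈ H, h ≠ 1 → ∀ f ∈ F, h * f * h⁻¹ = f → f = 1)
    (htr : ∀ v : V, ∏ f : F, (f : A) • v = 1) (v : V) :
    v ^ Nat.card F = ∏ x : F, (x : A) • ∏ h : H, (h : A) • (x : A)⁻¹ • v := by
  classical
  simp only [smul_finprod]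
  rw [Finset.prod_comm]
  rw [Finset.prod_eq_single_of_mem (1 : H) (Finset.mem_univ _)]
  · simp [Nat.card_eq_fintype_card]
  · intro h _ hne
    have hne' : (h : A) ≠ 1 := fun e => hne (Subtype.ext e)
    let κ : F → F := fun x => ⟨x * (h * (x : A)⁻¹ * (h : A)⁻¹), F.mul_mem x.2 (hnorm h h.2 _ (F.inv_mem x.2))⟩
    have hinj : Function.Injective κ := by
      intro x y hxy
      have h1 : (x : A) * (h * (x : A)⁻¹ * (h : A)⁻¹) = y * (h * (y : A)⁻¹ * (h : A)⁻¹) := congrArg Subtype.val hxy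
      have h2 := hfrob h h.2 hne' ((y : A)⁻¹ * x) (F.mul_mem (F.inv_mem y.2) x.2) (by
        have h3 : (y : A)⁻¹ * x = (y : A)⁻¹ * (x * (h * (x : A)⁻¹ * (h : A)⁻¹)) * (h * x * (h : A)⁻¹) := by group
        conv_rhs => rw [h3, h1]
        group)
      exact Subtype.ext (inv_mul_eq_one.1 h2).symm
    have hbij := Finite.injective_iff_bijective.1 hinj
    have h2 := htr ((h : A) • v)
    rw [← Equiv.prod_comp (Equiv.ofBijective κ hbij)] at h2
    rw [← h2]
    apply Finset.prod_congr rfl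
    intro x _
    simp only [Equiv.ofBijective_apply, κ, ← mul_smul]
    congr 1
    group

/-- invariance -/
def AInv (A : Type*) {G : Type*} [Group A] [Group G] [MulDistribMulAction A G] (N : Subgroup G) : Prop :=
  ∀ a : A, ∀ n ∈ N, a • n ∈ N

section inv
variable {A G : Type*} [Group A] [Group G] [MulDistribMulAction A G]

theorem AInv.mem_iff {N : Subgroup G} (h : AInv A N) (a : A) (g : G) : a • g ∈ N ↔ g ∈ N :=
  ⟨fun hg => by simpa using h a⁻¹ _ hg, h a g⟩

theorem AInv.normalizer {N : Subgroup G} (h : AInv A N) : AInv A (Subgroup.normalizer (N : Set G)) := by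
  intro a n hn
  rw [Subgroup.mem_normalizer_iff] at hn ⊢
  intro x
  rw [← h.mem_iff a⁻¹ x, hn, ← h.mem_iff a]
  simp [smul_mul', smul_inv']

theorem AInv.centralizer {N : Subgroup G} (h : AInv A N) : AInv A (Subgroup.centralizer (N : Set G)) := by
  intro a n hn
  rw [Subgroup.mem_centralizer_iff] at hn ⊢
  intro x hx
  have h1 := congrArg (a • ·) (hn _ (h a⁻¹ x hx))
  simpa [smul_mul'] using h1

theorem AInv.charIn {N X : Subgroup G} (h : AInv A N) (hX : CharIn X N) : AInv A X := by
  intro a x hx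
  let := subMDA N h
  exact hX.2 (MulDistribMulAction.toMulEquiv N a) ⟨x, hX.1 hx⟩ hx

theorem AInv.sylow {r : ℕ} (P : Sylow r G) (h : ∀ a : A, a • P = P) : AInv A (P : Subgroup G) := by
  intro a x hx
  have h2 := Subgroup.smul_mem_pointwise_smul x a (P : Subgroup G) hx
  rw [← Sylow.pointwise_smul_def, h] at h2
  exact h2

/-- quotient action -/
abbrev quotMDA (N : Subgroup G) [N.Normal] (h : AInv A N) : MulDistribMulAction A (G ⧸ N) where
  smul a := QuotientGroup.map N N (MulDistribMulAction.toMonoidHom G a) (fun n hn => h a n hn)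
  one_smul x := by
    obtain ⟨g, rfl⟩ := QuotientGroup.mk_surjective x
    change ((1 : A) • g : G) = (g : G ⧸ N)
    rw [one_smul]
  mul_smul a b x := by
    obtain ⟨g, rfl⟩ := QuotientGroup.mk_surjective x
    change (((a * b) • g : G) : G ⧸ N) = ((a • b • g : G) : G ⧸ N)
    rw [mul_smul]
  smul_mul a x y := map_mul _ x y
  smul_one a := map_one _

end inv

theorem sylow_normal_of_nilpotent {p : ℕ} [hp : Fact p.Prime] {G : Type*} [Group G] [Finite G] [h : Group.IsNilpotent G] (P : Sylow p G) :
    (P : Subgroup G).Normal := by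
  have h1 : Group.IsNilpotent G ↔ ∀ (p : ℕ) (_ : Fact p.Prime) (P : Sylow p G), (P : Subgroup G).Normal :=
    (Group.isNilpotent_of_finite_tfae (G := G)).out 0 3
  exact h1.1 h p hp P

theorem OmegaZ_top_ne_bot {p : ℕ} [hp : Fact p.Prime] {G : Type*} [Group G] [Finite G] [Group.IsNilpotent G]
    (hd : p ∣ Nat.card G) : ∃ z : G, z ≠ 1 ∧ z ^ p = 1 ∧ ∀ g, z * g = g * z := by
  obtain ⟨P⟩ : Nonempty (Sylow p G) := inferInstance
  obtain ⟨N, hN, hNc, hNp⟩ := PNil.of_nilpotent p hp.out G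
  have hPn := sylow_normal_of_nilpotent P
  have h1 := OmegaZ_ne_bot P.2 (P.ne_bot_of_dvd_card hd)
  obtain ⟨⟨z, hz⟩, hzne⟩ := (Subgroup.ne_bot_iff_exists_ne_one).1 h1
  refine ⟨z, fun e => hzne (Subtype.ext e), hz.2.2, fun g => ?_⟩
  have hg : g ∈ N ⊔ P := by rw [sup_sylow_eq_top N hNp P]; trivial
  obtain ⟨n, hn, s, hs, rfl⟩ := Subgroup.mem_sup_of_normal_left.1 hg
  have hdis : Disjoint (P : Subgroup G) N := by
    rw [Subgroup.disjoint_def]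
    intro x hx hx'
    exact pgroup_inf_coprime P.2 hNc x hx hx'
  have c1 : Commute z n := Subgroup.commute_of_normal_of_disjoint _ _ hPn hN hdis z n hz.1 hn
  have c2 : Commute z s := hz.2.1 s hs
  exact c1.mul_right c2

theorem OmegaZ_ne_bot_of_nilpotent {p : ℕ} [hp : Fact p.Prime] {G : Type*} [Group G] [Finite G] (L : Subgroup G) 
    [Group.IsNilpotent L] (hd : p ∣ Nat.card L) : OmegaZ p L ≠ ⊥ := by
  obtain ⟨z, hz, hzp, hzc⟩ := OmegaZ_top_ne_bot (G := L) hd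
  intro h0
  have : (z : G) ∈ OmegaZ p L := ⟨z.2, fun u hu => congrArg Subtype.val (hzc ⟨u, hu⟩), congrArg Subtype.val hzp⟩
  rw [h0, Subgroup.mem_bot] at this
  exact hz (Subtype.ext this)

/-- abelian invariant normal subgroup -/
structure AbInv (A : Type*) {G : Type*} [Group A] [Group G] [MulDistribMulAction A G] (r : ℕ) (V : Subgroup G) : Prop where
  normal : V.Normal
  inv : AInv A V
  comm : ∀ x ∈ V, ∀ y ∈ V, x * y = y * x
  pgroup : IsPGroup r V
  ne_bot : V ≠ ⊥

theorem abInv_of_nilpotent {A G : Type*} [Group A] [Group G] [Finite G] [MulDistribMulAction A G]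
    (N : Subgroup G) [N.Normal] (hN : AInv A N) [Group.IsNilpotent N] (hne : N ≠ ⊥) :
    ∃ (s : ℕ) (V : Subgroup G), s.Prime ∧ AbInv A s V ∧ V ≤ N := by
  obtain ⟨s, hs, hsd⟩ := Nat.exists_prime_and_dvd (n := Nat.card N) (by
    rw [Ne, Subgroup.card_eq_one]; exact hne)
  have := Fact.mk hs
  refine ⟨s, OmegaZ s N, hs, ⟨OmegaZ_normal N, hN.charIn (OmegaZ_charIn N), fun x hx y hy => hx.2.1 y hy.1, 
    fun x => ⟨1, Subtype.ext (by simpa using x.2.2.2)⟩, OmegaZ_ne_bot_of_nilpotent N hsd⟩, fun x hx => hx.1⟩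

theorem lemmaL {A G : Type*} [Group A] [Group G] [Finite G] [MulDistribMulAction A G]
    (hprop : ∀ N : Subgroup G, AInv A N → N ≠ ⊤ → Group.IsNilpotent N)
    {r : ℕ} (hr : r.Prime) (hr2 : r ≠ 2) (R0 : Subgroup G) (hR0 : AInv A R0) (hR0p : IsPGroup r R0) (hR0ne : R0 ≠ ⊥) :
    ∃ (s : ℕ) (V : Subgroup G), s.Prime ∧ AbInv A s V := by
  have := Fact.mk hr
  by_contra hno
  have hnil : ∀ N : Subgroup G, N.Normal → AInv A N → Group.IsNilpotent N → N = ⊥ := by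
    intro N h1 h2 h3
    by_contra hne
    obtain ⟨s, V, hs, hV, _⟩ := abInv_of_nilpotent N h2 hne
    exact hno ⟨s, V, hs, hV⟩
  obtain ⟨R, hR, hmax⟩ := Set.Finite.exists_maximal
    (Set.toFinite {R : Subgroup G | AInv A R ∧ IsPGroup r R ∧ R ≠ ⊥}) ⟨R0, hR0, hR0p, hR0ne⟩
  obtain ⟨hRi, hRp, hRne⟩ := hR
  have hnorm : ∀ X : Subgroup G, AInv A X → IsPGroup r X → X ≠ ⊥ → Group.IsNilpotent (Subgroup.normalizer (X : Set G)) := by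
    intro X hX hXp hXne
    apply hprop _ hX.normalizer
    intro htop
    apply hXne
    have : Group.IsNilpotent X := hXp.isNilpotent
    exact hnil X (Subgroup.normalizer_eq_top_iff.1 htop) hX this
  obtain ⟨P, hRP⟩ := hRp.exists_le_sylow
  have hRP : R = P := by
    rcases eq_or_lt_of_le hRP with e | hlt
    · exact e
    exfalso
    have h1 := exists_normalizer_gt P.2 hlt
    set N := Subgroup.normalizer (R : Set G) with hN
    have : Group.IsNilpotent N := hnorm R hRi hRp hRne
    obtain ⟨T⟩ : Nonempty (Sylow r N) := inferInstance
    have hTn := sylow_normal_of_nilpotent T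
    have hle : ∀ Y : Subgroup G, Y ≤ N → IsPGroup r Y → Y ≤ (T : Subgroup N).map N.subtype := by
      intro Y hYN hY
      have h2 : Y.subgroupOf N ≤ T := by
        have h3 := T.3 (T.2.to_sup_of_normal_left (hY.comap_of_injective _ N.subtype_injective) : 
          IsPGroup r ((T : Subgroup N) ⊔ Y.subgroupOf N : Subgroup N)) le_sup_left
        rw [← h3]; exact le_sup_right
      intro y hy
      exact ⟨⟨y, hYN hy⟩, h2 hy, rfl⟩
    have hTR : (T : Subgroup N).map N.subtype ≤ R := by
      refine hmax ⟨?_, T.2.map _, ?_⟩ (hle R Subgroup.le_normalizer hRp)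
      · have hTc : CharIn ((T : Subgroup N).map N.subtype) N := by
          refine ⟨?_, ?_⟩
          · rintro _ ⟨x, _, rfl⟩; exact x.2
          · rintro φ x ⟨y, hy, e⟩
            have : y = x := Subtype.ext e
            subst this
            have hc := Sylow.characteristic_of_normal T hTn
            refine ⟨φ y, ?_, rfl⟩
            have h4 := hc.fixed φ
            rw [SetLike.mem_coe, ← h4] at hy
            exact hy
        exact hRi.normalizer.charIn hTc
      · intro h0
        apply hRne
        rw [eq_bot_iff, ← h0]
        exact hle R Subgroup.le_normalizer hRp
    exact absurd (h1.trans_le ((hle _ inf_le_left (P.2.to_le inf_le_right)).trans hTR)) (lt_irrefl _)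
  have hTH : TH r G := by
    refine ⟨P, fun X hX hXne => ?_⟩
    rw [← hRP] at hX
    have := hnorm X (hRi.charIn hX) (hRp.to_le hX.1) hXne
    exact PNil.of_nilpotent r hr _
  obtain ⟨N, hNn, hNc, hNp⟩ := thompsonT hr2 _ G rfl hTH
  have hNi : AInv A N := by
    intro a n hn
    rw [PNil.mem_iff hNc hNp] at hn ⊢
    have := orderOf_injective (MulDistribMulAction.toMulEquiv G a).toMonoidHom (MulDistribMulAction.toMulEquiv G a).injective n
    change orderOf (a • n) = _ at this
    rwa [this]
  have hNtop : N ≠ ⊤ := by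
    rintro rfl
    apply hRne
    rw [eq_bot_iff]
    intro x hx
    exact pgroup_inf_coprime hRp hNc x hx trivial
  have hNb := hnil N hNn hNi (hprop N hNi hNtop)
  have hGp : IsPGroup r (⊤ : Subgroup G) := by
    intro g
    obtain ⟨k, hk⟩ := hNp g
    rw [hNb, Subgroup.mem_bot] at hk
    exact ⟨k, Subtype.ext hk⟩
  have := hnil ⊤ inferInstance (fun _ _ _ => trivial) hGp.isNilpotent
  apply hRne
  rw [eq_bot_iff, ← this]
  exact le_top
end

section
theorem AInv.inf {A G : Type*} [Group A] [Group G] [MulDistribMulAction A G] {N M : Subgroup G} (h : AInv A N) (h' : AInv A M) :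
    AInv A (N ⊓ M) := fun a n hn => ⟨h a n hn.1, h' a n hn.2⟩

theorem AInv.center {A G : Type*} [Group A] [Group G] [MulDistribMulAction A G]  :
    AInv A (Subgroup.center G) := by
  intro a n hn
  rw [Subgroup.mem_center_iff] at hn ⊢
  intro g
  have := congrArg (a • ·) (hn (a⁻¹ • g))
  simpa [smul_mul'] using this

theorem lemmaS0 {A G : Type*} [Group A] [Group G] [Finite G] [MulDistribMulAction A G] (hG : ¬ Group.IsNilpotent G)
    (hq : ∀ (r : ℕ) (V : Subgroup G) [V.Normal], r.Prime → AbInv A r V → Group.IsNilpotent (G ⧸ V))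
    {r : ℕ} (hr : r.Prime) (V0 : Subgroup G) (hV0 : AbInv A r V0) :
    ∃ (q : ℕ) (V W : Subgroup G), q.Prime ∧ q ≠ r ∧ AbInv A r V ∧ W.Normal ∧ AInv A W ∧
      Subgroup.centralizer (V : Set G) ≤ W ∧
      (∀ w ∈ W, ∀ g, w * g * w⁻¹ * g⁻¹ ∈ Subgroup.centralizer (V : Set G)) ∧
      (∀ w ∈ W, w ^ q ∈ Subgroup.centralizer (V : Set G)) ∧
      Subgroup.centralizer (V : Set G) ≠ ⊤ ∧ 
      (∀ v ∈ V, (∀ w ∈ W, w * v = v * w) → v = 1) := by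
  have := Fact.mk hr
  obtain ⟨V, hV, hmin⟩ := Set.Finite.exists_minimal
    (Set.toFinite {R : Subgroup G | R.Normal ∧ AInv A R ∧ R ≠ ⊥ ∧ R ≤ V0}) ⟨V0, hV0.normal, hV0.inv, hV0.ne_bot, le_rfl⟩
  obtain ⟨hVn, hVi, hVne, hVle⟩ := hV
  have hVA : AbInv A r V := ⟨hVn, hVi, fun x hx y hy => hV0.comm x (hVle hx) y (hVle hy), hV0.pgroup.to_le hVle, hVne⟩
  have hmin' : ∀ X : Subgroup G, X.Normal → AInv A X → X ≤ V → X = ⊥ ∨ X = V := by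
    intro X h1 h2 h3
    by_cases h : X = ⊥
    · exact Or.inl h
    · exact Or.inr (le_antisymm h3 (hmin ⟨h1, h2, h, h3.trans hVle⟩ h3))
  set C := Subgroup.centralizer (V : Set G) with hC
  have hVC : V ≤ C := fun x hx => Subgroup.mem_centralizer_iff.2 fun y hy => hVA.comm y hy x hx
  have hGV : Group.IsNilpotent (G ⧸ V) := hq r V hr hVA
  have hCtop : C ≠ ⊤ := by
    intro h
    apply hG
    refine Subgroup.isNilpotent_of_ker_le_center (QuotientGroup.mk' V) ?_
    rw [QuotientGroup.ker_mk']
    intro v hv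
    rw [Subgroup.mem_center_iff]
    intro g
    have : g ∈ C := by rw [h]; trivial
    exact (Subgroup.mem_centralizer_iff.1 this v hv).symm
  have hcen : V ⊓ Subgroup.center G = ⊥ := by
    rcases hmin' _ inferInstance (hVi.inf AInv.center) inf_le_left with h | h
    · exact h
    · exfalso
      apply hCtop
      rw [eq_top_iff]
      intro g _
      rw [hC, Subgroup.mem_centralizer_iff]
      intro v hv
      rw [SetLike.mem_coe, ← h] at hv
      exact (Subgroup.mem_center_iff.1 hv.2 g).symm
  let φ : G →* MulAut V := MulAut.conjNormal
  have hφ : ∀ g (v : V), ((φ g v : V) : G) = g * v * g⁻¹ := fun g v => MulAut.conjNormal_apply g v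
  have hker : ∀ g, φ g = 1 ↔ g ∈ C := by
    intro g
    rw [hC, Subgroup.mem_centralizer_iff]
    constructor
    · intro h v hv
      have := hφ g ⟨v, hv⟩
      rw [h] at this
      change v = g * v * g⁻¹ at this
      rw [eq_mul_inv_iff_mul_eq] at this
      exact this
    · intro h
      ext v
      rw [hφ, ← h v v.2]; simp
  have hL : Group.IsNilpotent φ.range := by
    refine Group.nilpotent_of_surjective (G := G ⧸ V) (QuotientGroup.lift V φ.rangeRestrict ?_) ?_
    · intro v hv
      exact Subtype.ext ((hker v).2 (hVC hv))
    · rintro ⟨_, g, rfl⟩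
      exact ⟨(g : G ⧸ V), rfl⟩
  obtain ⟨q, hqp, hqd, hqr⟩ : ∃ q, q.Prime ∧ q ∣ Nat.card φ.range ∧ q ≠ r := by
    by_contra! hno
    have h1 : IsPGroup r φ.range := IsPGroup.of_card
      (Nat.eq_prime_pow_of_unique_prime_dvd Nat.card_pos.ne' (fun {d} hd hdd => hno d hd hdd))
    have h2 : r ∣ Nat.card (⊤ : Subgroup V) := by
      rw [Subgroup.card_top]
      obtain ⟨n, hn⟩ := IsPGroup.iff_card.1 hVA.pgroup
      rw [hn]
      apply dvd_pow_self
      rintro rfl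
      rw [pow_zero, Subgroup.card_eq_one] at hn
      exact hVne hn
    obtain ⟨y, _, hy1, hy⟩ := exists_fixed_of_pgroup φ.range h1 (⊤ : Subgroup V) (fun _ _ _ _ => trivial) h2
    apply hy1
    have : (y : G) ∈ V ⊓ Subgroup.center G := by
      refine ⟨y.2, Subgroup.mem_center_iff.2 fun g => ?_⟩
      have h3 := congrArg Subtype.val (hy (φ g) ⟨g, rfl⟩)
      rw [MulAut.smul_def, hφ] at h3
      rwa [mul_inv_eq_iff_eq_mul] at h3
    rw [hcen, Subgroup.mem_bot] at this
    exact Subtype.ext this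
  have := Fact.mk hqp
  have hOm : OmegaZ q φ.range ≠ ⊥ := OmegaZ_ne_bot_of_nilpotent φ.range hqd
  have hCi : AInv A C := hVi.centralizer
  have hCn : C.Normal := Subgroup.normal_centralizer
  have hmem : ∀ w, w ∈ (OmegaZ q φ.range).comap φ ↔ (∀ g, w * g * w⁻¹ * g⁻¹ ∈ C) ∧ w ^ q ∈ C := by
    intro w
    rw [Subgroup.mem_comap, mem_OmegaZ]
    constructor
    · rintro ⟨_, h2, h3⟩
      refine ⟨fun g => ?_, ?_⟩
      · rw [← hker, map_mul, map_mul, map_mul, h2 (φ g) ⟨g, rfl⟩]; simp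
      · rw [← hker, map_pow, h3]
    · rintro ⟨h2, h3⟩
      refine ⟨⟨w, rfl⟩, ?_, ?_⟩
      · rintro _ ⟨g, rfl⟩
        have := (hker _).2 (h2 g)
        rw [map_mul, map_mul, map_mul, map_inv, map_inv, mul_inv_eq_one, mul_inv_eq_iff_eq_mul] at this
        exact this
      · rw [← map_pow]; exact (hker _).2 h3
  set W := (OmegaZ q φ.range).comap φ with hW
  have hWi : AInv A W := by
    intro a w hw
    rw [hmem] at hw ⊢
    refine ⟨fun g => ?_, ?_⟩
    · rw [← hCi.mem_iff a⁻¹]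
      simpa [smul_mul', smul_inv'] using hw.1 (a⁻¹ • g)
    · rw [← smul_pow']; exact hCi a _ hw.2
  have h2 : C ≤ W := by
      intro c hc
      rw [hW, Subgroup.mem_comap, (hker c).2 hc]; exact one_mem _
  have hWn : W.Normal := by
    refine ⟨fun w hw g => ?_⟩
    have h1 := ((hmem w).1 hw).1 g
    have h3 : g * w * g⁻¹ = (w * g * w⁻¹ * g⁻¹)⁻¹ * w := by group
    rw [h3]
    exact W.mul_mem (W.inv_mem (h2 h1)) hw
  refine ⟨q, V, W, hqp, hqr, hVA, hWn, hWi, h2, fun w hw => ((hmem w).1 hw).1, fun w hw => ((hmem w).1 hw).2, hCtop, ?_⟩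
  intro v hv hvw
  rcases hmin' (V ⊓ Subgroup.centralizer (W : Set G)) inferInstance (hVi.inf hWi.centralizer) inf_le_left with h | h
  · rw [← Subgroup.mem_bot, ← h]
    exact ⟨hv, Subgroup.mem_centralizer_iff.2 hvw⟩
  · exfalso
    apply hOm
    rw [eq_bot_iff]
    intro u hu
    obtain ⟨g, rfl⟩ := hu.1
    rw [Subgroup.mem_bot, hker, hC, Subgroup.mem_centralizer_iff]
    intro x hx
    rw [SetLike.mem_coe, ← h] at hx
    exact (Subgroup.mem_centralizer_iff.1 hx.2 g hu).symm

universe u v in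
theorem lemmaS {A : Type v} {G : Type u} [Group A] [Group G] [Finite G] [MulDistribMulAction A G] (hG : ¬ Group.IsNilpotent G)
    (hq : ∀ (r : ℕ) (V : Subgroup G) [V.Normal], r.Prime → AbInv A r V → Group.IsNilpotent (G ⧸ V))
    {r : ℕ} (hr : r.Prime) (V0 : Subgroup G) (hV0 : AbInv A r V0) :
    ∃ (q : ℕ) (V U : Type u) (_ : CommGroup V) (_ : CommGroup U) (_ : Finite V) (_ : Finite U)
      (_ : MulDistribMulAction A V) (_ : MulDistribMulAction A U) (_ : MulDistribMulAction U V)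
      (ι : V →* G) (W C : Subgroup G) (π : W →* U), q.Prime ∧ q ≠ r ∧ C.Normal ∧ AInv A C ∧ C ≠ ⊤ ∧
      Function.Injective ι ∧ (∀ (a : A) v, ι (a • v) = a • ι v) ∧ Function.Surjective π ∧
      (∀ (a : A) (w w' : W), (w' : G) = a • (w : G) → π w' = a • π w) ∧
      (∀ w : W, π w = 1 ↔ (w : G) ∈ C) ∧ C ≤ W ∧ AInv A W ∧
      (∀ (w : W) v, ι (π w • v) = w * ι v * (w : G)⁻¹) ∧ 
      (∀ (a : A) (u : U) (v : V), a • u • v = (a • u) • a • v) ∧ 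
      (∀ u : U, u ^ q = 1) ∧ IsPGroup r V ∧ Nontrivial V ∧ 
      (∀ v : V, (∀ u : U, u • v = v) → v = 1) := by
  obtain ⟨q, V, W0, hqp, hqr, hV, hWn, hWi, hCW, hW1, hW2, hCtop, hfix⟩ := lemmaS0 hG hq hr V0 hV0
  set C := Subgroup.centralizer (V : Set G) with hC
  have hVn := hV.normal
  have hCn : C.Normal := Subgroup.normal_centralizer
  have hCi : AInv A C := hV.inv.centralizer
  let _ := commGroupOf V hV.comm
  let _ : MulDistribMulAction A V := subMDA V hV.inv
  have hV' : ∀ (a : A) (v : V), ((a • v : V) : G) = a • (v : G) := fun a v => rfl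
  let φ : G →* MulAut V := MulAut.conjNormal
  have hφ : ∀ g (v : V), ((φ g v : V) : G) = g * v * g⁻¹ := fun g v => MulAut.conjNormal_apply g v
  have hker : ∀ g, φ g = 1 ↔ g ∈ C := by
    intro g
    rw [hC, Subgroup.mem_centralizer_iff]
    constructor
    · intro h v hv
      have := hφ g ⟨v, hv⟩
      rw [h] at this
      change v = g * v * g⁻¹ at this
      rw [eq_mul_inv_iff_mul_eq] at this
      exact this
    · intro h
      ext v
      rw [hφ, ← h v v.2]; simp
  let ψ : A →* MulAut V := MulDistribMulAction.toMulAut A V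
  have hψ : ∀ (a : A) v, ψ a v = a • v := fun a v => rfl
  have hψφ : ∀ a g, φ (a • g) = ψ a * φ g * (ψ a)⁻¹ := by
    intro a g
    rw [eq_mul_inv_iff_mul_eq]
    ext v
    simp only [MulAut.mul_apply, hφ, hψ, hV', smul_mul', smul_inv']
  let U : Subgroup (MulAut V) := W0.map φ
  let _ : CommGroup U := commGroupOf U (by
    rintro _ ⟨x, hx, rfl⟩ _ ⟨y, hy, rfl⟩
    have := (hker _).2 (hW1 x hx y)
    rw [map_mul, map_mul, map_mul, map_inv, map_inv, mul_inv_eq_one, mul_inv_eq_iff_eq_mul] at this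
    exact this)
  let _ : MulDistribMulAction A U :=
    { smul := fun a u => ⟨ψ a * u * (ψ a)⁻¹, by
        obtain ⟨_, w, hw, rfl⟩ := u
        exact ⟨a • w, hWi a w hw, hψφ a w⟩⟩
      one_smul := fun u => Subtype.ext (by change ψ 1 * u * (ψ 1)⁻¹ = (u : MulAut V); simp)
      mul_smul := fun a b u => Subtype.ext (by
        change ψ (a * b) * u * (ψ (a * b))⁻¹ = ψ a * (ψ b * (u : MulAut V) * (ψ b)⁻¹) * (ψ a)⁻¹
        rw [map_mul]; group)
      smul_mul := fun a u u' => Subtype.ext (by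
        change ψ a * (u * u') * (ψ a)⁻¹ = (ψ a * (u : MulAut V) * (ψ a)⁻¹) * (ψ a * (u' : MulAut V) * (ψ a)⁻¹)
        group)
      smul_one := fun a => Subtype.ext (by
        change ψ a * 1 * (ψ a)⁻¹ = 1
        group) }
  have hU : ∀ (a : A) (u : U), ((a • u : U) : MulAut V) = ψ a * u * (ψ a)⁻¹ := fun a u => rfl
  let _ : MulDistribMulAction U V :=
    { smul := fun u v => (u : MulAut V) v
      one_smul := fun v => rfl
      mul_smul := fun u u' v => rfl
      smul_mul := fun u v v' => map_mul (u : MulAut V) v v'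
      smul_one := fun u => map_one (u : MulAut V) }
  have hUV : ∀ (u : U) (v : V), u • v = (u : MulAut V) v := fun u v => rfl
  let π : W0 →* U := (φ.comp W0.subtype).codRestrict U (fun w => ⟨w, w.2, rfl⟩)
  have hπ : ∀ w, ((π w : U) : MulAut V) = φ w := fun w => rfl
  refine ⟨q, V, U, _, inferInstance, inferInstance, inferInstance, _, inferInstance, inferInstance, V.subtype, W0, C, π,
    hqp, hqr, hCn, hCi, hCtop, V.subtype_injective, fun a v => rfl, ?_, ?_, ?_, hCW, hWi, ?_, ?_, ?_, hV.pgroup,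
    (Subgroup.nontrivial_iff_ne_bot V).2 hV.ne_bot, ?_⟩
  · rintro ⟨_, w, hw, rfl⟩
    exact ⟨⟨w, hw⟩, rfl⟩
  · intro a w w' h
    apply Subtype.ext
    rw [hU, hπ, hπ, h, hψφ]
  · intro w
    rw [← hker, ← hπ]
    exact Subtype.ext_iff
  · intro w v
    rw [hUV, hπ]
    exact hφ w v
  · intro a u v
    simp only [hUV, hU, ← hψ, ← MulAut.mul_apply]
    simp
  · rintro ⟨_, w, hw, rfl⟩
    apply Subtype.ext
    change (φ w) ^ q = 1
    rw [← map_pow]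
    exact (hker _).2 (hW2 w hw)
  · intro v h
    apply Subtype.ext
    refine hfix v v.2 fun w hw => ?_
    have h1 := congrArg Subtype.val (h (π ⟨w, hw⟩))
    rw [hUV, hπ, hφ] at h1
    exact mul_inv_eq_iff_eq_mul.1 h1
end

section
theorem partition2 {U H V : Type*} [Group U] [Group H] [Fintype U] [Fintype H] [CommGroup V] [MulDistribMulAction U V]
    [MulDistribMulAction H V] [MulDistribMulAction H U] (hc : ∀ (h : H) (u : U) (v : V), h • u • v = (h • u) • h • v)
    (hfree : ∀ h : H, h ≠ 1 → ∀ u : U, h • u = u → u = 1)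
    (htr : ∀ v : V, ∏ f : U, f • v = 1) (v : V) :
    v ^ Nat.card U = ∏ x : U, x • ∏ h : H, h • x⁻¹ • v := by
  classical
  simp only [smul_finprod]
  rw [Finset.prod_comm]
  rw [Finset.prod_eq_single_of_mem (1 : H) (Finset.mem_univ _)]
  · simp [Nat.card_eq_fintype_card]
  · intro h _ hne
    let κ : U → U := fun x => x * (h • x⁻¹)
    have hinj : Function.Injective κ := by
      intro x y hxy
      have h1 : x * (h • x⁻¹) = y * (h • y⁻¹) := hxy
      have h2 := hfree h hne (y⁻¹ * x) (by
        rw [smul_inv', smul_inv', mul_inv_eq_iff_eq_mul] at h1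
        rw [smul_mul', smul_inv']
        conv_rhs => rw [h1]
        group)
      exact (inv_mul_eq_one.1 h2).symm
    have hbij := Finite.injective_iff_bijective.1 hinj
    have h2 := htr (h • v)
    rw [← Equiv.prod_comp (Equiv.ofBijective κ hbij)] at h2
    rw [← h2]
    apply Finset.prod_congr rfl
    intro x _
    simp only [Equiv.ofBijective_apply, κ, mul_smul, hc]

theorem card_quot_lt {G : Type*} [Group G] [Finite G] (V : Subgroup G) (h : V ≠ ⊥) : Nat.card (G ⧸ V) < Nat.card G := by
  have h1 := Subgroup.card_eq_card_quotient_mul_card_subgroup V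
  have h2 : 1 < Nat.card V := (Subgroup.one_lt_card_iff_ne_bot V).2 h
  have h3 : 0 < Nat.card (G ⧸ V) := Nat.card_pos
  rw [h1]
  nlinarith

theorem card_sub_lt {G : Type*} [Group G] [Finite G] (V : Subgroup G) (h : V ≠ ⊤) : Nat.card V < Nat.card G := 
  lt_of_le_of_ne (Subgroup.card_le_card_group V) fun e => h (Subgroup.eq_top_of_card_eq V e)

theorem exists_odd_prime {G : Type*} [Group G] [Finite G] (h : ¬ Group.IsNilpotent G) : ∃ r, r.Prime ∧ r ≠ 2 ∧ r ∣ Nat.card G := by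
  by_contra! hno
  apply h
  have : IsPGroup 2 G := IsPGroup.of_card (Nat.eq_prime_pow_of_unique_prime_dvd Nat.card_pos.ne'
    (fun {d} hd hdd => by_contra fun h2 => hno d hd h2 hdd))
  have := Fact.mk Nat.prime_two
  exact IsPGroup.isNilpotent ‹_›

universe u v in
theorem thompson {Γ : Type v} [Group Γ] [Finite Γ] {ℓ : ℕ} (hℓ : ℓ.Prime) (hΓ : Nat.card Γ = ℓ) (n : ℕ) :
    ∀ (G : Type u) [Group G] [Finite G] [MulDistribMulAction Γ G], Nat.card G = n →
    (∀ g : G, (∀ a : Γ, a • g = g) → g = 1) → Group.IsNilpotent G := by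
  induction n using Nat.strong_induction_on with
  | _ n ih =>
  intro G _ _ _ hn hfpf
  by_contra hG
  have := Fact.mk hℓ
  have hΓp : IsPGroup ℓ Γ := IsPGroup.of_card (n := 1) (by simpa using hΓ)
  have : Group.IsNilpotent Γ := hΓp.isNilpotent
  have hcop : (Nat.card Γ).Coprime (Nat.card G) := by
    rw [hΓ]
    refine (Nat.Prime.coprime_iff_not_dvd hℓ).2 fun hd => ?_
    obtain ⟨y, _, hy1, hy⟩ := exists_fixed_of_pgroup (⊤ : Subgroup Γ) (hΓp.to_subgroup _) (⊤ : Subgroup G) (fun _ _ _ _ => trivial)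
      (by rwa [Subgroup.card_top])
    exact hy1 (hfpf y fun a => hy a trivial)
  have hcopN : ∀ N : Subgroup G, (Nat.card Γ).Coprime (Nat.card N) := fun N => hcop.coprime_dvd_right N.card_subgroup_dvd_card
  have hcos : ∀ N : Subgroup G, AInv Γ N → ∀ g : G, (∀ a : Γ, g⁻¹ * a • g ∈ N) → g ∈ N := by
    intro N hN g hg
    obtain ⟨x, hx, h⟩ := coset_lemma _ Γ rfl N hN (hcopN N) g hg
    rw [← N.mul_mem_cancel_right hx, hfpf _ h]
    exact N.one_mem
  have hprop : ∀ N : Subgroup G, AInv Γ N → N ≠ ⊤ → Group.IsNilpotent N := by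
    intro N hN hNt
    let _ := subMDA N hN
    refine ih _ (hn ▸ card_sub_lt N hNt) N rfl fun g hg => ?_
    exact Subtype.ext (hfpf g fun a => congrArg Subtype.val (hg a))
  have hq : ∀ (r : ℕ) (V : Subgroup G) [V.Normal], r.Prime → AbInv Γ r V → Group.IsNilpotent (G ⧸ V) := by
    intro r V _ hr hV
    let _ := quotMDA V hV.inv
    refine ih _ (hn ▸ card_quot_lt V hV.ne_bot) (G ⧸ V) rfl fun g hg => ?_
    obtain ⟨g, rfl⟩ := QuotientGroup.mk_surjective g
    rw [QuotientGroup.eq_one_iff]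
    refine hcos V hV.inv g fun a => ?_
    exact QuotientGroup.eq.1 (hg a).symm
  obtain ⟨r0, hr0, hr02, hr0d⟩ := exists_odd_prime hG
  have := Fact.mk hr0
  have htop : Group.IsNilpotent (⊤ : Subgroup Γ) := inferInstance
  obtain ⟨P, hP⟩ := glauberman_inv (G := G) (r := r0) (⊤ : Subgroup Γ) (by rwa [Subgroup.card_top]) (by
    rw [eq_bot_iff]
    intro g hg
    exact hfpf g fun a => (mem_autFixed.1 hg) a trivial)
  obtain ⟨r, V0, hr, hV0⟩ := lemmaL hprop hr0 hr02 P (AInv.sylow P hP) P.2 (P.ne_bot_of_dvd_card hr0d)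
  obtain ⟨q, V, U, _, _, _, _, _, _, _, ι, W, C, π, hqp, hqr, hCn, hCi, hCt, hι, hιA, hπs, hπA, hπC, hCW, hWi, hιπ, hcomp, hUq, hVr, hVnt, hfix⟩ := 
    lemmaS hG hq hr V0 hV0
  have := Fact.mk hr
  have := Fact.mk hqp
  let _ := Fintype.ofFinite U
  let _ := Fintype.ofFinite Γ
  have hpart := partition2 (U := U) (H := Γ) (V := V) hcomp (by
    intro h hne u hu
    obtain ⟨w, rfl⟩ := hπs u
    rw [hπC]
    refine hcos C hCi w fun a => ?_
    have ha : a ∈ Subgroup.zpowers h := by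
      rw [zpowers_eq_top_of_prime_card hΓ hne]; trivial
    have hfixa : a • π w = π w := by
      have : Subgroup.zpowers h ≤ MulAction.stabilizer Γ (π w) := by
        rw [Subgroup.zpowers_le]; exact hu
      exact this ha
    have h1 := hπA a w ⟨a • (w : G), hWi a w w.2⟩ rfl
    rw [hfixa] at h1
    have h2 : π (w⁻¹ * ⟨a • (w : G), hWi a w w.2⟩) = 1 := by rw [map_mul, h1, map_inv]; simp
    exact (hπC _).1 h2) (by
    intro v
    refine hfix _ fun u => ?_
    rw [smul_finprod]
    simp only [← mul_smul]
    exact Fintype.prod_equiv (Equiv.mulLeft u) _ _ (fun _ => rfl))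
  obtain ⟨v, hv⟩ := exists_ne (1 : V)
  have h1 := hpart v
  have h2 : ∀ w : V, ∏ h : Γ, h • w = 1 := by
    intro w
    apply hι
    rw [map_one]
    refine hfpf _ fun a => ?_
    rw [← hιA, smul_finprod]
    congr 1
    simp only [← mul_smul]
    exact Fintype.prod_equiv (Equiv.mulLeft a) _ _ (fun _ => rfl)
  simp only [h2, smul_one, Finset.prod_const_one] at h1
  obtain ⟨k, hk⟩ := hVr v
  have hUp : IsPGroup q U := fun u => ⟨1, by simpa using hUq u⟩
  obtain ⟨m, hm⟩ := IsPGroup.iff_card.1 hUp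
  rw [hm] at h1
  exact hv (eq_one_of_pow_coprime (Nat.Coprime.pow m k ((Nat.coprime_primes hqp hr).2 hqr)) h1 hk)
end

section
theorem frob_nilpotent {A : Type*} [Group A] [Finite A] (F H : Subgroup A) (hFn : F.Normal) (hH : H ≠ ⊥)
    (hfrob : ∀ h ∈ H, h ≠ 1 → ∀ f ∈ F, h * f * h⁻¹ = f → f = 1) : Group.IsNilpotent F := by
  obtain ⟨ℓ, hℓ, hd⟩ := Nat.exists_prime_and_dvd (n := Nat.card H) (by rw [Ne, Subgroup.card_eq_one]; exact hH)
  have := Fact.mk hℓ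
  obtain ⟨h, hh⟩ := exists_prime_orderOf_dvd_card' ℓ hd
  have hh' : orderOf (h : A) = ℓ := by rw [Subgroup.orderOf_coe, hh]
  let _ := conjMDA (Subgroup.zpowers (h : A)) F (fun a _ f hf => hFn.conj_mem f hf a)
  refine thompson hℓ (Γ := Subgroup.zpowers (h : A)) (by rw [Nat.card_zpowers, hh']) _ F rfl fun g hg => ?_
  apply Subtype.ext
  refine hfrob h h.2 ?_ g g.2 ?_
  · intro e
    rw [e, orderOf_one] at hh'
    exact hℓ.one_lt.ne hh'
  · exact congrArg Subtype.val (hg ⟨h, Subgroup.mem_zpowers _⟩)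

theorem Q1 {F G : Type*} [Group F] [Finite F] [Group.IsNilpotent F] [Group G] [Finite G] [MulDistribMulAction F G]
    (hfpf : ∀ g : G, (∀ f : F, f • g = g) → g = 1) {r : ℕ} (hr : r.Prime) (N : Subgroup G) (hN : AInv F N)
    (hNr : IsPGroup r N) (g : G) (hg : ∀ f : F, g⁻¹ * f • g ∈ N) : g ∈ N := by
  have := Fact.mk hr
  obtain ⟨D, hDn, hDc, hDp⟩ := PNil.of_nilpotent r hr F
  obtain ⟨S⟩ : Nonempty (Sylow r F) := inferInstance
  have hsup := sup_sylow_eq_top D hDp S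
  have hY : ∀ y ∈ N, (∀ d ∈ D, d • y = y) → y = 1 := by
    intro y hyN hy
    by_contra hy1
    let Y : Subgroup G := N ⊓ autFixed D
    have hYr : r ∣ Nat.card Y := by
      obtain ⟨n, hn⟩ := IsPGroup.iff_card.1 (hNr.to_le (inf_le_left : Y ≤ N))
      rw [hn]
      apply dvd_pow_self
      rintro rfl
      rw [pow_zero, Subgroup.card_eq_one] at hn
      have : y ∈ N ⊓ autFixed D := ⟨hyN, hy⟩
      rw [hn] at this
      exact hy1 this
    obtain ⟨z, hz, hz1, hzf⟩ := exists_fixed_of_pgroup (S : Subgroup F) S.2 Y (by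
      intro s _ y hy
      refine ⟨hN s y hy.1, fun d hd => ?_⟩
      have h1 := hy.2 (s⁻¹ * d * s) (by simpa using hDn.conj_mem d hd s⁻¹)
      rw [mul_smul, mul_smul, inv_smul_eq_iff] at h1
      exact h1) hYr
    apply hz1
    apply hfpf
    intro f
    have hf : f ∈ D ⊔ S := by rw [hsup]; trivial
    obtain ⟨d, hd, s, hs, rfl⟩ := Subgroup.mem_sup_of_normal_left.1 hf
    rw [mul_smul, hzf s hs, hz.2 d hd]
  have : Group.IsNilpotent D := inferInstance
  obtain ⟨x, hx, hfix⟩ := coset_lemma _ D rfl N (fun d n hn => hN d n hn) (by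
    obtain ⟨n, hn⟩ := IsPGroup.iff_card.1 hNr
    rw [hn]; exact hDc.pow_right n) g (fun d => hg d)
  rw [← N.mul_mem_cancel_right hx, hfpf (g * x)]
  · exact N.one_mem
  intro f
  have h1 : (g * x)⁻¹ * f • (g * x) ∈ N := by
    rw [smul_mul']
    have : (g * x)⁻¹ * (f • g * f • x) = x⁻¹ * (g⁻¹ * f • g) * f • x := by group
    rw [this]
    exact N.mul_mem (N.mul_mem (N.inv_mem hx) (hg f)) (hN f x hx)
  have h2 := hY _ h1 (fun d hd => by
    have h3 : d • f • (g * x) = f • (g * x) := by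
      have h1 := hfix ⟨f⁻¹ * d * f, by simpa using hDn.conj_mem d hd f⁻¹⟩
      change (f⁻¹ * d * f) • (g * x) = g * x at h1
      rw [mul_smul, mul_smul, inv_smul_eq_iff] at h1
      exact h1
    have h4 : d • (g * x) = g * x := hfix ⟨d, hd⟩
    rw [smul_mul', smul_inv', h3, h4])
  exact (inv_mul_eq_one.1 h2).symm

theorem exists_kappa {H X : Type*} [Group H] [MulAction H X] :
    ∃ κ : X → H, ∀ x, (∀ h : H, h • x = x → h = 1) → ∀ h : H, κ (h • x) = h * κ x := by
  classical
  have h1 : ∀ x : X, ∃ h : H, h • (Quotient.out (Quotient.mk (MulAction.orbitRel H X) x)) = x := by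
    intro x
    have := Quotient.mk_out (s := MulAction.orbitRel H X) x
    obtain ⟨h, hh⟩ := (MulAction.orbitRel H X).symm this
    exact ⟨h, hh⟩
  choose κ hκ using h1
  refine ⟨κ, fun x hx h => ?_⟩
  have e : Quotient.mk (MulAction.orbitRel H X) (h • x) = Quotient.mk (MulAction.orbitRel H X) x :=
    Quotient.sound ⟨h, rfl⟩
  have h2 := hκ (h • x)
  rw [e] at h2
  have h3 : Quotient.out (Quotient.mk (MulAction.orbitRel H X) x) = (κ x)⁻¹ • x := by
    rw [eq_inv_smul_iff, hκ]
  rw [h3, ← mul_smul, ← inv_smul_eq_iff, ← mul_smul] at h2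
  have := hx _ h2
  rw [inv_mul_eq_one, eq_mul_inv_iff_mul_eq] at this
  exact this.symm

theorem Q2core {A N : Type*} [Group A] [Finite A] [CommGroup N] [MulDistribMulAction A N] (F H : Subgroup A)
    (hFn : F.Normal) (hfrob : ∀ h ∈ H, h ≠ 1 → ∀ f ∈ F, h * f * h⁻¹ = f → f = 1)
    (hfpf : ∀ n : N, (∀ f ∈ F, f • n = n) → n = 1) (d : H → N) (hd : ∀ h k : H, d (h * k) = d h * h • d k) :
    ∃ n : N, ∀ h : H, d h * h • n = n := by
  classical
  let _ := Fintype.ofFinite F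
  let _ := conjMDA H F (fun a _ f hf => hFn.conj_mem f hf a)
  have hact : ∀ (h : H) (f : F), ((h • f : F) : A) = h * f * (h : A)⁻¹ := fun h f => rfl
  obtain ⟨κ, hκ⟩ := exists_kappa (H := H) (X := F)
  have hκ' : ∀ x : F, x ≠ 1 → ∀ h : H, κ (h • x) = h * κ x := by
    intro x hx h
    refine hκ x (fun k hk => ?_) h
    by_contra hk1
    exact hx (Subtype.ext (hfrob k k.2 (fun e => hk1 (Subtype.ext e)) x x.2 (congrArg Subtype.val hk)))
  have htr : ∀ n : N, ∏ x : F, (x : A) • n = 1 := by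
    intro n
    refine hfpf _ fun f hf => ?_
    rw [smul_finprod]
    simp only [← mul_smul]
    exact Fintype.prod_equiv (Equiv.mulLeft (⟨f, hf⟩ : F)) _ _ (fun _ => rfl)
  refine ⟨∏ x ∈ Finset.univ.erase (1 : F), ((x : A) • d (κ x))⁻¹, fun h => ?_⟩
  have h1 : h • ∏ x ∈ Finset.univ.erase (1 : F), ((x : A) • d (κ x))⁻¹ = 
      ∏ x ∈ Finset.univ.erase (1 : F), ((x : A) • ((d h)⁻¹ * d (κ x)))⁻¹ := by
    rw [smul_finprod]
    refine Finset.prod_bij (fun x _ => h • x) ?_ ?_ ?_ ?_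
    · intro x hx
      have hx1 := Finset.ne_of_mem_erase hx
      refine Finset.mem_erase.2 ⟨fun e => hx1 ?_, Finset.mem_univ _⟩
      have := congrArg (h⁻¹ • ·) e
      simpa using this
    · intro x _ y _ e
      exact MulAction.injective h e
    · intro y hy
      have hy1 := Finset.ne_of_mem_erase hy
      refine ⟨h⁻¹ • y, Finset.mem_erase.2 ⟨fun e => hy1 ?_, Finset.mem_univ _⟩, smul_inv_smul h y⟩
      have := congrArg (h • ·) e
      simpa using this
    · intro x hx
      have hx1 := Finset.ne_of_mem_erase hx
      rw [hκ' x hx1, hd, inv_mul_cancel_left, hact, smul_inv']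
      change ((h : A) • (x : A) • d (κ x))⁻¹ = (((h : A) * x * (h : A)⁻¹) • (h : A) • d (κ x))⁻¹
      simp [← mul_smul]
  rw [h1]
  have h2 := htr (d h)
  rw [← Finset.mul_prod_erase _ _ (Finset.mem_univ (1 : F))] at h2
  simp only [smul_mul', smul_inv', mul_inv, Finset.prod_mul_distrib, inv_inv]
  rw [← mul_assoc]
  simp only [Subgroup.coe_one, one_smul] at h2
  rw [h2, one_mul]

theorem Q2 {A G : Type*} [Group A] [Finite A] [Group G] [MulDistribMulAction A G] (F H : Subgroup A)
    (hFn : F.Normal) (hfrob : ∀ h ∈ H, h ≠ 1 → ∀ f ∈ F, h * f * h⁻¹ = f → f = 1)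
    (N : Subgroup G) (hN : AInv A N) (hNc : ∀ x ∈ N, ∀ y ∈ N, x * y = y * x) 
    (hfpf : ∀ n : G, (∀ f ∈ F, f • n = n) → n = 1) (g : G) (hg : ∀ h ∈ H, g⁻¹ * h • g ∈ N) :
    ∃ n ∈ N, ∀ h ∈ H, h • (g * n) = g * n := by
  let _ := commGroupOf N hNc
  let _ : MulDistribMulAction A N := subMDA N hN
  obtain ⟨n, hn⟩ := Q2core (N := N) F H hFn hfrob (fun n hn => Subtype.ext (hfpf n fun f hf => congrArg Subtype.val (hn f hf)))
    (fun h => ⟨g⁻¹ * (h : A) • g, hg h h.2⟩) (fun h k => Subtype.ext (by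
      change g⁻¹ * ((h : A) * k) • g = g⁻¹ * (h : A) • g * ((h : A) • (g⁻¹ * (k : A) • g))
      simp [mul_smul, smul_mul', smul_inv', mul_assoc]))
  refine ⟨n, n.2, fun h hh => ?_⟩
  have h1 : g⁻¹ * (h : A) • g * (h : A) • (n : G) = n := congrArg Subtype.val (hn ⟨h, hh⟩)
  rw [smul_mul']
  rw [mul_assoc, inv_mul_eq_iff_eq_mul] at h1
  exact h1

universe u v in
theorem Q1' {F : Type v} [Group F] [Finite F] [Group.IsNilpotent F] (n : ℕ) : ∀ (G : Type u) [Group G] [Finite G] [MulDistribMulAction F G],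
    Nat.card G = n → (∀ g : G, (∀ f : F, f • g = g) → g = 1) → ∀ (N : Subgroup G) [N.Normal] [Group.IsNilpotent N], AInv F N →
    ∀ (g : G), (∀ f : F, g⁻¹ * f • g ∈ N) → g ∈ N := by
  induction n using Nat.strong_induction_on with
  | _ n ih =>
  intro G _ _ _ hn hfpf N _ _ hN g hg
  by_cases hNb : N = ⊥
  · subst hNb
    rw [Subgroup.mem_bot]
    exact hfpf g fun f => (inv_mul_eq_one.1 (Subgroup.mem_bot.1 (hg f))).symm
  obtain ⟨s, X, hs, hX, hXN⟩ := abInv_of_nilpotent N hN hNb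
  have := hX.normal
  let _ := quotMDA X hX.inv
  have hnil : Group.IsNilpotent (N.map (QuotientGroup.mk' X)) := 
    Group.nilpotent_of_surjective ((QuotientGroup.mk' X).subgroupMap N) ((QuotientGroup.mk' X).subgroupMap_surjective N)
  have hnorm : (N.map (QuotientGroup.mk' X)).Normal := Subgroup.Normal.map inferInstance _ (QuotientGroup.mk'_surjective X)
  have h1 := ih _ (hn ▸ card_quot_lt X hX.ne_bot) (G ⧸ X) rfl (by
    intro g hg
    obtain ⟨g, rfl⟩ := QuotientGroup.mk_surjective g
    rw [QuotientGroup.eq_one_iff]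
    exact Q1 hfpf hs X hX.inv hX.pgroup g fun a => QuotientGroup.eq.1 (hg a).symm) (N.map (QuotientGroup.mk' X)) (by
      rintro f _ ⟨x, hx, rfl⟩
      exact ⟨f • x, hN f x hx, rfl⟩) (g : G ⧸ X) (fun f => ⟨g⁻¹ * f • g, hg f, rfl⟩)
  obtain ⟨x, hx, e⟩ := h1
  have h2 : x⁻¹ * g ∈ X := QuotientGroup.eq.1 e
  have := N.mul_mem hx (hXN h2)
  simpa using this

universe u v in
theorem Q2' {A : Type v} [Group A] [Finite A] (F H : Subgroup A) [Group.IsNilpotent F]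
    (hFn : F.Normal) (hfrob : ∀ h ∈ H, h ≠ 1 → ∀ f ∈ F, h * f * h⁻¹ = f → f = 1) (n : ℕ) : 
    ∀ (G : Type u) [Group G] [Finite G] [MulDistribMulAction A G],
    Nat.card G = n → (∀ g : G, (∀ f ∈ F, f • g = g) → g = 1) → ∀ (N : Subgroup G) [N.Normal] [Group.IsNilpotent N], AInv A N →
    ∀ (g : G), (∀ h ∈ H, g⁻¹ * h • g ∈ N) → ∃ n ∈ N, ∀ h ∈ H, h • (g * n) = g * n := by
  induction n using Nat.strong_induction_on with
  | _ n ih =>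
  intro G _ _ _ hn hfpf N _ _ hN g hg
  by_cases hNb : N = ⊥
  · subst hNb
    refine ⟨1, one_mem _, fun f hf => ?_⟩
    rw [mul_one]
    exact (inv_mul_eq_one.1 (Subgroup.mem_bot.1 (hg f hf))).symm
  obtain ⟨s, X, hs, hX, hXN⟩ := abInv_of_nilpotent N hN hNb
  have := hX.normal
  let _ := quotMDA X hX.inv
  have hnil : Group.IsNilpotent (N.map (QuotientGroup.mk' X)) := 
    Group.nilpotent_of_surjective ((QuotientGroup.mk' X).subgroupMap N) ((QuotientGroup.mk' X).subgroupMap_surjective N)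
  have hnorm : (N.map (QuotientGroup.mk' X)).Normal := Subgroup.Normal.map inferInstance _ (QuotientGroup.mk'_surjective X)
  have h1 := ih _ (hn ▸ card_quot_lt X hX.ne_bot) (G ⧸ X) rfl (by
    intro g hg
    obtain ⟨g, rfl⟩ := QuotientGroup.mk_surjective g
    rw [QuotientGroup.eq_one_iff]
    exact Q1 (F := F) (fun g hg => hfpf g fun f hf => hg ⟨f, hf⟩) hs X (fun f => hX.inv f) hX.pgroup g fun a => QuotientGroup.eq.1 (hg a a.2).symm) (N.map (QuotientGroup.mk' X)) (by
      rintro f _ ⟨x, hx, rfl⟩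
      exact ⟨f • x, hN f x hx, rfl⟩) (g : G ⧸ X) (fun f hf => ⟨g⁻¹ * f • g, hg f hf, rfl⟩)
  obtain ⟨_, ⟨x, hx, rfl⟩, e⟩ := h1
  obtain ⟨y, hy, hfix⟩ := Q2 F H hFn hfrob X hX.inv hX.comm hfpf (g * x) (fun h hh => QuotientGroup.eq.1 (e h hh).symm)
  exact ⟨x * y, N.mul_mem hx (hXN hy), by simpa only [mul_assoc] using hfix⟩
end

section
section K
variable {A : Type*} [Group A] [Finite A] (F H : Subgroup A) 

theorem frob_inf (hfrob : ∀ h ∈ H, h ≠ 1 → ∀ f ∈ F, h * f * h⁻¹ = f → f = 1) (x : A) (hF : x ∈ F) (hH : x ∈ H) : x = 1 := by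
  by_contra h
  exact h (hfrob x hH h x hF (by group))

theorem frob_fix_free (hFn : F.Normal) (hfrob : ∀ h ∈ H, h ≠ 1 → ∀ f ∈ F, h * f * h⁻¹ = f → f = 1)
    (s : A) (hs : s ∈ F) (p : A ⧸ H) (hp : s • p = p) : s = 1 := by
  obtain ⟨g, rfl⟩ := QuotientGroup.mk_surjective p
  have h1 : g⁻¹ * (s * g) ∈ H := QuotientGroup.eq.1 hp.symm
  have h2 : g⁻¹ * (s * g) ∈ F := by simpa [mul_assoc] using hFn.conj_mem s hs g⁻¹
  have h3 := frob_inf F H hfrob _ h2 h1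
  rw [inv_mul_eq_one] at h3
  exact (mul_eq_right.1 h3.symm)

theorem frob_rep (hFn : F.Normal) (hsup : F ⊔ H = ⊤) (p : A ⧸ H) : ∃ f ∈ F, p = ((f : A) : A ⧸ H) := by
  obtain ⟨g, rfl⟩ := QuotientGroup.mk_surjective p
  have : g ∈ F ⊔ H := by rw [hsup]; trivial
  obtain ⟨f, hf, h, hh, rfl⟩ := Subgroup.mem_sup_of_normal_left.1 this
  refine ⟨f, hf, (QuotientGroup.eq.2 ?_).symm⟩
  simpa using hh

theorem frob_fix_unique (hFn : F.Normal) (hsup : F ⊔ H = ⊤) (hfrob : ∀ h ∈ H, h ≠ 1 → ∀ f ∈ F, h * f * h⁻¹ = f → f = 1)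
    (s : A) (hs : s ∉ F) (p p' : A ⧸ H) (hp : s • p = p) (hp' : s • p' = p') : p = p' := by
  obtain ⟨g, hg, rfl⟩ := frob_rep F H hFn hsup p
  obtain ⟨g', hg', rfl⟩ := frob_rep F H hFn hsup p'
  have h1 : g⁻¹ * (s * g) ∈ H := QuotientGroup.eq.1 hp.symm
  have h2 : g'⁻¹ * (s * g') ∈ H := QuotientGroup.eq.1 hp'.symm
  have hne : g⁻¹ * (s * g) ≠ 1 := by
    intro e
    rw [inv_mul_eq_one] at e
    exact hs (by rw [mul_eq_right.1 e.symm]; exact F.one_mem)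
  set k := g⁻¹ * (s * g) with hk
  set k' := g'⁻¹ * (s * g') with hk'
  have e1 : k' = (g⁻¹ * g')⁻¹ * k * (g⁻¹ * g') := by rw [hk, hk']; group
  have hz : g⁻¹ * g' ∈ F := F.mul_mem (F.inv_mem hg) hg'
  set z := g⁻¹ * g' with hzdef
  have h3 : k' * k⁻¹ ∈ F := by
    have : k' * k⁻¹ = z⁻¹ * (k * z * k⁻¹) := by rw [e1]; group
    rw [this]
    exact F.mul_mem (F.inv_mem hz) (hFn.conj_mem z hz k)
  have h4 := frob_inf F H hfrob _ h3 (H.mul_mem h2 (H.inv_mem h1))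
  rw [mul_inv_eq_one] at h4
  have h5 := hfrob k h1 hne z hz (by
    rw [h4] at e1
    rw [mul_inv_eq_iff_eq_mul]
    conv_rhs => rw [e1]
    group)
  rw [hzdef, inv_mul_eq_one] at h5
  rw [h5]

theorem frob_fix_exists (hFn : F.Normal) (hsup : F ⊔ H = ⊤) (hfrob : ∀ h ∈ H, h ≠ 1 → ∀ f ∈ F, h * f * h⁻¹ = f → f = 1)
    (s : A) (hs : s ∉ F) : ∃ p : A ⧸ H, s • p = p := by
  have : s ∈ F ⊔ H := by rw [hsup]; trivial
  obtain ⟨f, hf, h, hh, rfl⟩ := Subgroup.mem_sup_of_normal_left.1 this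
  have hne : h ≠ 1 := by
    rintro rfl
    exact hs (by simpa using hf)
  let κ : F → F := fun y => ⟨(y : A)⁻¹ * (h * y * h⁻¹), F.mul_mem (F.inv_mem y.2) (hFn.conj_mem y y.2 h)⟩
  have hinj : Function.Injective κ := by
    intro x y hxy
    have h1 : (x : A)⁻¹ * (h * x * h⁻¹) = (y : A)⁻¹ * (h * y * h⁻¹) := congrArg Subtype.val hxy
    have h2 := hfrob h hh hne (y * (x : A)⁻¹) (F.mul_mem y.2 (F.inv_mem x.2)) (by
      rw [inv_mul_eq_iff_eq_mul] at h1
      have : h * (y * (x : A)⁻¹) * h⁻¹ = (h * y * h⁻¹) * (h * x * h⁻¹)⁻¹ := by group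
      rw [this, h1]; group)
    exact Subtype.ext (mul_inv_eq_one.1 h2).symm
  obtain ⟨y, hy⟩ := (Finite.injective_iff_surjective.1 hinj) ⟨f, hf⟩
  have hy' : (y : A)⁻¹ * (h * y * h⁻¹) = f := congrArg Subtype.val hy
  refine ⟨(((y : A)⁻¹ : A) : A ⧸ H), ?_⟩
  refine (QuotientGroup.eq.2 ?_).symm
  have : ((y : A)⁻¹)⁻¹ * (f * h * (y : A)⁻¹) = h := by rw [← hy']; group
  change ((y : A)⁻¹)⁻¹ * (f * h * (y : A)⁻¹) ∈ H
  rw [this]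
  exact hh

theorem lemmaK (hFn : F.Normal) (hsup : F ⊔ H = ⊤) (hfrob : ∀ h ∈ H, h ≠ 1 → ∀ f ∈ F, h * f * h⁻¹ = f → f = 1)
    (S : Subgroup A) (p0 : A ⧸ H) (hp0 : ∃ s ∈ S, s ≠ 1 ∧ s • p0 = p0) :
    Nat.card {p : A ⧸ H // ∃ s ∈ S, s ≠ 1 ∧ s • p = p} ∣ Nat.card F ∧
    ∀ p : A ⧸ H, (∃ s ∈ S, s ≠ 1 ∧ s • p = p) → ∃ s ∈ S, p = s • p0 := by
  classical
  let Y : SubMulAction S (A ⧸ H) :=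
    { carrier := {p | ∃ s ∈ S, s ≠ 1 ∧ s • p = p}
      smul_mem' := by
        rintro t p ⟨s, hs, hne, hsp⟩
        refine ⟨t * s * (t : A)⁻¹, S.mul_mem (S.mul_mem t.2 hs) (S.inv_mem t.2), ?_, ?_⟩
        · intro e
          exact hne (conj_eq_one_iff.1 e)
        · change (t * s * (t : A)⁻¹) • (t : A) • p = (t : A) • p
          rw [← mul_smul, inv_mul_cancel_right, mul_smul, hsp] }
  let Ω := Quotient (MulAction.orbitRel S Y)
  have e1 : Nat.card (Σ s : S, MulAction.fixedBy Y s) = Nat.card Ω * Nat.card S := by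
    rw [Nat.card_congr (MulAction.sigmaFixedByEquivOrbitsProdGroup S Y), Nat.card_prod]
  have e2 : Nat.card (Σ s : S, MulAction.fixedBy Y s) = Nat.card Y + Nat.card {s : S // s ∉ F.subgroupOf S} := by
    rw [← Nat.card_sum]
    have hex : ∀ s : {s : S // s ∉ F.subgroupOf S}, ∃ y : Y, s.1 • y = y := by
      rintro ⟨s, hs⟩
      obtain ⟨p, hp⟩ := frob_fix_exists F H hFn hsup hfrob s hs
      refine ⟨⟨p, s, s.2, ?_, hp⟩, Subtype.ext hp⟩
      intro e
      exact hs (by rw [Subgroup.mem_subgroupOf, e]; exact F.one_mem)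
    choose fx hfx using hex
    let f : Y ⊕ {s : S // s ∉ F.subgroupOf S} → (Σ s : S, MulAction.fixedBy Y s) := 
      Sum.elim (fun y => ⟨1, y, one_smul _ y⟩) (fun s => ⟨s, fx s, hfx s⟩)
    symm
    refine Nat.card_congr (Equiv.ofBijective f ⟨?_, ?_⟩)
    · rintro (y | s) (y' | s') h
      · have := (Sigma.mk.inj_iff.1 h).2
        rw [heq_eq_eq] at this
        exact congrArg Sum.inl (congrArg Subtype.val this)
      · have := (Sigma.mk.inj_iff.1 h).1
        exact absurd (by rw [← this]; exact one_mem _) s'.2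
      · have := (Sigma.mk.inj_iff.1 h).1
        exact absurd (by rw [this]; exact one_mem _) s.2
      · have := (Sigma.mk.inj_iff.1 h).1
        exact congrArg Sum.inr (Subtype.ext this)
    · rintro ⟨s, y, hy⟩
      have hy' : (s : A) • (y : A ⧸ H) = y := congrArg Subtype.val hy
      by_cases hs : s ∈ F.subgroupOf S
      · have : s = 1 := Subtype.ext (frob_fix_free F H hFn hfrob s hs y hy')
        subst this
        exact ⟨Sum.inl y, rfl⟩
      · refine ⟨Sum.inr ⟨s, hs⟩, ?_⟩
        have h3 : fx ⟨s, hs⟩ = y := Subtype.ext (frob_fix_unique F H hFn hsup hfrob s hs _ _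
          (congrArg Subtype.val (hfx ⟨s, hs⟩)) hy')
        subst h3
        rfl
  have e3 : Nat.card S = Nat.card (F.subgroupOf S) + Nat.card {s : S // s ∉ F.subgroupOf S} := by
    rw [← Nat.card_congr (Equiv.sumCompl (fun s : S => s ∈ F.subgroupOf S)), Nat.card_sum]
  have e4 : 2 * Nat.card Y ≤ Nat.card (Σ s : S, MulAction.fixedBy Y s) := by
    have hex : ∀ y : Y, ∃ s : S, s ≠ 1 ∧ s • y = y := by
      rintro ⟨y, s, hs, hne, hy⟩
      exact ⟨⟨s, hs⟩, fun e => hne (congrArg Subtype.val e), Subtype.ext hy⟩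
    choose σ hσ1 hσ using hex
    have h2 : 2 * Nat.card Y = Nat.card (Y ⊕ Y) := by rw [Nat.card_sum]; ring
    rw [h2]
    refine Nat.card_le_card_of_injective (Sum.elim (fun y => ⟨1, y, one_smul _ y⟩) (fun y => ⟨σ y, y, hσ y⟩)) ?_
    rintro (y | y) (y' | y') h
    · have := (Sigma.mk.inj_iff.1 h).2
      rw [heq_eq_eq] at this
      exact congrArg Sum.inl (congrArg Subtype.val this)
    · exact absurd (Sigma.mk.inj_iff.1 h).1.symm (hσ1 y')
    · exact absurd (Sigma.mk.inj_iff.1 h).1 (hσ1 y)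
    · have h5 : ∀ (x x' : Σ s : S, MulAction.fixedBy Y s), x = x' → (x.2 : Y) = x'.2 := by
        rintro x _ rfl; rfl
      exact congrArg Sum.inr (h5 _ _ h)
  have hN : 0 < Nat.card (F.subgroupOf S) := Nat.card_pos
  have hΩ : Nat.card Ω = 1 := by
    have : Nonempty Ω := ⟨Quotient.mk _ ⟨p0, hp0⟩⟩
    have h1 : 0 < Nat.card Ω := Nat.card_pos
    by_contra h2
    have h3 : 2 ≤ Nat.card Ω := by omega
    have h4 := Nat.mul_le_mul_right (Nat.card S) h3
    omega
  rw [hΩ, one_mul] at e1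
  have hY : Nat.card Y = Nat.card (F.subgroupOf S) := by omega
  refine ⟨?_, ?_⟩
  · change Nat.card Y ∣ _
    rw [hY]
    let f : F.subgroupOf S →* F := 
      { toFun := fun x => ⟨x.1, x.2⟩
        map_one' := rfl
        map_mul' := fun _ _ => rfl }
    exact Subgroup.card_dvd_of_injective f (fun x y h => by
      have h1 : ((f x : F) : A) = f y := by rw [h]
      exact Subtype.ext (Subtype.ext h1))
  · intro p hp
    have hsub := (Nat.card_eq_one_iff_unique.1 hΩ).1
    have := Subsingleton.elim (Quotient.mk (MulAction.orbitRel S Y) ⟨p, hp⟩ : Ω) (Quotient.mk _ ⟨p0, hp0⟩)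
    obtain ⟨s, hs⟩ := Quotient.exact this
    exact ⟨s, s.2, (congrArg Subtype.val hs).symm⟩
end K
end

section
/-- elements acting trivially modulo `B` -/
def S1 (A : Type*) {U : Type*} [Group A] [CommGroup U] [MulDistribMulAction A U] (B : Subgroup U) : Subgroup A where
  carrier := {s | ∀ u : U, (s • u) * u⁻¹ ∈ B}
  one_mem' := by intro u; simp
  mul_mem' := by
    intro s t hs ht u
    have := B.mul_mem (hs (t • u)) (ht u)
    simpa [mul_smul] using this
  inv_mem' := by
    intro s hs u
    have := B.inv_mem (hs (s⁻¹ • u))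
    simpa using this

theorem prime_index_sup {U : Type*} [CommGroup U] {q : ℕ} (hq : q.Prime) (hUq : ∀ u : U, u ^ q = 1) (B : Subgroup U) (a : U)
    (hBa : B ⊔ Subgroup.zpowers a = ⊤) (c : U) (hc : c ∉ B) : B ⊔ Subgroup.zpowers c = ⊤ := by
  have h1 : c ∈ B ⊔ Subgroup.zpowers a := by rw [hBa]; trivial
  obtain ⟨b, hb, _, ⟨i, rfl⟩, e⟩ := Subgroup.mem_sup.1 h1
  have e : b * a ^ i = c := e
  have hi : ¬ (q : ℤ) ∣ i := by
    rintro ⟨j, rfl⟩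
    rw [zpow_mul, zpow_natCast, hUq, one_zpow, mul_one] at e
    exact hc (e ▸ hb)
  have hcop : IsCoprime (q : ℤ) i := (Prime.coprime_iff_not_dvd (Nat.prime_iff_prime_int.1 hq)).2 hi
  obtain ⟨x, y, hxy⟩ := hcop
  have ha : a ∈ B ⊔ Subgroup.zpowers c := by
    have h2 : a = (b ^ y)⁻¹ * c ^ y := by
      rw [← e, mul_zpow, inv_mul_cancel_left, ← zpow_mul]
      have : a ^ ((1 : ℤ)) = a ^ (x * q + y * i) := by rw [hxy]
      rw [zpow_one, zpow_add, mul_comm x, zpow_mul, zpow_natCast, hUq, one_zpow, one_mul, mul_comm] at this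
      exact this
    rw [h2]
    exact Subgroup.mul_mem_sup (B.inv_mem (B.zpow_mem hb _)) ⟨y, rfl⟩
  rw [eq_top_iff, ← hBa]
  exact sup_le le_sup_left ((Subgroup.zpowers_le).2 ha)

theorem fixed_of_sup {U V : Type*} [CommGroup U] [CommGroup V] [MulDistribMulAction U V] (B : Subgroup U) (c : U)
    (h : B ⊔ Subgroup.zpowers c = ⊤) (v : V) (hB : ∀ b ∈ B, b • v = v) (hc : c • v = v) (u : U) : u • v = v := by
  have h1 : B ⊔ Subgroup.zpowers c ≤ MulAction.stabilizer U v := 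
    sup_le hB (by rw [Subgroup.zpowers_le]; exact hc)
  rw [h] at h1
  exact h1 (Subgroup.mem_top u)

theorem lemmaB {A U V : Type*} [Group A] [Finite A] [CommGroup U] [Finite U] [CommGroup V] [Finite V]
    [MulDistribMulAction A U] [MulDistribMulAction A V] [MulDistribMulAction U V]
    (hcomp : ∀ (a : A) (u : U) (v : V), a • u • v = (a • u) • a • v) 
    {q r : ℕ} (hq : q.Prime) (hr : r.Prime) (hqr : q ≠ r) (hUq : ∀ u : U, u ^ q = 1) (hVr : IsPGroup r V)
    (hfix : ∀ v : V, (∀ u : U, u • v = v) → v = 1)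
    (B : Subgroup U) (a : U) (hBa : B ⊔ Subgroup.zpowers a = ⊤) (v : V) (hv1 : v ≠ 1) (hv : ∀ b ∈ B, b • v = v)
    (K : Subgroup A) (hK : ∀ k ∈ K, k ∈ S1 A B → k = 1) (c : U) (hc : ∀ k ∈ K, k • c = c)
    (hcV : ∀ w : V, (∀ k ∈ K, k • w = w) → c • w = w) : c ∈ B := by
  classical
  by_contra hcB
  have hsup := fun c hc => prime_index_sup hq hUq B a hBa c hc
  by_cases hcase : ∃ k ∈ K, k ≠ 1 ∧ ∀ b ∈ B, k • b ∈ B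
  · obtain ⟨k, hk, hk1, hkB⟩ := hcase
    refine hk1 (hK k hk fun u => ?_)
    have hu : u ∈ B ⊔ Subgroup.zpowers c := by rw [hsup c hcB]; trivial
    obtain ⟨b, hb, _, ⟨i, rfl⟩, rfl⟩ := Subgroup.mem_sup.1 hu
    have : (k • (b * c ^ i)) * (b * c ^ i)⁻¹ = k • b * b⁻¹ := by
      have h2 : k • (c ^ i) = c ^ i := by
        rw [← MulDistribMulAction.toMonoidHom_apply, map_zpow, MulDistribMulAction.toMonoidHom_apply, hc k hk]
      rw [smul_mul', h2, mul_inv]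
      rw [mul_mul_mul_comm, mul_inv_cancel, mul_one]
    change (k • (b * c ^ i)) * (b * c ^ i)⁻¹ ∈ B
    rw [this]
    exact B.mul_mem (hkB b hb) (B.inv_mem hb)
  · push Not at hcase
    let _ := Fintype.ofFinite B
    let _ := Fintype.ofFinite K
    let T := traceHom B V
    have hT : ∀ k : K, k ≠ 1 → T ((k : A) • v) = 1 := by
      intro k hk
      obtain ⟨b, hb, hkb⟩ := hcase k k.2 (fun e => hk (Subtype.ext e))
      refine hfix _ (fixed_of_sup B ((k : A) • b) (hsup _ hkb) _ (fun b hb => smul_traceHom (⟨b, hb⟩ : B) _) ?_)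
      have h1 : ((k : A) • b) • (k : A) • v = (k : A) • v := by rw [← hcomp, hv b hb]
      conv_rhs => rw [← h1]
      simp only [T, traceHom_apply, smul_finprod]
      refine Finset.prod_congr rfl fun x _ => ?_
      exact smul_comm (((k : A) • b)) (x : U) _
    have hw : c • (∏ k : K, (k : A) • v) = ∏ k : K, (k : A) • v := by
      apply hcV
      intro k hk
      rw [smul_finprod]
      simp only [← mul_smul]
      exact Fintype.prod_equiv (Equiv.mulLeft (⟨k, hk⟩ : K)) _ _ (fun _ => rfl)
    have h3 : T (∏ k : K, (k : A) • v) = v ^ Nat.card B := by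
      rw [map_prod, Finset.prod_eq_single_of_mem (1 : K) (Finset.mem_univ _) (fun k _ hk => hT k hk)]
      rw [Subgroup.coe_one, one_smul]
      exact traceHom_fixed v fun b => hv b b.2
    have h4 : c • v ^ Nat.card B = v ^ Nat.card B := by
      rw [← h3]
      conv_rhs => rw [← hw]
      simp only [T, traceHom_apply]
      rw [smul_finprod]
      refine Finset.prod_congr rfl fun x _ => ?_
      exact smul_comm c (x : U) _
    have h5 := hfix (v ^ Nat.card B) (fixed_of_sup B c (hsup c hcB) _ (fun b hb => by rw [smul_pow', hv b hb]) h4)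
    obtain ⟨k, hk⟩ := hVr v
    have := Fact.mk hq
    have hUp : IsPGroup q B := fun u => ⟨1, Subtype.ext (by simpa using hUq u)⟩
    obtain ⟨m, hm⟩ := IsPGroup.iff_card.1 hUp
    rw [hm] at h5
    exact hv1 (eq_one_of_pow_coprime (Nat.Coprime.pow m k ((Nat.coprime_primes hq hr).2 hqr)) h5 hk)

theorem mem_of_pow_mem {U : Type*} [CommGroup U] {q : ℕ} (hUq : ∀ u : U, u ^ q = 1) (B : Subgroup U) (u : U) (n : ℕ)
    (hn : n.Coprime q) (h : u ^ n ∈ B) : u ∈ B := by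
  have h1 : (u : U ⧸ B) = 1 := by
    refine eq_one_of_pow_coprime hn ?_ ?_
    · rw [← QuotientGroup.mk_pow]; exact (QuotientGroup.eq_one_iff _).2 h
    · rw [← QuotientGroup.mk_pow, hUq]; rfl
  exact (QuotientGroup.eq_one_iff _).1 h1

theorem moduleM {A U V : Type*} [Group A] [Finite A] [CommGroup U] [Finite U] [CommGroup V] [Finite V] [Nontrivial V]
    [MulDistribMulAction A U] [MulDistribMulAction A V] [MulDistribMulAction U V]
    (hcomp : ∀ (a : A) (u : U) (v : V), a • u • v = (a • u) • a • v) 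
    {q r : ℕ} (hq : q.Prime) (hr : r.Prime) (hqr : q ≠ r) (hUq : ∀ u : U, u ^ q = 1) (hVr : IsPGroup r V)
    (hfix : ∀ v : V, (∀ u : U, u • v = v) → v = 1) (F H : Subgroup A)
    (hFn : F.Normal) (hsup : F ⊔ H = ⊤) (hfrob : ∀ h ∈ H, h ≠ 1 → ∀ f ∈ F, h * f * h⁻¹ = f → f = 1)
    (hFq : (Nat.card F).Coprime q) (hUF : ∀ u : U, (∀ f ∈ F, f • u = u) → u = 1)
    (hHC : ∀ c : U, (∀ h ∈ H, h • c = c) → ∀ v : V, (∀ h ∈ H, h • v = v) → c • v = v) : False := by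
  classical
  obtain ⟨B, a, hBa, v, hv1, hv⟩ := lemmaE U V
  let _ := Fintype.ofFinite (A ⧸ H)
  let _ := Fintype.ofFinite F
  let _ := Fintype.ofFinite H
  have key : ∀ c : U, (∀ h ∈ H, h • c = c) → ∀ g : A, g • c ∈ B := by
    intro c hc
    let f : A ⧸ H → U := fun p => Quotient.liftOn' p (fun g => g • c) (by
      intro x y hxy
      have : x⁻¹ * y ∈ H := QuotientGroup.leftRel_apply.1 hxy
      have h1 := hc _ this
      rw [mul_smul, inv_smul_eq_iff] at h1
      exact h1.symm)
    have hf : ∀ g : A, f (g : A ⧸ H) = g • c := fun g => rfl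
    have hfs : ∀ (s : A) p, f (s • p) = s • f p := by
      intro s p
      obtain ⟨g, rfl⟩ := QuotientGroup.mk_surjective p
      exact mul_smul s g c
    have hgood : ∀ p : A ⧸ H, (¬ ∃ s ∈ S1 A B, s ≠ 1 ∧ s • p = p) → f p ∈ B := by
      intro p hp
      obtain ⟨g, rfl⟩ := QuotientGroup.mk_surjective p
      refine lemmaB hcomp hq hr hqr hUq hVr hfix B a hBa v hv1 hv (MulAction.stabilizer A (g : A ⧸ H)) ?_ _ ?_ ?_
      · intro k hk hk1
        by_contra hne
        exact hp ⟨k, hk1, hne, hk⟩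
      · intro k hk
        rw [← hfs, show k • (g : A ⧸ H) = g from hk]
      · intro w hw
        have h1 := hHC c hc (g⁻¹ • w) (fun h hh => by
          rw [eq_inv_smul_iff, ← mul_smul, ← mul_smul]
          apply hw
          rw [MulAction.mem_stabilizer_iff]
          refine (QuotientGroup.eq.2 ?_).symm
          change g⁻¹ * ((g * h * g⁻¹) * g) ∈ H
          simpa [mul_assoc] using hh)
        rw [eq_inv_smul_iff, hcomp, smul_inv_smul] at h1
        exact h1
    have hall : ∀ p : A ⧸ H, f p ∈ B := by
      by_cases hbad : ∃ p0 : A ⧸ H, ∃ s ∈ S1 A B, s ≠ 1 ∧ s • p0 = p0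
      · obtain ⟨p0, hp0⟩ := hbad
        obtain ⟨hd, horb⟩ := lemmaK F H hFn hsup hfrob (S1 A B) p0 hp0
        have hbad' : ∀ p : A ⧸ H, (∃ s ∈ S1 A B, s ≠ 1 ∧ s • p = p) → f p * (f p0)⁻¹ ∈ B := by
          intro p hp
          obtain ⟨s, hs, rfl⟩ := horb p hp
          rw [hfs]
          exact hs (f p0)
        have hprod : ∏ p, f p = 1 := by
          refine hUF _ fun x hx => ?_
          rw [smul_finprod]
          simp only [← hfs]
          exact Fintype.prod_equiv (MulAction.toPerm x) _ _ (fun _ => rfl)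
        have hp0B : f p0 ∈ B := by
          refine mem_of_pow_mem hUq B _ _ (hFq.coprime_dvd_left hd) ?_
          let P : A ⧸ H → Prop := fun p => ∃ s ∈ S1 A B, s ≠ 1 ∧ s • p = p
          have h1 : ∏ p, (f p * (if P p then (f p0)⁻¹ else 1)) ∈ B := by
            refine B.prod_mem fun p _ => ?_
            by_cases hP : P p
            · rw [if_pos hP]; exact hbad' p hP
            · rw [if_neg hP, mul_one]; exact hgood p hP
          rw [Finset.prod_mul_distrib, hprod, one_mul, Finset.prod_ite, Finset.prod_const_one, mul_one, Finset.prod_const,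
            inv_pow, ← Fintype.card_subtype, ← Nat.card_eq_fintype_card] at h1
          exact B.inv_mem_iff.1 h1
        intro p
        by_cases hP : ∃ s ∈ S1 A B, s ≠ 1 ∧ s • p = p
        · have := B.mul_mem (hbad' p hP) hp0B
          simpa using this
        · exact hgood p hP
      · push Not at hbad
        intro p
        refine hgood p ?_
        rintro ⟨s, h1, h2, h3⟩
        exact hbad p s h1 h2 h3
    exact fun g => hall g
  have hB : ∀ u : U, u ∈ B := by
    intro u
    refine mem_of_pow_mem hUq B _ _ hFq ?_
    rw [partition_lemma F H (fun h _ f hf => hFn.conj_mem f hf h) hfrob (fun u => by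
      refine hUF _ fun f hf => ?_
      rw [smul_finprod]
      simp only [← mul_smul]
      exact Fintype.prod_equiv (Equiv.mulLeft (⟨f, hf⟩ : F)) _ _ (fun _ => rfl)) u]
    refine B.prod_mem fun x _ => key _ (fun h hh => ?_) x
    rw [smul_finprod]
    simp only [← mul_smul]
    refine Fintype.prod_equiv (Equiv.mulLeft (⟨h, hh⟩ : H)) _ _ (fun k => ?_)
    change _ = (h * k * _) • u
    rw [mul_assoc]
  exact hv1 (hfix v fun u => hv u (hB u))
end

section
theorem nil_of_inj {G K : Type*} [Group G] [Group K] [Group.IsNilpotent K] (f : G →* K) (hf : Function.Injective f) :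
    Group.IsNilpotent G :=
  Group.nilpotent_of_surjective (MonoidHom.ofInjective hf).symm.toMonoidHom (MonoidHom.ofInjective hf).symm.surjective

theorem nil_parts {A : Type*} [Group A] [Finite A] (D : Subgroup A) [D.Normal] [Group.IsNilpotent D] {p : ℕ} (hp : p.Prime) :
    ∃ E P : Subgroup A, E.Normal ∧ P.Normal ∧ E ≤ D ∧ P ≤ D ∧ (Nat.card E).Coprime p ∧ IsPGroup p P ∧ D ≤ E ⊔ P := by
  have := Fact.mk hp
  obtain ⟨N, hNn, hNc, hNp⟩ := PNil.of_nilpotent p hp D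
  obtain ⟨S⟩ : Nonempty (Sylow p D) := inferInstance
  have hsup := sup_sylow_eq_top N hNp S
  have hS := Sylow.characteristic_of_normal S (sylow_normal_of_nilpotent S)
  have hN : N.Characteristic := by
    rw [Subgroup.characteristic_iff_le_comap]
    intro φ x hx
    rw [PNil.mem_iff hNc hNp] at hx
    rw [Subgroup.mem_comap, PNil.mem_iff hNc hNp]
    rwa [orderOf_injective φ.toMonoidHom φ.injective]
  refine ⟨N.map D.subtype, (S : Subgroup D).map D.subtype, ConjAct.normal_of_characteristic_of_normal, 
    ConjAct.normal_of_characteristic_of_normal, Subgroup.map_subtype_le _, Subgroup.map_subtype_le _, ?_, S.2.map _, ?_⟩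
  · rwa [Subgroup.card_map_of_injective D.subtype_injective]
  · rw [← Subgroup.map_sup, hsup, ← MonoidHom.range_eq_map, Subgroup.range_subtype]

theorem nil_commute {L : Type*} [Group L] [Finite L] [Group.IsNilpotent L] {r : ℕ} (hr : r.Prime) (g y : L) (k : ℕ) (hy : y ^ r ^ k = 1) :
    ∃ j, Commute (g ^ r ^ j) y := by
  have := Fact.mk hr
  obtain ⟨N, hNn, hNc, hNp⟩ := PNil.of_nilpotent r hr L
  have hZ : IsPGroup r (Subgroup.zpowers y) := by
    rintro ⟨_, i, rfl⟩
    refine ⟨k, Subtype.ext ?_⟩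
    change (y ^ i) ^ r ^ k = 1
    rw [← zpow_natCast, ← zpow_mul, mul_comm, zpow_mul, zpow_natCast, hy, one_zpow]
  obtain ⟨P, hP⟩ := hZ.exists_le_sylow
  have hPn := sylow_normal_of_nilpotent P
  obtain ⟨j, hj⟩ := hNp g
  refine ⟨j, ?_⟩
  have hdis : Disjoint N (P : Subgroup L) := by
    rw [Subgroup.disjoint_def]
    intro x hx hx'
    exact pgroup_inf_coprime P.2 hNc x hx' hx
  exact Subgroup.commute_of_normal_of_disjoint _ _ hNn hPn hdis _ y hj (hP (Subgroup.mem_zpowers y))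

theorem AInv.autFixed {A G : Type*} [Group A] [Group G] [MulDistribMulAction A G] (X : Subgroup A) [hX : X.Normal] :
    AInv A (autFixed (G := G) X) := by
  intro a g hg x hx
  have h1 := hg (a⁻¹ * x * a) (by simpa using hX.conj_mem x hx a⁻¹)
  rw [mul_smul, mul_smul, inv_smul_eq_iff] at h1
  exact h1

theorem fixed_sup {A G : Type*} [Group A] [Group G] [MulDistribMulAction A G] {D E P : Subgroup A} (h : D ≤ E ⊔ P) (g : G)
    (hE : ∀ e ∈ E, e • g = g) (hP : ∀ e ∈ P, e • g = g) : ∀ d ∈ D, d • g = g := by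
  intro d hd
  have h1 : E ⊔ P ≤ MulAction.stabilizer A g := sup_le hE hP
  exact h1 (h hd)

theorem lemmaL' {A G : Type*} [Group A] [Group G] [Finite G] [MulDistribMulAction A G]
    (hprop : ∀ N : Subgroup G, AInv A N → N ≠ ⊤ → Group.IsNilpotent N)
    {r : ℕ} (hr : r.Prime) (hr2 : r ≠ 2) (X : Subgroup G) (hX : AInv A X) [Group.IsNilpotent X] (hd : r ∣ Nat.card X) :
    ∃ (s : ℕ) (V : Subgroup G), s.Prime ∧ AbInv A s V := by
  have := Fact.mk hr
  exact lemmaL hprop hr hr2 (OmegaZ r X) (hX.charIn (OmegaZ_charIn X)) (fun x => ⟨1, Subtype.ext (by simpa using x.2.2.2)⟩)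
    (OmegaZ_ne_bot_of_nilpotent X hd)

theorem exists_V0 {A G : Type*} [Group A] [Finite A] [Group G] [Finite G] [MulDistribMulAction A G] (hG : ¬ Group.IsNilpotent G)
    (F : Subgroup A) (hFn : F.Normal) [Group.IsNilpotent F] (hfpf : ∀ g : G, (∀ f ∈ F, f • g = g) → g = 1)
    (hprop : ∀ N : Subgroup G, AInv A N → N ≠ ⊤ → Group.IsNilpotent N) :
    ∃ (s : ℕ) (V : Subgroup G), s.Prime ∧ AbInv A s V := by
  by_contra hno
  obtain ⟨D, ⟨hDn, hDF, hDfix⟩, hmin⟩ := Set.Finite.exists_minimal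
    (Set.toFinite {D : Subgroup A | D.Normal ∧ D ≤ F ∧ ∀ g : G, (∀ f ∈ D, f • g = g) → g = 1}) ⟨F, hFn, le_rfl, hfpf⟩
  have hDnil : Group.IsNilpotent D := nil_of_inj (Subgroup.inclusion hDF) (Subgroup.inclusion_injective hDF)
  have hcop : (Nat.card D).Coprime (Nat.card G) := by
    refine Nat.coprime_of_dvd fun p hp hpD hpG => ?_
    have := Fact.mk hp
    obtain ⟨E, P, hEn, hPn, hED, hPD, hEc, hPp, hDEP⟩ := nil_parts D hp
    have hEfix : ∃ g : G, (∀ f ∈ E, f • g = g) ∧ g ≠ 1 := by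
      by_contra! hcon
      have h1 : D ≤ E := hmin ⟨hEn, hED.trans hDF, hcon⟩ hED
      have h2 := hpD.trans (Subgroup.card_dvd_of_le h1)
      exact (Nat.Prime.coprime_iff_not_dvd hp).1 hEc.symm h2
    obtain ⟨g0, hg0, hg01⟩ := hEfix
    have hEP : ∀ g : G, (∀ f ∈ E, f • g = g) → (∀ f ∈ P, f • g = g) → g = 1 := 
      fun g h1 h2 => hDfix g (fixed_sup hDEP g h1 h2)
    by_cases hC1 : autFixed (G := G) E = ⊤
    · obtain ⟨y, _, hy1, hy⟩ := exists_fixed_of_pgroup P hPp (⊤ : Subgroup G) (fun _ _ _ _ => trivial)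
        (by rwa [Subgroup.card_top])
      refine hy1 (hEP y ?_ hy)
      have : y ∈ autFixed (G := G) E := by rw [hC1]; trivial
      exact this
    have hC1nil := hprop _ (AInv.autFixed E) hC1
    have hpC1 : ¬ p ∣ Nat.card (autFixed (G := G) E) := by
      intro hd
      obtain ⟨y, hyE, hy1, hy⟩ := exists_fixed_of_pgroup P hPp (autFixed (G := G) E) (fun s _ y hy => AInv.autFixed E s y hy) hd
      exact hy1 (hEP y hyE hy)
    have hp2 : p ≠ 2 := by
      rintro rfl
      apply hno
      obtain ⟨s, hs, hsd⟩ := Nat.exists_prime_and_dvd (n := Nat.card (autFixed (G := G) E)) (by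
        rw [Ne, Subgroup.card_eq_one]
        intro h
        have : g0 ∈ autFixed (G := G) E := hg0
        rw [h] at this
        exact hg01 this)
      refine lemmaL' hprop hs ?_ _ (AInv.autFixed E) hsd
      rintro rfl
      exact hpC1 hsd
    have hpC2 : p ∣ Nat.card (autFixed (G := G) P) := by
      have h1 := hPp.card_modEq_card_fixedPoints G
      have h2 : Nat.card (MulAction.fixedPoints P G) = Nat.card (autFixed (G := G) P) := by
        refine Nat.card_congr (Equiv.subtypeEquivRight fun g => ?_)
        exact ⟨fun h f hf => h ⟨f, hf⟩, fun h f => h f f.2⟩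
      rw [h2] at h1
      exact (Nat.modEq_zero_iff_dvd).1 (h1.symm.trans hpG.modEq_zero_nat)
    have hC2 : autFixed (G := G) P ≠ ⊤ := by
      intro h
      apply hg01
      refine hEP g0 hg0 ?_
      have : g0 ∈ autFixed (G := G) P := by rw [h]; trivial
      exact this
    have hC2nil := hprop _ (AInv.autFixed P) hC2
    exact hno (lemmaL' hprop hp hp2 _ (AInv.autFixed P) hpC2)
  obtain ⟨r0, hr0, hr02, hr0d⟩ := exists_odd_prime hG
  have := Fact.mk hr0
  obtain ⟨P, hP⟩ := glauberman_inv (G := G) (r := r0) D hcop (by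
    rw [eq_bot_iff]
    intro g hg
    exact hDfix g hg)
  exact hno (lemmaL hprop hr0 hr02 P (AInv.sylow P hP) P.2 (P.ne_bot_of_dvd_card hr0d))

universe u v in
theorem mainThm {A : Type v} [Group A] [Finite A] (F H : Subgroup A) (hFn : F.Normal) [Group.IsNilpotent F]
    (hfrob : ∀ h ∈ H, h ≠ 1 → ∀ f ∈ F, h * f * h⁻¹ = f → f = 1) (n : ℕ) :
    ∀ (G : Type u) [Group G] [Finite G] [MulDistribMulAction A G], Nat.card G = n →
    (∀ g : G, (∀ f ∈ F, f • g = g) → g = 1) → Group.IsNilpotent (autFixed (G := G) H) → Group.IsNilpotent G := by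
  induction n using Nat.strong_induction_on with
  | _ n ih =>
  intro G _ _ _ hn hfpf hnil
  by_contra hG
  have hprop : ∀ N : Subgroup G, AInv A N → N ≠ ⊤ → Group.IsNilpotent N := by
    intro N hN hNt
    let _ := subMDA N hN
    refine ih _ (hn ▸ card_sub_lt N hNt) N rfl (fun g hg => ?_) ?_
    · exact Subtype.ext (hfpf g fun a ha => congrArg Subtype.val (hg a ha))
    · let f : autFixed (G := N) H →* autFixed (G := G) H :=
        { toFun := fun x => ⟨(x : N), fun h hh => congrArg Subtype.val (x.2 h hh)⟩
          map_one' := rfl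
          map_mul' := fun _ _ => rfl }
      exact nil_of_inj f (fun x y h => by
        have h1 : ((f x : autFixed (G := G) H) : G) = f y := by rw [h]
        exact Subtype.ext (Subtype.ext h1))
  have hq : ∀ (r : ℕ) (V : Subgroup G) [V.Normal], r.Prime → AbInv A r V → Group.IsNilpotent (G ⧸ V) := by
    intro r V _ hr hV
    let _ := quotMDA V hV.inv
    refine ih _ (hn ▸ card_quot_lt V hV.ne_bot) (G ⧸ V) rfl (fun g hg => ?_) ?_
    · obtain ⟨g, rfl⟩ := QuotientGroup.mk_surjective g
      rw [QuotientGroup.eq_one_iff]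
      exact Q1 (F := F) (fun g hg => hfpf g fun f hf => hg ⟨f, hf⟩) hr V (fun f => hV.inv f) hV.pgroup g
        fun a => QuotientGroup.eq.1 (hg a a.2).symm
    · let f : autFixed (G := G) H →* autFixed (G := G ⧸ V) H :=
        { toFun := fun x => ⟨((x : G) : G ⧸ V), fun h hh => congrArg (QuotientGroup.mk (s := V)) (x.2 h hh)⟩
          map_one' := rfl
          map_mul' := fun _ _ => rfl }
      refine Group.nilpotent_of_surjective f ?_
      rintro ⟨g, hg⟩
      obtain ⟨g, rfl⟩ := QuotientGroup.mk_surjective g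
      obtain ⟨x, hx, hfix⟩ := Q2 F H hFn hfrob V hV.inv hV.comm hfpf g (fun h hh => QuotientGroup.eq.1 (hg h hh).symm)
      refine ⟨⟨g * x, hfix⟩, Subtype.ext ?_⟩
      refine (QuotientGroup.eq.2 ?_).symm
      simpa using hx
  obtain ⟨r, V0, hr, hV0⟩ := exists_V0 hG F hFn hfpf hprop
  obtain ⟨q, V, U, _, _, _, _, _, _, _, ι, W, C, π, hqp, hqr, hCn, hCi, hCt, hι, hιA, hπs, hπA, hπC, hCW, hWi, hιπ, hcomp, hUq, hVr, hVnt, hfix⟩ := 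
    lemmaS hG hq hr V0 hV0
  have hCnil := hprop C hCi hCt
  have := Fact.mk hqp
  have hUp : IsPGroup q U := fun u => ⟨1, by simpa using hUq u⟩
  have hdiff : ∀ (a : A) (w : W), a • π w = π w → (w : G)⁻¹ * a • (w : G) ∈ C := by
    intro a w h
    have h1 := hπA a w ⟨a • (w : G), hWi a w w.2⟩ rfl
    rw [h] at h1
    have h2 : π (w⁻¹ * ⟨a • (w : G), hWi a w w.2⟩) = 1 := by rw [map_mul, h1, map_inv]; simp
    exact (hπC _).1 h2
  have hUF : ∀ u : U, (∀ f ∈ F, f • u = u) → u = 1 := by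
    intro u hu
    obtain ⟨w, rfl⟩ := hπs u
    rw [hπC]
    exact Q1' (F := F) _ G rfl (fun g hg => hfpf g fun f hf => hg ⟨f, hf⟩) C (fun f => hCi f) w fun f => hdiff f w (hu f f.2)
  obtain ⟨E, P, hEn, hPn, hEF, hPF, hEc, hPp, hFEP⟩ := nil_parts F hqp
  have hUE : ∀ u : U, (∀ f ∈ E, f • u = u) → u = 1 := by
    intro u hu
    by_contra hu1
    have hd : q ∣ Nat.card (autFixed (G := U) E) := by
      obtain ⟨n, hn⟩ := IsPGroup.iff_card.1 (hUp.to_subgroup (autFixed (G := U) E))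
      rw [hn]
      apply dvd_pow_self
      rintro rfl
      rw [pow_zero, Subgroup.card_eq_one] at hn
      have : u ∈ autFixed (G := U) E := hu
      rw [hn] at this
      exact hu1 this
    obtain ⟨y, hyE, hy1, hy⟩ := exists_fixed_of_pgroup P hPp (autFixed (G := U) E) (fun s _ y hy => AInv.autFixed E s y hy) hd
    exact hy1 (hUF y (fixed_sup hFEP y hyE hy))
  have hHC : ∀ c : U, (∀ h ∈ H, h • c = c) → ∀ v : V, (∀ h ∈ H, h • v = v) → c • v = v := by
    intro c hc v hv
    obtain ⟨w, rfl⟩ := hπs c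
    obtain ⟨x, hx, hwx⟩ := Q2' F H hFn hfrob _ G rfl hfpf C hCi w (fun h hh => hdiff h w (hc h hh))
    obtain ⟨k, hk⟩ := hVr v
    obtain ⟨j, hj⟩ := nil_commute (L := autFixed (G := G) H) hr ⟨w * x, hwx⟩ ⟨ι v, fun h hh => by rw [← hιA, hv h hh]⟩ k
      (Subtype.ext (by
        change (ι v) ^ r ^ k = 1
        rw [← map_pow, hk, map_one]))
    have hj' : ((w : G) * x) ^ r ^ j * ι v = ι v * ((w : G) * x) ^ r ^ j := congrArg Subtype.val hj
    have hπx : π (w * ⟨x, hCW hx⟩) = π w := by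
      rw [map_mul, (hπC ⟨x, hCW hx⟩).2 hx, mul_one]
    have h1 : (π w) ^ r ^ j • v = v := by
      apply hι
      rw [← hπx, ← map_pow, hιπ]
      rw [mul_inv_eq_iff_eq_mul]
      exact hj'
    exact mem_of_pow_mem hUq (MulAction.stabilizer U v) (π w) (r ^ j) 
      (Nat.Coprime.pow_left j ((Nat.coprime_primes hr hqp).2 hqr.symm)) h1
  have hE' : E ≤ E ⊔ H := le_sup_left
  have hH' : H ≤ E ⊔ H := le_sup_right
  refine moduleM (A := (E ⊔ H : Subgroup A)) (U := U) (V := V) (fun a => hcomp a) hqp hr hqr hUq hVr hfix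
    (E.subgroupOf (E ⊔ H)) (H.subgroupOf (E ⊔ H)) inferInstance ?_ ?_ ?_ ?_ ?_
  · rw [← Subgroup.subgroupOf_sup hE' hH', Subgroup.subgroupOf_self]
  · intro h hh hne f hf e
    exact Subtype.ext (hfrob h hh (fun e => hne (Subtype.ext e)) f (hEF hf) (congrArg Subtype.val e))
  · rwa [Nat.card_congr (Subgroup.subgroupOfEquivOfLe hE').toEquiv]
  · intro u hu
    exact hUE u fun f hf => hu ⟨f, hE' hf⟩ hf
  · intro c hc v hv
    exact hHC c (fun h hh => hc ⟨h, hH' hh⟩ hh) v (fun h hh => hv ⟨h, hH' hh⟩ hh)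
end

/-- If a finite group `G` admits a Frobenius group of automorphisms `FH` with
`C_G(F) = 1` and `C_G(H)` is nilpotent, then `G` is nilpotent. -/
theorem stmt7 {A G : Type*} [Group A] [Group G] [Finite A] [Finite G]
    [MulDistribMulAction A G]
    (F H : Subgroup A) (hFnorm : F.Normal) (hsup : F ⊔ H = ⊤) (hinf : F ⊓ H = ⊥)
    (hHne : H ≠ ⊥)
    (hfrob : ∀ h ∈ H, h ≠ 1 → ∀ f ∈ F, h * f * h⁻¹ = f → f = 1)
    (hfpf : autFixed (G := G) F = ⊥)
    (hnil : Group.IsNilpotent (autFixed (G := G) H)) :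
    Group.IsNilpotent G := by
  have := frob_nilpotent F H hFnorm hHne hfrob
  refine mainThm F H hFnorm hfrob _ G rfl (fun g hg => ?_) hnil
  have h1 : g ∈ autFixed (G := G) F := hg
  rw [hfpf] at h1
  exact h1
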